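/- There exists a universal constant c such that for every real r ≥ 1 and every n-node simple bidirected plane graph G in which every face contains at most three nodes, G admits a division into at most c·(n/r + 1) pieces such that each piece has at most c·r nodes, at most c·√r boundary nodes, and at most c holes. -/

import Mathlib

open scoped ENNReal

/-- A simple directed graph on node type `V`, with nonnegative (extended-real)
edge weights: there are no self-loops, and between any ordered pair of nodes
there is at most one edge (so no parallel edges). -/
structure WDigraph (V : Type) where
  Edge : V → V → Prop
  w : V → V → ℝ≥0∞
  irrefl : ∀ v, ¬ Edge v v

namespace WDigraph

variable {V : Type}

/-- The consecutive steps (directed edges) of a walk given as its list of nodes. -/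
def steps (l : List V) : List (V × V) := l.zip l.tail

/-- `l` is a walk of `G` (nodes may repeat). -/
def IsWalk (G : WDigraph V) (l : List V) : Prop := l ≠ [] ∧ l.Chain' G.Edge

/-- `l` is an `s`-`t`-path of `G` (nodes may repeat). -/
def IsPath (G : WDigraph V) (s t : V) (l : List V) : Prop :=
  G.IsWalk l ∧ l.head? = some s ∧ l.getLast? = some t

/-- The weight of a walk: the sum of the weights of its edges. -/
noncomputable def wWalk (G : WDigraph V) (l : List V) : ℝ≥0∞ :=
  ((steps l).map fun e => G.w e.1 e.2).sum

/-- A cycle of `G` is an `s`-`s`-path for some node `s`. -/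
def IsCycle (G : WDigraph V) (l : List V) : Prop := ∃ s, G.IsPath s s l

/-- The walk `l` traverses the directed edge `(s,t)`. -/
def Traverses (l : List V) (s t : V) : Prop := (s, t) ∈ steps l

/-- A cycle is degenerate if it is a single node or traverses both `st` and `ts`. -/
def Degenerate (l : List V) : Prop :=
  l.length = 1 ∨ ∃ s t, Traverses l s t ∧ Traverses l t s

/-- A simple cycle passes each node at most once. -/
def IsSimpleCycle (G : WDigraph V) (l : List V) : Prop :=
  G.IsCycle l ∧ l.dropLast.Nodup

/-- `G` is bidirected: `st` is an edge iff `ts` is an edge. -/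
def Bidirected (G : WDigraph V) : Prop := ∀ u v, G.Edge u v → G.Edge v u

/-- `d_G(u,v)`: the minimum weight of a `u`-`v`-path, `∞` if there is none. -/
noncomputable def dist (G : WDigraph V) (s t : V) : ℝ≥0∞ :=
  sInf {x | ∃ l, G.IsPath s t l ∧ G.wWalk l = x}

end WDigraph

/-- A plane embedding of the (bidirected) graph with adjacency `A` on node
type `V`: nodes are drawn as distinct points, each bundled pair of oppositely
directed edges is drawn as a single simple arc joining its endpoints, and two
arcs meet only at common endpoints and avoid all other nodes. -/
structure PlaneEmbedding {V : Type} (A : V → V → Prop) where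
  pos : V → ℝ × ℝ
  arc : V → V → ℝ → ℝ × ℝ
  pos_inj : Function.Injective pos
  arc_cont : ∀ u v, A u v → ContinuousOn (arc u v) (Set.Icc 0 1)
  arc_start : ∀ u v, A u v → arc u v 0 = pos u
  arc_end : ∀ u v, A u v → arc u v 1 = pos v
  arc_inj : ∀ u v, A u v → Set.InjOn (arc u v) (Set.Icc 0 1)
  arc_symm : ∀ u v, A u v → ∀ t, arc v u t = arc u v (1 - t)
  arc_avoid : ∀ u v, A u v → ∀ x : V, pos x ∈ arc u v '' Set.Icc 0 1 → x = u ∨ x = v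
  arc_meet : ∀ u v x y, A u v → A x y → ({u, v} : Set V) ≠ {x, y} →
    arc u v '' Set.Icc 0 1 ∩ arc x y '' Set.Icc 0 1 ⊆ ({pos u, pos v} : Set (ℝ × ℝ)) ∩ {pos x, pos y}

/-- The drawing (point set in the plane) of a set of directed edges. -/
def PlaneEmbedding.drawing {V : Type} {A : V → V → Prop} (emb : PlaneEmbedding A)
    (E : Set (V × V)) : Set (ℝ × ℝ) :=
  ⋃ e ∈ E, emb.arc e.1 e.2 '' Set.Icc 0 1

/-- The drawing of the whole graph. -/
def PlaneEmbedding.fullDrawing {V : Type} {A : V → V → Prop} (emb : PlaneEmbedding A) :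
    Set (ℝ × ℝ) :=
  emb.drawing {e | A e.1 e.2}

/-- A face of the embedded graph: a connected component of the complement of
the drawing. -/
def PlaneEmbedding.IsFace {V : Type} {A : V → V → Prop} (emb : PlaneEmbedding A)
    (F : Set (ℝ × ℝ)) : Prop :=
  ∃ x, x ∉ emb.fullDrawing ∧ F = connectedComponentIn (emb.fullDrawing)ᶜ x

variable {V : Type}

/-- The nodes of a piece (a set of directed edges). -/
def nodesOf [DecidableEq V] (p : Finset (V × V)) : Finset V :=
  p.image Prod.fst ∪ p.image Prod.snd

/-- The boundary nodes of the piece `p` of the division `P`: nodes of `p`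
belonging to at least one other piece. -/
def boundaryOf [DecidableEq V] (P : Finset (Finset (V × V))) (p : Finset (V × V)) :
    Finset V :=
  (nodesOf p).filter fun v => ∃ q ∈ P, q ≠ p ∧ v ∈ nodesOf q

/-- The faces of the drawing of an edge set `E`: connected components of the
complement of its drawing. -/
def facesOfEdges {A : V → V → Prop} (emb : PlaneEmbedding A) (E : Set (V × V)) :
    Set (Set (ℝ × ℝ)) :=
  {F | ∃ x, x ∉ emb.drawing E ∧ F = connectedComponentIn (emb.drawing E)ᶜ x}

/-- The holes of a piece `p`: faces of the piece that are not faces of the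
whole graph. -/
def holesOf {A : V → V → Prop} (emb : PlaneEmbedding A) (p : Finset (V × V)) :
    Set (Set (ℝ × ℝ)) :=
  facesOfEdges emb (↑p : Set (V × V)) \ facesOfEdges emb {e | A e.1 e.2}


open scoped ENNReal

abbrev Pl := ℝ × ℝ

def cx (z : Pl) : ℂ := ⟨z.1, z.2⟩

theorem cx_cont : Continuous cx := by
  have : cx = fun z : Pl => (z.1 : ℂ) + (z.2 : ℂ) * Complex.I := by
    funext z; apply Complex.ext <;> simp [cx]
  rw [this]; fun_prop

theorem cx_inj {x y : Pl} (h : cx x = cx y) : x = y := by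
  have h1 := congrArg Complex.re h
  have h2 := congrArg Complex.im h
  exact Prod.ext h1 h2

theorem cx_sub_ne {x y : Pl} (h : x ≠ y) : cx x - cx y ≠ 0 :=
  fun h' => h (cx_inj (sub_eq_zero.1 h'))

def HasLog (S : Set Pl) (f : Pl → ℂ) : Prop :=
  ∃ g : Pl → ℂ, ContinuousOn g S ∧ ∀ z ∈ S, Complex.exp (g z) = f z

theorem HasLog.mono {S T : Set Pl} {f} (h : HasLog T f) (hs : S ⊆ T) : HasLog S f := by
  obtain ⟨g, h1, h2⟩ := h
  exact ⟨g, h1.mono hs, fun z hz => h2 z (hs hz)⟩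

theorem HasLog.congr {S : Set Pl} {f f'} (h : HasLog S f) (hs : ∀ z ∈ S, f z = f' z) :
    HasLog S f' := by
  obtain ⟨g, h1, h2⟩ := h
  exact ⟨g, h1, fun z hz => (h2 z hz).trans (hs z hz)⟩

theorem HasLog.mul {S : Set Pl} {f f'} (h : HasLog S f) (h' : HasLog S f') :
    HasLog S (fun z => f z * f' z) := by
  obtain ⟨g, h1, h2⟩ := h
  obtain ⟨g', h1', h2'⟩ := h'
  exact ⟨fun z => g z + g' z, h1.add h1', fun z hz => by
    rw [Complex.exp_add, h2 z hz, h2' z hz]⟩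

theorem HasLog.zpow {S : Set Pl} {f} (h : HasLog S f) (n : ℤ) :
    HasLog S (fun z => f z ^ n) := by
  obtain ⟨g, h1, h2⟩ := h
  exact ⟨fun z => n * g z, continuousOn_const.mul h1, fun z hz => by
    rw [Complex.exp_int_mul, h2 z hz]⟩

theorem lift_exp {A : Type} [TopologicalSpace A] (H : unitInterval × A → ℂ)
    (hH : Continuous H) (hne : ∀ p, H p ≠ 0) (f : A → ℂ) (hf : Continuous f)
    (h0 : ∀ a, Complex.exp (f a) = H (0, a)) :
    ∃ g : unitInterval × A → ℂ, Continuous g ∧ (∀ p, Complex.exp (g p) = H p) ∧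
      ∀ a, g (0, a) = f a := by
  let H' : C(unitInterval × A, {z : ℂ // z ≠ 0}) := ⟨fun p => ⟨H p, hne p⟩, by fun_prop⟩
  have key := Complex.isCoveringMap_exp
  have h0' : ∀ a, H' (0, a) = (fun z : ℂ ↦ (⟨_, z.exp_ne_zero⟩ : {z : ℂ // z ≠ 0})) ((⟨f, hf⟩ : C(A, ℂ)) a) := by
    intro a
    apply Subtype.ext
    exact (h0 a).symm
  refine ⟨key.liftHomotopy H' ⟨f, hf⟩ h0', by fun_prop, ?_, ?_⟩
  · intro p
    have := congrFun (key.liftHomotopy_lifts H' ⟨f, hf⟩ h0') p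
    exact congrArg Subtype.val this
  · intro a
    exact key.liftHomotopy_zero H' ⟨f, hf⟩ h0' a

/-- nonvanishing continuous function on plane has a log -/
theorem hasLog_plane (f : Pl → ℂ) (hf : Continuous f) (hne : ∀ z, f z ≠ 0) :
    HasLog Set.univ f := by
  obtain ⟨g, hg, h1, -⟩ := lift_exp (A := Pl) (fun p => f ((p.1 : ℝ) • p.2)) (by fun_prop)
    (fun p => hne _) (fun _ => Complex.log (f 0)) (by fun_prop) (fun a => by
      simp [Complex.exp_log (hne 0)])
  refine ⟨fun z => g (1, z), by fun_prop, fun z _ => ?_⟩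
  rw [h1]; simp

/-- a path -/
theorem hasLog_path (a : ℝ → Pl) (ha : ContinuousOn a (Set.Icc 0 1)) :
    HasLog (a '' Set.Icc 0 1)ᶜ (fun z => (cx z - cx (a 1)) / (cx z - cx (a 0))) := by
  have ha' : Continuous (fun t : unitInterval => a t) :=
    continuousOn_iff_continuous_domRestrict.1 ha
  have hn : ∀ (z : ((a '' Set.Icc 0 1)ᶜ : Set Pl)) (t : unitInterval),
      cx z - cx (a t) ≠ 0 := by
    intro z t
    apply cx_sub_ne
    intro h
    exact z.2 ⟨t, t.2, h.symm⟩
  have hn0 : ∀ (z : ((a '' Set.Icc 0 1)ᶜ : Set Pl)), cx z - cx (a 0) ≠ 0 := by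
    intro z; simpa using hn z 0
  have c1 := cx_cont
  obtain ⟨g, hg, h1, -⟩ := lift_exp (A := ((a '' Set.Icc 0 1)ᶜ : Set Pl))
    (fun p => (cx p.2 - cx (a p.1)) / (cx p.2 - cx (a 0)))
    (by
      apply Continuous.div
      · exact (c1.comp (by fun_prop)).sub (c1.comp (ha'.comp continuous_fst))
      · exact (c1.comp (by fun_prop)).sub continuous_const
      · intro p; exact hn0 p.2)
    (fun p => div_ne_zero (hn _ _) (hn0 _)) (fun _ => 0) (by fun_prop)
    (fun z => by simp [div_self (hn0 z)])
  classical
  refine ⟨fun z => if h : z ∈ (a '' Set.Icc 0 1)ᶜ then g (1, ⟨z, h⟩) else 0, ?_, ?_⟩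
  · rw [continuousOn_iff_continuous_domRestrict]
    have : Set.domRestrict (a '' Set.Icc 0 1)ᶜ
        (fun z => if h : z ∈ (a '' Set.Icc 0 1)ᶜ then g (1, ⟨z, h⟩) else 0)
        = fun z => g (1, z) := by
      funext z
      simp only [Set.domRestrict_apply]
      rw [dif_pos z.2]
    rw [this]; fun_prop
  · intro z hz
    simp only [dif_pos hz]
    rw [h1]; simp

/-- continuous injective image of a compact interval: inverse continuous -/
theorem exists_arc_inv (γ : ℝ → Pl) (s : Set ℝ) (hs : IsCompact s) (hc : ContinuousOn γ s)
    (hi : Set.InjOn γ s) :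
    ContinuousOn (Function.invFunOn γ s) (γ '' s) := by
  intro y hy
  obtain ⟨x, hx, rfl⟩ := hy
  rw [ContinuousWithinAt, hi.leftInvOn_invFunOn hx]
  intro U hU
  rw [Filter.mem_map]
  obtain ⟨O, hOU, hO, hxO⟩ := mem_nhds_iff.1 hU
  have hcomp : IsCompact (γ '' (s \ O)) :=
    (hs.diff hO).image_of_continuousOn (hc.mono Set.sdiff_subset)
  have hn : γ x ∉ γ '' (s \ O) := by
    rintro ⟨y, hy, h⟩
    have := hi hy.1 hx h
    exact hy.2 (this ▸ hxO)
  have h1 : ∀ᶠ y in nhdsWithin (γ x) (γ '' s), y ∉ γ '' (s \ O) :=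
    nhdsWithin_le_nhds (hcomp.isClosed.isOpen_compl.mem_nhds hn)
  filter_upwards [h1, self_mem_nhdsWithin] with y hy hys
  rw [Set.mem_preimage]
  obtain ⟨t, ht, rfl⟩ := hys
  rw [hi.leftInvOn_invFunOn ht]
  by_contra h
  exact hy ⟨t, ⟨ht, fun hh => h (hOU hh)⟩, rfl⟩

theorem hasLog_arc (γ : ℝ → Pl) (a b : ℝ) (hc : ContinuousOn γ (Set.Icc a b))
    (hi : Set.InjOn γ (Set.Icc a b)) (f : Pl → ℂ) (hf : ContinuousOn f (γ '' Set.Icc a b))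
    (hne : ∀ z ∈ γ '' Set.Icc a b, f z ≠ 0) : HasLog (γ '' Set.Icc a b) f := by
  rcases lt_or_ge b a with hab | hab
  · simp [Set.Icc_eq_empty (not_le.2 hab), HasLog]
  rcases eq_or_lt_of_le hab with rfl | hab
  · refine ⟨fun _ => Complex.log (f (γ a)), continuousOn_const, ?_⟩
    rintro z ⟨t, ht, rfl⟩
    simp at ht; subst ht
    exact Complex.exp_log (hne _ ⟨t, by simp, rfl⟩)
  have hm : ∀ t : unitInterval, a + t * (b - a) ∈ Set.Icc a b := by
    intro t
    have h1 := t.2.1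
    have h2 := t.2.2
    constructor <;> nlinarith
  have hfg : ContinuousOn (fun t => f (γ t)) (Set.Icc a b) :=
    hf.comp hc (Set.mapsTo_image _ _)
  have hcont : Continuous (fun t : unitInterval => f (γ (a + t * (b - a)))) := by
    apply hfg.comp_continuous (by fun_prop) hm
  obtain ⟨g, hg, h1, -⟩ := lift_exp (A := Unit)
    (fun p => f (γ (a + p.1 * (b - a)))) (hcont.comp continuous_fst)
    (fun p => hne _ ⟨_, hm _, rfl⟩) (fun _ => Complex.log (f (γ a))) (by fun_prop)
    (fun _ => by
      simp [Complex.exp_log (hne _ ⟨a, ⟨le_rfl, hab.le⟩, rfl⟩)])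
  have hinv := exists_arc_inv γ _ isCompact_Icc hc hi
  let τ : Pl → unitInterval := fun z =>
    Set.projIcc 0 1 zero_le_one ((Function.invFunOn γ (Set.Icc a b) z - a) / (b - a))
  have hτ : ContinuousOn τ (γ '' Set.Icc a b) :=
    continuous_projIcc.comp_continuousOn ((hinv.sub continuousOn_const).div_const _)
  refine ⟨fun z => g (τ z, ()), ?_, ?_⟩
  · exact hg.comp_continuousOn (hτ.prodMk continuousOn_const)
  · rintro z ⟨t, ht, rfl⟩
    rw [h1]
    simp only [τ]
    rw [hi.leftInvOn_invFunOn ht]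
    have hb : 0 < b - a := by linarith
    rw [Set.projIcc_of_mem zero_le_one (x := (t - a) / (b - a))
      ⟨div_nonneg (by linarith [ht.1]) hb.le, by rw [div_le_one hb]; linarith [ht.2]⟩]
    simp only
    rw [div_mul_cancel₀ _ hb.ne']
    congr 2; ring


theorem log_unique {X : Type} [TopologicalSpace X] {S : Set X} (hS : IsPreconnected S) {g₁ g₂ : X → ℂ}
    (h1 : ContinuousOn g₁ S) (h2 : ContinuousOn g₂ S)
    (h : ∀ z ∈ S, Complex.exp (g₁ z) = Complex.exp (g₂ z)) {x : X} (hx : x ∈ S) :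
    ∀ y ∈ S, g₁ y = g₂ y + (g₁ x - g₂ x) := by
  have key := Complex.isCoveringMap_exp
  have := key.eqOn_of_comp_eqOn hS h1 (h2.add continuousOn_const) (g₂ := fun y => g₂ y + (g₁ x - g₂ x))
    (by
      intro y hy
      apply Subtype.ext
      simp only [Function.comp]
      rw [Complex.exp_add, Complex.exp_sub, h y hy, h x hx, div_self (Complex.exp_ne_zero _), mul_one])
    hx (by simp)
  exact this

noncomputable def circ (u : Pl) (ρ θ : ℝ) : Pl := (u.1 + ρ * Real.cos θ, u.2 + ρ * Real.sin θ)

theorem cx_circ (u : Pl) (ρ θ : ℝ) : cx (circ u ρ θ) - cx u = ρ * Complex.exp (θ * Complex.I) := by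
  rw [Complex.exp_mul_I]
  apply Complex.ext <;> simp [cx, circ, Complex.cos_ofReal_re, Complex.sin_ofReal_re, Complex.cos_ofReal_im, Complex.sin_ofReal_im]

theorem circ_cont (u : Pl) (ρ : ℝ) : Continuous (circ u ρ) := by
  unfold circ; fun_prop

theorem circle_nolog (u : Pl) (ρ : ℝ) (hρ : 0 < ρ) (n : ℤ)
    (h : HasLog (Set.range (circ u ρ)) (fun z => (cx z - cx u) ^ n)) : n = 0 := by
  obtain ⟨g, hg, hg2⟩ := h
  have c1 : ContinuousOn (fun θ : ℝ => g (circ u ρ θ)) Set.univ :=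
    hg.comp (circ_cont u ρ).continuousOn (fun θ _ => ⟨θ, rfl⟩)
  have := log_unique (X := ℝ) isPreconnected_univ c1
    (g₂ := fun θ : ℝ => Complex.log ((ρ : ℂ) ^ n) + n * (θ * Complex.I)) (by fun_prop)
    (by
      intro θ _
      rw [hg2 _ ⟨θ, rfl⟩]
      simp only
      rw [cx_circ, mul_zpow, Complex.exp_add, Complex.exp_int_mul, Complex.exp_log]
      exact zpow_ne_zero _ (by exact_mod_cast hρ.ne')) (x := 0) (Set.mem_univ _) (2 * Real.pi) (Set.mem_univ _)
  have hc : circ u ρ (2 * Real.pi) = circ u ρ 0 := by simp [circ]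
  rw [hc] at this
  have h3 : (n : ℂ) * (2 * Real.pi * Complex.I) = 0 := by
    push_cast at this
    linear_combination -this
  rcases mul_eq_zero.1 h3 with h | h
  · exact_mod_cast h
  · exact absurd h Complex.two_pi_I_ne_zero

theorem hasLog_ratio_of_joined {K : Set Pl} {x y : Pl} (h : JoinedIn Kᶜ x y) :
    HasLog K (fun z => (cx z - cx y) / (cx z - cx x)) := by
  have h1 := hasLog_path (h.somePath.extend) h.somePath.continuous_extend.continuousOn
  simp only [Path.extend_zero, Path.extend_one] at h1
  apply h1.mono
  rintro z hz ⟨t, ht, rfl⟩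
  rw [Path.extend_apply _ ht] at hz
  exact h.somePath_mem _ hz

theorem isOpen_comp {K : Set Pl} (hK : IsClosed K) (a : Pl) : IsOpen {y | JoinedIn Kᶜ a y} :=
  hK.isOpen_compl.pathComponentIn a

theorem isClosed_comp_union {K : Set Pl} (hK : IsClosed K) (a : Pl) :
    IsClosed ({y | JoinedIn Kᶜ a y} ∪ K) := by
  rw [← isOpen_compl_iff, isOpen_iff_mem_nhds]
  intro y hy
  have hyK : y ∈ Kᶜ := fun h => hy (Or.inr h)
  have h1 := (isOpen_comp hK y).mem_nhds (show JoinedIn Kᶜ y y from JoinedIn.refl hyK)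
  filter_upwards [h1] with z hz h
  rcases h with h | h
  · exact hy (Or.inl (JoinedIn.trans h hz.symm))
  · exact hz.mem.2 h

theorem bounded_comp_log {K : Set Pl} (hK : IsCompact K) {a : Pl} (ha : a ∉ K)
    (hb : Bornology.IsBounded {y | JoinedIn Kᶜ a y}) (q : Pl → ℂ)
    (hq : ContinuousOn q ({y | JoinedIn Kᶜ a y} ∪ K))
    (hq0 : ∀ z ∈ {y | JoinedIn Kᶜ a y} ∪ K, q z ≠ 0) (n : ℤ)
    (h : HasLog K (fun z => (cx z - cx a) ^ n * q z)) : n = 0 := by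
  classical
  obtain ⟨g, hg, hg2⟩ := h
  set U := {y | JoinedIn Kᶜ a y} with hU
  have haU : a ∈ U := JoinedIn.refl ha
  obtain ⟨G, hG⟩ := ContinuousMap.exists_restrict_eq hK.isClosed
    ⟨K.domRestrict g, continuousOn_iff_continuous_domRestrict.1 hg⟩
  have hG2 : ∀ z ∈ K, G z = g z := by
    intro z hz
    have := congrArg (fun f => f ⟨z, hz⟩) hG
    simpa using this
  let F : Pl → ℂ := fun z => if z ∈ U then Complex.exp (G z) / q z else (cx z - cx a) ^ n
  have hF1 : ∀ z ∈ U ∪ K, F z = Complex.exp (G z) / q z := by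
    intro z hz
    by_cases hzU : z ∈ U
    · simp [F, hzU]
    · have hzK : z ∈ K := hz.resolve_left hzU
      simp only [F, if_neg hzU]
      rw [hG2 z hzK, hg2 z hzK, mul_div_assoc, div_self (hq0 z hz), mul_one]
  have hF2 : ∀ z ∈ Uᶜ, F z = (cx z - cx a) ^ n := fun z hz => if_neg hz
  have hne : ∀ z ∈ Uᶜ, cx z - cx a ≠ 0 := fun z hz => cx_sub_ne (fun h => hz (h ▸ haU))
  have hFc : Continuous F := by
    rw [← continuousOn_univ]
    have : (Set.univ : Set Pl) = (U ∪ K) ∪ Uᶜ := by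
      ext z; by_cases hz : z ∈ U <;> simp [hz]
    rw [this]
    apply ContinuousOn.union_of_isClosed _ _ (isClosed_comp_union hK.isClosed a)
      (isOpen_comp hK.isClosed a).isClosed_compl
    · exact ContinuousOn.congr ((by fun_prop : Continuous (fun z => Complex.exp (G z))).continuousOn.div hq hq0) hF1
    · refine ContinuousOn.congr ?_ hF2
      exact (cx_cont.sub continuous_const).continuousOn.zpow₀ n (fun z hz => Or.inl (hne z hz))
  have hF0 : ∀ z, F z ≠ 0 := by
    intro z
    by_cases hz : z ∈ U
    · rw [hF1 z (Or.inl hz)]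
      exact div_ne_zero (Complex.exp_ne_zero _) (hq0 z (Or.inl hz))
    · rw [hF2 z hz]; exact zpow_ne_zero _ (hne z hz)
  have hl := hasLog_plane F hFc hF0
  obtain ⟨R, hR⟩ := hb.subset_closedBall a
  have hcirc : ∀ θ, circ a (2 * (|R| + 1)) θ ∉ U := by
    intro θ hθ
    have h1 := hR hθ
    rw [Metric.mem_closedBall, Prod.dist_eq] at h1
    simp only [circ, Real.dist_eq, add_sub_cancel_left] at h1
    have h2 := le_trans (le_max_left _ _) h1
    have h3 := le_trans (le_max_right _ _) h1
    have h4 := Real.sin_sq_add_cos_sq θ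
    have h5 : |R| ≥ R := le_abs_self R
    have h6 : |R| ≥ 0 := abs_nonneg R
    rw [abs_mul, abs_of_pos (by positivity)] at h2 h3
    have h7 := sq_abs (Real.cos θ)
    have h8 := sq_abs (Real.sin θ)
    have h9 : |Real.cos θ| ≤ 1/2 := by
      by_contra h; push Not at h; nlinarith
    have h10 : |Real.sin θ| ≤ 1/2 := by
      by_contra h; push Not at h; nlinarith
    nlinarith [abs_nonneg (Real.cos θ), abs_nonneg (Real.sin θ)]
  apply circle_nolog a (2 * (|R| + 1)) (by positivity) n
  apply (hl.mono (Set.subset_univ _)).congr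
  rintro z ⟨θ, rfl⟩
  exact hF2 _ (hcirc θ)

theorem glue {S T : Set Pl} (hS : IsClosed S) (hT : IsClosed T) {f : Pl → ℂ} {g h : Pl → ℂ}
    (hg : ContinuousOn g S) (hg2 : ∀ z ∈ S, Complex.exp (g z) = f z)
    (hh : ContinuousOn h T) (hh2 : ∀ z ∈ T, Complex.exp (h z) = f z)
    (he : ∀ x ∈ S ∩ T, ∀ y ∈ S ∩ T, h x - g x = h y - g y) : HasLog (S ∪ T) f := by
  classical
  obtain ⟨c, hc, hc1⟩ : ∃ c : ℂ, (∀ x ∈ S ∩ T, h x - g x = c) ∧ Complex.exp c = 1 := by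
    by_cases hne : (S ∩ T).Nonempty
    · obtain ⟨p, hp⟩ := hne
      refine ⟨h p - g p, fun x hx => he x hx p hp, ?_⟩
      rw [Complex.exp_sub, hg2 p hp.1, hh2 p hp.2, ← hg2 p hp.1, div_self (Complex.exp_ne_zero _)]
    · exact ⟨0, fun x hx => (hne ⟨x, hx⟩).elim, by simp⟩
  have e1 : ∀ z ∈ S, (if z ∈ S then g z else h z - c) = g z := fun z hz => if_pos hz
  have e2 : ∀ z ∈ T, (if z ∈ S then g z else h z - c) = h z - c := by
    intro z hz
    split_ifs with h1
    · rw [← hc z ⟨h1, hz⟩]; ring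
    · rfl
  refine ⟨fun z => if z ∈ S then g z else h z - c, ?_, ?_⟩
  · exact ContinuousOn.union_of_isClosed (hg.congr e1) ((hh.sub continuousOn_const).congr e2) hS hT
  · rintro z (hz | hz)
    · simp only [e1 z hz]; exact hg2 z hz
    · simp only [e2 z hz]; rw [Complex.exp_sub, hc1, div_one]; exact hh2 z hz

theorem HasLog.glue1 {S T : Set Pl} (hS : IsClosed S) (hT : IsClosed T) {f : Pl → ℂ}
    (h1 : HasLog S f) (h2 : HasLog T f) (p : Pl) (hp : S ∩ T ⊆ {p}) : HasLog (S ∪ T) f := by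
  obtain ⟨g, hg, hg2⟩ := h1
  obtain ⟨h, hh, hh2⟩ := h2
  refine glue hS hT hg hg2 hh hh2 ?_
  intro x hx y hy
  rw [Set.mem_singleton_iff.1 (hp hx), Set.mem_singleton_iff.1 (hp hy)]

theorem rank_Pl : 1 < Module.rank ℝ Pl := by
  simp [Pl]; norm_num

theorem joined_outside {R : ℝ} (hR : 0 < R) {x y : Pl} (hx : R < ‖x‖) (hy : R < ‖y‖) :
    JoinedIn (Metric.closedBall (0 : Pl) R)ᶜ x y := by
  have key : ∀ x : Pl, R < ‖x‖ → ∃ x', ‖x'‖ = R + 1 ∧ JoinedIn (Metric.closedBall (0 : Pl) R)ᶜ x x' := by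
    intro x hx
    have hx0 : 0 < ‖x‖ := hR.trans hx
    refine ⟨((R + 1) / ‖x‖) • x, ?_, ?_⟩
    · rw [norm_smul, Real.norm_of_nonneg (by positivity)]; field_simp
    · apply JoinedIn.of_segment_subset
      rintro z ⟨a, b, ha, hb, hab, rfl⟩
      rw [smul_smul, ← add_smul]
      simp only [Set.mem_compl_iff, Metric.mem_closedBall, dist_zero_right, not_le]
      rw [norm_smul, Real.norm_of_nonneg (by positivity), add_mul, mul_assoc, div_mul_cancel₀ _ hx0.ne']
      rcases eq_or_lt_of_le ha with h | h
      · subst h; simp at hab; subst hab; linarith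
      · nlinarith
  obtain ⟨x', h1, h2⟩ := key x hx
  obtain ⟨y', h3, h4⟩ := key y hy
  have h5 := (isPathConnected_sphere rank_Pl (0 : Pl) (r := R + 1) (by linarith)).joinedIn x'
    (by simp [h1]) y' (by simp [h3])
  have h6 : JoinedIn (Metric.closedBall (0 : Pl) R)ᶜ x' y' := by
    apply h5.mono
    intro z hz
    simp at hz ⊢
    linarith
  exact (h2.trans h6).trans h4.symm

theorem bounded_or {K : Set Pl} (hK : IsCompact K) {x y : Pl} (h : ¬ JoinedIn Kᶜ x y) :
    Bornology.IsBounded {z | JoinedIn Kᶜ x z} ∨ Bornology.IsBounded {z | JoinedIn Kᶜ y z} := by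
  by_contra hcon
  push Not at hcon
  obtain ⟨R, hR, hKR⟩ := hK.isBounded.subset_closedBall_lt 0 0
  have far : ∀ S : Set Pl, ¬ Bornology.IsBounded S → ∃ z ∈ S, R < ‖z‖ := by
    intro S hS
    by_contra hc
    push Not at hc
    exact hS (Metric.isBounded_closedBall.subset (fun z hz => by simpa using hc z hz : S ⊆ Metric.closedBall 0 R))
  obtain ⟨x', hx', h1⟩ := far _ hcon.1
  obtain ⟨y', hy', h2⟩ := far _ hcon.2
  have := (joined_outside hR h1 h2).mono (Set.compl_subset_compl.2 hKR)
  exact h ((hx'.trans this).trans hy'.symm)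

/-- sets all of whose nonvanishing continuous functions have logs -/
def ArcLike (T : Set Pl) : Prop := IsCompact T ∧
  ∀ f : Pl → ℂ, ContinuousOn f T → (∀ z ∈ T, f z ≠ 0) → HasLog T f

theorem arcLike_arc (γ : ℝ → Pl) (a b : ℝ) (hc : ContinuousOn γ (Set.Icc a b))
    (hi : Set.InjOn γ (Set.Icc a b)) : ArcLike (γ '' Set.Icc a b) :=
  ⟨isCompact_Icc.image_of_continuousOn hc, fun f hf hne => hasLog_arc γ a b hc hi f hf hne⟩

theorem cx_sub_cont (a : Pl) : Continuous (fun z => cx z - cx a) := cx_cont.sub continuous_const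

theorem zpow_part {K : Set Pl} {a x : Pl} (hx : x ∉ K) (h : ¬ JoinedIn Kᶜ a x) (n : ℤ) :
    ContinuousOn (fun z => (cx z - cx x) ^ n) ({y | JoinedIn Kᶜ a y} ∪ K) ∧
    ∀ z ∈ {y | JoinedIn Kᶜ a y} ∪ K, (cx z - cx x) ^ n ≠ 0 := by
  have : ∀ z ∈ {y | JoinedIn Kᶜ a y} ∪ K, cx z - cx x ≠ 0 := by
    rintro z (hz | hz)
    · exact cx_sub_ne (fun e => h (e ▸ hz))
    · exact cx_sub_ne (fun e => hx (e ▸ hz))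
  exact ⟨(cx_sub_cont x).continuousOn.zpow₀ n (fun z hz => Or.inl (this z hz)),
    fun z hz => zpow_ne_zero _ (this z hz)⟩

theorem two_log {K : Set Pl} (hK : IsCompact K) {x y : Pl} (hx : x ∉ K) (hy : y ∉ K)
    (h : HasLog K (fun z => (cx z - cx y) / (cx z - cx x))) : JoinedIn Kᶜ x y := by
  by_contra hn
  rcases bounded_or hK hn with hb | hb
  · obtain ⟨h1, h2⟩ := zpow_part hy hn 1
    have := bounded_comp_log hK hx hb _ h1 h2 (-1) (h.congr (fun z _ => by
      rw [zpow_neg_one, zpow_one]; ring))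
    omega
  · obtain ⟨h1, h2⟩ := zpow_part hx (fun e => hn e.symm) (-1)
    have := bounded_comp_log hK hy hb _ h1 h2 1 (h.congr (fun z _ => by
      rw [zpow_neg_one, zpow_one]; ring))
    omega

/-- Janiszewski -/
theorem janis {K₁ K₂ T : Set Pl} (h1 : IsCompact K₁) (h2 : IsCompact K₂) (hd : Disjoint K₁ K₂)
    (hT : ArcLike T) (u v : Pl) (hu : K₁ ∩ T ⊆ {u}) (hv : K₂ ∩ T ⊆ {v}) {x y : Pl}
    (hx : x ∉ T) (hy : y ∉ T) (h : JoinedIn (K₁ ∪ K₂)ᶜ x y) : JoinedIn (K₁ ∪ T ∪ K₂)ᶜ x y := by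
  have hl := hasLog_ratio_of_joined h
  have hxK := h.mem.1
  have hyK := h.mem.2
  simp only [Set.mem_compl_iff, Set.mem_union, not_or] at hxK hyK
  have hlT : HasLog T (fun z => (cx z - cx y) / (cx z - cx x)) := by
    apply hT.2
    · exact (cx_sub_cont y).continuousOn.div (cx_sub_cont x).continuousOn
        (fun z hz => cx_sub_ne (fun e => hx (e ▸ hz)))
    · intro z hz
      exact div_ne_zero (cx_sub_ne (fun e => hy (e ▸ hz))) (cx_sub_ne (fun e => hx (e ▸ hz)))
  apply two_log ((h1.union hT.1).union h2)
  · simp [hxK, hx]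
  · simp [hyK, hy]
  · refine HasLog.glue1 (h1.union hT.1).isClosed h2.isClosed
      (HasLog.glue1 h1.isClosed hT.1.isClosed (hl.mono Set.subset_union_left) hlT u hu)
      (hl.mono Set.subset_union_right) v ?_
    rintro z ⟨hz | hz, hz'⟩
    · exact (Set.disjoint_left.1 hd hz hz').elim
    · exact hv ⟨hz', hz⟩

theorem three_log {K : Set Pl} (hK : IsCompact K) {x y w : Pl} (hx : x ∉ K) (hy : y ∉ K)
    (hw : w ∉ K) (hxy : ¬ JoinedIn Kᶜ x y) (hxw : ¬ JoinedIn Kᶜ x w) (a b c : ℤ)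
    (h : HasLog K (fun z => (cx z - cx x) ^ a * ((cx z - cx y) ^ b * (cx z - cx w) ^ c)))
    (hb : Bornology.IsBounded {z | JoinedIn Kᶜ x z}) : a = 0 := by
  obtain ⟨h1, h2⟩ := zpow_part hy hxy b
  obtain ⟨h3, h4⟩ := zpow_part hw hxw c
  exact bounded_comp_log hK hx hb _ (h1.mul h3) (fun z hz => mul_ne_zero (h2 z hz) (h4 z hz)) a h

theorem exp_eq_int {a b : ℂ} (h : Complex.exp a = Complex.exp b) :
    ∃ n : ℤ, a - b = n * (2 * Real.pi * Complex.I) := by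
  obtain ⟨n, hn⟩ := Complex.exp_eq_exp_iff_exists_int.1 h
  exact ⟨n, by rw [hn]; ring⟩

/-- at most two sides of an arc -/
theorem two_sides {K T : Set Pl} (hK : IsCompact K) (hT : ArcLike T) (u v : Pl)
    (huv : K ∩ T ⊆ {u, v}) {x y w : Pl} (hx : x ∉ T) (hy : y ∉ T) (hw : w ∉ T)
    (h1 : JoinedIn Kᶜ x y) (h2 : JoinedIn Kᶜ x w) :
    JoinedIn (K ∪ T)ᶜ x y ∨ JoinedIn (K ∪ T)ᶜ x w ∨ JoinedIn (K ∪ T)ᶜ y w := by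
  by_contra hcon
  push Not at hcon
  obtain ⟨n1, n2, n3⟩ := hcon
  have hlT : ∀ y, y ∉ T → HasLog T (fun z => (cx z - cx y) / (cx z - cx x)) := by
    intro y hy
    apply hT.2
    · exact (cx_sub_cont y).continuousOn.div (cx_sub_cont x).continuousOn
        (fun z hz => cx_sub_ne (fun e => hx (e ▸ hz)))
    · intro z hz
      exact div_ne_zero (cx_sub_ne (fun e => hy (e ▸ hz))) (cx_sub_ne (fun e => hx (e ▸ hz)))
  obtain ⟨g1, hg1, eg1⟩ := hasLog_ratio_of_joined h1
  obtain ⟨g2, hg2, eg2⟩ := hasLog_ratio_of_joined h2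
  obtain ⟨k1, hk1, ek1⟩ := hlT y hy
  obtain ⟨k2, hk2, ek2⟩ := hlT w hw
  have hd : ∀ z, ∃ n : ℤ × ℤ, z ∈ K ∩ T → k1 z - g1 z = n.1 * (2 * Real.pi * Complex.I) ∧
      k2 z - g2 z = n.2 * (2 * Real.pi * Complex.I) := by
    intro z
    by_cases hz : z ∈ K ∩ T
    · obtain ⟨a, ha⟩ := exp_eq_int ((ek1 z hz.2).trans (eg1 z hz.1).symm)
      obtain ⟨b, hb⟩ := exp_eq_int ((ek2 z hz.2).trans (eg2 z hz.1).symm)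
      exact ⟨(a, b), fun _ => ⟨ha, hb⟩⟩
    · exact ⟨0, fun h => (hz h).elim⟩
  choose N hN using hd
  obtain ⟨m1, m2, hm, hm2⟩ : ∃ m1 m2 : ℤ, (m1 ≠ 0 ∨ m2 ≠ 0) ∧
      m1 * (N u).1 + m2 * (N u).2 = m1 * (N v).1 + m2 * (N v).2 := by
    by_cases h : (N u).1 = (N v).1
    · exact ⟨1, 0, by simp, by simp [h]⟩
    · refine ⟨(N u).2 - (N v).2, (N v).1 - (N u).1, Or.inr (fun h' => h (by omega)), by ring⟩
  have hall : ∀ z ∈ K ∩ T, (m1 * k1 z + m2 * k2 z) - (m1 * g1 z + m2 * g2 z)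
      = ((m1 * (N u).1 + m2 * (N u).2 : ℤ) : ℂ) * (2 * Real.pi * Complex.I) := by
    intro z hz
    have e : (m1 * (N u).1 + m2 * (N u).2 : ℤ) = m1 * (N z).1 + m2 * (N z).2 := by
      rcases huv hz with rfl | h
      · rfl
      · rw [Set.mem_singleton_iff.1 h, hm2]
    rw [e]
    obtain ⟨e1, e2⟩ := hN z hz
    push_cast
    linear_combination (m1 : ℂ) * e1 + (m2 : ℂ) * e2
  have hlog : HasLog (K ∪ T) (fun z => ((cx z - cx y) / (cx z - cx x)) ^ m1 *
      ((cx z - cx w) / (cx z - cx x)) ^ m2) := by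
    refine glue (g := fun z => m1 * g1 z + m2 * g2 z) (h := fun z => m1 * k1 z + m2 * k2 z)
      hK.isClosed hT.1.isClosed ?_ ?_ ?_ ?_ ?_
    · fun_prop
    · intro z hz
      rw [Complex.exp_add, Complex.exp_int_mul, Complex.exp_int_mul, eg1 z hz, eg2 z hz]
    · fun_prop
    · intro z hz
      rw [Complex.exp_add, Complex.exp_int_mul, Complex.exp_int_mul, ek1 z hz, ek2 z hz]
    · intro a ha b hb
      rw [hall a ha, hall b hb]
  have hKT := hK.union hT.1
  have hx' : x ∉ K ∪ T := by rintro (h | h); exacts [h1.mem.1 h, hx h]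
  have hy' : y ∉ K ∪ T := by rintro (h | h); exacts [h1.mem.2 h, hy h]
  have hw' : w ∉ K ∪ T := by rintro (h | h); exacts [h2.mem.2 h, hw h]
  have hlog2 : ∀ z ∈ K ∪ T, ((cx z - cx y) / (cx z - cx x)) ^ m1 *
      ((cx z - cx w) / (cx z - cx x)) ^ m2 = (cx z - cx x) ^ (-m1 - m2) * ((cx z - cx y) ^ m1 * (cx z - cx w) ^ m2) := by
    intro z hz
    have : cx z - cx x ≠ 0 := cx_sub_ne (fun e => hx' (e ▸ hz))
    rw [div_zpow, div_zpow, sub_eq_add_neg (-m1) m2, zpow_add₀ this, zpow_neg, zpow_neg]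
    ring
  have L1 := hlog.congr hlog2
  have L2 : HasLog (K ∪ T) (fun z => (cx z - cx y) ^ m1 * ((cx z - cx x) ^ (-m1 - m2) * (cx z - cx w) ^ m2)) :=
    L1.congr (fun z _ => by ring)
  have L3 : HasLog (K ∪ T) (fun z => (cx z - cx w) ^ m2 * ((cx z - cx x) ^ (-m1 - m2) * (cx z - cx y) ^ m1)) :=
    L1.congr (fun z _ => by ring)
  have s1 := three_log hKT hx' hy' hw' n1 n2 _ _ _ L1
  have s2 := three_log hKT hy' hx' hw' (fun e => n1 e.symm) n3 _ _ _ L2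
  have s3 := three_log hKT hw' hx' hy' (fun e => n2 e.symm) (fun e => n3 e.symm) _ _ _ L3
  rcases bounded_or hKT n1 with hb | hb
  · have := s1 hb
    rcases bounded_or hKT n3 with hb' | hb'
    · have := s2 hb'; omega
    · have := s3 hb'; omega
  · have := s2 hb
    rcases bounded_or hKT n2 with hb' | hb'
    · have := s1 hb'; omega
    · have := s3 hb'; omega

/-- Jordan type separation -/
theorem jordan_sep {K : Set Pl} (hK : IsClosed K) (γ : ℝ → Pl)
    (hc : ContinuousOn γ (Set.Icc 0 1)) (hi : Set.InjOn γ (Set.Icc 0 1))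
    (hj : JoinedIn K (γ 0) (γ 1)) (w : Pl) (hw : ∀ t ∈ Set.Ioo (0 : ℝ) 1, JoinedIn Kᶜ w (γ t)) :
    ¬ IsPreconnected ({z | JoinedIn Kᶜ w z} \ γ '' Set.Icc 0 1) := by
  intro hpre
  set W := {z | JoinedIn Kᶜ w z} with hW
  have hWo : IsOpen W := isOpen_comp hK w
  set T := γ '' Set.Icc 0 1 with hT
  have hTc : IsClosed T := (isCompact_Icc.image_of_continuousOn hc).isClosed
  obtain ⟨g1, c1, e1⟩ := hasLog_path γ hc
  have hP : HasLog W (fun z => (cx z - cx (γ 1)) / (cx z - cx (γ 0))) := by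
    apply (hasLog_ratio_of_joined (K := Kᶜ) (by rwa [compl_compl])).mono
    intro z hz; exact hz.mem.2
  obtain ⟨g2, c2, e2⟩ := hP
  have hne : γ 1 ≠ γ 0 := fun h => by
    have := hi (by simp) (by simp) h; norm_num at this
  obtain ⟨c, hcc, hc1⟩ : ∃ c : ℂ, (∀ z ∈ W \ T, g2 z = g1 z + c) ∧ Complex.exp c = 1 := by
    by_cases hn : (W \ T).Nonempty
    · obtain ⟨p, hp⟩ := hn
      refine ⟨_, log_unique hpre (c2.mono Set.sdiff_subset) (c1.mono (fun z hz => hz.2)) ?_ hp, ?_⟩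
      · intro z hz; rw [e2 z hz.1, e1 z hz.2]
      · rw [Complex.exp_sub, e2 p hp.1, ← e1 p hp.2, div_self (Complex.exp_ne_zero _)]
    · exact ⟨0, fun x hx => (hn ⟨x, hx⟩).elim, by simp⟩
  classical
  have hlog : HasLog (Tᶜ ∪ W) (fun z => (cx z - cx (γ 1)) / (cx z - cx (γ 0))) := by
    have E1 : ∀ z ∈ W, (if z ∈ W then g2 z - c else g1 z) = g2 z - c := fun z hz => if_pos hz
    have E2 : ∀ z ∈ Tᶜ, (if z ∈ W then g2 z - c else g1 z) = g1 z := by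
      intro z hz
      split_ifs with h
      · rw [hcc z ⟨h, hz⟩]; ring
      · rfl
    refine ⟨fun z => if z ∈ W then g2 z - c else g1 z, ?_, ?_⟩
    · exact ContinuousOn.union_of_isOpen (c1.congr E2) ((c2.sub continuousOn_const).congr E1)
        hTc.isOpen_compl hWo
    · rintro z (hz | hz)
      · simp only [E2 z hz]; exact e1 z hz
      · simp only [E1 z hz]; rw [Complex.exp_sub, hc1, div_one]; exact e2 z hz
  set δ := ‖cx (γ 1) - cx (γ 0)‖ / 2 with hδ
  have hδ0 : 0 < δ := by
    have := norm_pos_iff.2 (cx_sub_ne hne); positivity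
  have hnorm : ∀ θ, ‖cx (circ (γ 0) δ θ) - cx (γ 0)‖ = δ := by
    intro θ
    rw [cx_circ, norm_mul, Complex.norm_exp_ofReal_mul_I, mul_one]
    simp [abs_of_pos hδ0]
  have hsub : Set.range (circ (γ 0) δ) ⊆ Tᶜ ∪ W := by
    rintro z ⟨θ, rfl⟩
    by_contra hz
    simp only [Set.mem_union, Set.mem_compl_iff, not_or, not_not] at hz
    obtain ⟨⟨t, ht, he⟩, hz2⟩ := hz
    have h3 := hnorm θ
    rw [← he] at h3 hz2
    rcases eq_or_lt_of_le ht.1 with h | h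
    · rw [← h] at h3; simp at h3; linarith
    rcases eq_or_lt_of_le ht.2 with h' | h'
    · rw [h'] at h3; rw [hδ] at h3; linarith
    · exact hz2 (hw t ⟨h, h'⟩)
  have hl2 : HasLog (Set.range (circ (γ 0) δ)) (fun z => ((cx z - cx (γ 1)) / (cx (γ 0) - cx (γ 1)))) := by
    have hs : ∀ z ∈ Set.range (circ (γ 0) δ), (cx z - cx (γ 1)) / (cx (γ 0) - cx (γ 1)) ∈ Complex.slitPlane := by
      rintro z ⟨θ, rfl⟩
      have h0 := cx_sub_ne hne.symm
      have : (cx (circ (γ 0) δ θ) - cx (γ 1)) / (cx (γ 0) - cx (γ 1)) =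
          1 + (cx (circ (γ 0) δ θ) - cx (γ 0)) / (cx (γ 0) - cx (γ 1)) := by
        field_simp; ring
      rw [this]
      apply Complex.mem_slitPlane_of_norm_lt_one
      rw [norm_div, hnorm, norm_sub_rev (cx (γ 0)), div_lt_one (by linarith)]
      linarith
    refine ⟨fun z => Complex.log ((cx z - cx (γ 1)) / (cx (γ 0) - cx (γ 1))), ?_, ?_⟩
    · exact ContinuousOn.clog ((cx_sub_cont _).continuousOn.div_const _) hs
    · intro z hz
      exact Complex.exp_log (Complex.slitPlane_ne_zero (hs z hz))
  have hl3 := ((hlog.mono hsub).zpow (-1)).mul hl2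
  have hconst : HasLog (Set.range (circ (γ 0) δ)) (fun _ => cx (γ 0) - cx (γ 1)) :=
    ⟨fun _ => Complex.log (cx (γ 0) - cx (γ 1)), continuousOn_const, fun z _ =>
      Complex.exp_log (cx_sub_ne hne.symm)⟩
  have := circle_nolog (γ 0) δ hδ0 1 ((hl3.mul hconst).congr (by
    rintro z ⟨θ, rfl⟩
    have h0 := cx_sub_ne hne.symm
    have h1 : cx (circ (γ 0) δ θ) - cx (γ 1) ≠ 0 := by
      intro h
      have h2 := hnorm θ
      rw [sub_eq_zero.1 h] at h2; linarith
    rw [zpow_neg_one, zpow_one, inv_div]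
    field_simp))
  norm_num at this


theorem joined_induct {O u : Set Pl} {x y : Pl} (h : JoinedIn O x y) (hu : IsOpen u) (hx : x ∈ u)
    (hcl : closure u ∩ O ⊆ u) : y ∈ u := by
  have hpre : IsPreconnected (Set.range h.somePath) := isPreconnected_range h.somePath.continuous
  have hsub : Set.range h.somePath ⊆ O := by
    rintro z ⟨t, rfl⟩; exact h.somePath_mem t
  have := hpre.subset_of_closure_inter_subset hu ⟨x, ⟨0, by simp⟩, hx⟩
    (fun z hz => hcl ⟨hz.1, hsub hz.2⟩)
  exact this ⟨1, by simp⟩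

theorem isOpen_joined {O : Set Pl} (hO : IsOpen O) (a : Pl) : IsOpen {y | JoinedIn O a y} :=
  hO.pathComponentIn a

theorem joined_of_closure {O : Set Pl} (hO : IsOpen O) {a z : Pl} (hz : z ∈ O)
    (h : z ∈ closure {y | JoinedIn O a y}) : JoinedIn O a z := by
  obtain ⟨w, hw1, hw2⟩ := mem_closure_iff.1 h _ (isOpen_joined hO z) (JoinedIn.refl hz)
  exact JoinedIn.trans hw2 (JoinedIn.symm hw1)

theorem first_hit {O T : Set Pl} (hO : IsOpen O) (hT : IsClosed T) {x p : Pl} (h : JoinedIn O x p)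
    (hx : x ∉ T) (hp : p ∈ T) : ∃ q ∈ T, q ∈ O ∧ q ∈ closure {y | JoinedIn (O \ T) x y} := by
  by_contra hcon
  push Not at hcon
  have hOT : IsOpen (O \ T) := hO.sdiff hT
  have : p ∈ {y | JoinedIn (O \ T) x y} := by
    refine joined_induct h (isOpen_joined hOT x) (JoinedIn.refl ⟨h.mem.1, hx⟩) ?_
    rintro z ⟨hz, hzO⟩
    by_cases hzT : z ∈ T
    · exact (hcon z hzT hzO hz).elim
    · exact joined_of_closure hOT ⟨hzO, hzT⟩ hz
  exact this.mem.2.2 hp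

theorem joined_punct_ball (p : Pl) {R : ℝ} {x y : Pl} (hx : x ∈ Metric.ball p R \ {p})
    (hy : y ∈ Metric.ball p R \ {p}) : JoinedIn (Metric.ball p R \ {p}) x y := by
  have hR : 0 < R := by
    have := Metric.pos_of_mem_ball hx.1; exact this
  have key : ∀ x : Pl, x ∈ Metric.ball p R \ {p} → ∃ x', dist x' p = R / 2 ∧ JoinedIn (Metric.ball p R \ {p}) x x' := by
    intro x hx
    have hx0 : 0 < ‖x - p‖ := norm_pos_iff.2 (sub_ne_zero.2 hx.2)
    have hx1 : ‖x - p‖ < R := by simpa [dist_eq_norm] using hx.1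
    refine ⟨p + ((R / 2) / ‖x - p‖) • (x - p), ?_, ?_⟩
    · rw [dist_eq_norm, add_sub_cancel_left, norm_smul, Real.norm_of_nonneg (by positivity)]
      field_simp
    · apply JoinedIn.of_segment_subset
      rintro z ⟨a, b, ha, hb, hab, rfl⟩
      have e : a • x + b • (p + (R / 2 / ‖x - p‖) • (x - p)) - p = (a + b * (R / 2 / ‖x - p‖)) • (x - p) := by
        have : a = 1 - b := by linarith
        subst this
        module
      have hn : ‖a • x + b • (p + (R / 2 / ‖x - p‖) • (x - p)) - p‖ = a * ‖x - p‖ + b * (R / 2) := by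
        rw [e, norm_smul, Real.norm_of_nonneg (by positivity), add_mul, mul_assoc, div_mul_cancel₀ _ hx0.ne']
      constructor
      · rw [Metric.mem_ball, dist_eq_norm, hn]
        rcases eq_or_lt_of_le ha with h | h
        · subst h; simp at hab; subst hab; linarith
        · nlinarith
      · intro h
        rw [Set.mem_singleton_iff.1 h, sub_self, norm_zero] at hn
        rcases eq_or_lt_of_le ha with h | h
        · subst h; simp at hab; subst hab; linarith
        · nlinarith [mul_pos h hx0, mul_nonneg hb hR.le]
  obtain ⟨x', h1, h2⟩ := key x hx
  obtain ⟨y', h3, h4⟩ := key y hy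
  have h5 := (isPathConnected_sphere rank_Pl p (r := R / 2) (by linarith)).joinedIn x'
    h1 y' h3
  have h6 : JoinedIn (Metric.ball p R \ {p}) x' y' := by
    apply h5.mono
    intro z hz
    rw [Metric.mem_sphere] at hz
    refine ⟨by rw [Metric.mem_ball]; linarith, ?_⟩
    rintro rfl
    rw [dist_self] at hz; linarith
  exact (h2.trans h6).trans h4.symm

theorem joined_punct {O : Set Pl} (hO : IsOpen O) (p : Pl) {x y : Pl} (h : JoinedIn O x y)
    (hx : x ≠ p) (hy : y ≠ p) : JoinedIn (O \ {p}) x y := by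
  by_cases hp : p ∈ O
  swap
  · rwa [Set.sdiff_singleton_eq_self hp]
  have hOp : IsOpen (O \ {p}) := hO.sdiff isClosed_singleton
  obtain ⟨R, hR, hb⟩ := Metric.isOpen_iff.1 hO p hp
  have hbp : Metric.ball p R \ {p} ⊆ O \ {p} := Set.sdiff_subset_sdiff_left hb
  set A := {z | JoinedIn (O \ {p}) x z} with hA
  have hAo : IsOpen A := isOpen_joined hOp x
  by_cases hm : ∃ w ∈ Metric.ball p R \ {p}, w ∈ A
  · obtain ⟨w, hw, hwA⟩ := hm
    have hall : ∀ z ∈ Metric.ball p R \ {p}, z ∈ A := fun z hz =>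
      JoinedIn.trans hwA ((joined_punct_ball p hw hz).mono hbp)
    have : y ∈ A ∪ Metric.ball p R := by
      refine joined_induct h (hAo.union Metric.isOpen_ball) (Or.inl (JoinedIn.refl ⟨h.mem.1, hx⟩)) ?_
      rintro z ⟨hz, hzO⟩
      by_cases hzp : z = p
      · right; rw [hzp]; exact Metric.mem_ball_self hR
      · left
        apply joined_of_closure hOp ⟨hzO, hzp⟩
        rw [mem_closure_iff_nhds] at hz ⊢
        intro N hN
        obtain ⟨q, hq1, hq2⟩ := hz (N ∩ {p}ᶜ) (Filter.inter_mem hN (isOpen_compl_singleton.mem_nhds hzp))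
        refine ⟨q, hq1.1, ?_⟩
        rcases hq2 with hq2 | hq2
        · exact hq2
        · exact hall q ⟨hq2, hq1.2⟩
    rcases this with h1 | h1
    · exact h1
    · exact hall y ⟨h1, hy⟩
  · push Not at hm
    have : y ∈ A := by
      refine joined_induct h hAo (JoinedIn.refl ⟨h.mem.1, hx⟩) ?_
      rintro z ⟨hz, hzO⟩
      by_cases hzp : z = p
      · exfalso
        obtain ⟨q, hq1, hq2⟩ := mem_closure_iff.1 hz (Metric.ball p R) Metric.isOpen_ball (by rw [hzp]; exact Metric.mem_ball_self hR)
        exact hm q ⟨hq1, hq2.mem.2.2⟩ hq2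
      · exact joined_of_closure hOp ⟨hzO, hzp⟩ hz
    exact this

theorem joined_punct_finite {O : Set Pl} (hO : IsOpen O) {S : Set Pl} (hS : S.Finite) {x y : Pl}
    (h : JoinedIn O x y) (hx : x ∉ S) (hy : y ∉ S) : JoinedIn (O \ S) x y := by
  induction S, hS using Set.Finite.induction_on with
  | empty => simpa using h
  | @insert a S ha hS ih =>
    have h1 := ih (fun e => hx (Or.inr e)) (fun e => hy (Or.inr e))
    have h2 := joined_punct (hO.sdiff hS.isClosed) a h1 (fun e => hx (Or.inl e)) (fun e => hy (Or.inl e))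
    apply h2.mono
    rintro z ⟨⟨h3, h4⟩, h5⟩
    exact ⟨h3, fun h => h.elim h5 h4⟩

theorem arc_interior_empty (γ : ℝ → Pl) (hc : ContinuousOn γ (Set.Icc 0 1))
    (hi : Set.InjOn γ (Set.Icc 0 1)) : interior (γ '' Set.Icc 0 1) = ∅ := by
  by_contra hne
  obtain ⟨u, hu⟩ := Set.nonempty_iff_ne_empty.2 hne
  obtain ⟨R, hR, hb⟩ := Metric.isOpen_iff.1 isOpen_interior u hu
  have hb' : Metric.ball u R ⊆ γ '' Set.Icc 0 1 := hb.trans interior_subset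
  obtain ⟨s, hs, rfl⟩ := hb' (Metric.mem_ball_self hR)
  set ρ := R / 2
  have hρ : 0 < ρ := by positivity
  have hcont : ContinuousOn (fun t => ‖cx (γ t) - cx (γ s)‖) (Set.Icc 0 1) :=
    ((cx_sub_cont (γ s)).norm.comp_continuousOn hc)
  have hev : ∀ᶠ t in nhdsWithin s (Set.Icc 0 1), ‖cx (γ t) - cx (γ s)‖ < ρ := by
    apply (hcont s hs).eventually (p := fun y => y < ρ)
    simpa using eventually_lt_nhds hρ
  obtain ⟨ε, hε, hεb⟩ := Metric.mem_nhdsWithin_iff.1 hev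
  have hcirc : Set.range (circ (γ s) ρ) ⊆ γ '' Set.Icc 0 (s - ε/2) ∪ γ '' Set.Icc (s + ε/2) 1 := by
    rintro z ⟨θ, rfl⟩
    have h1 : circ (γ s) ρ θ ∈ Metric.ball (γ s) R := by
      rw [Metric.mem_ball, Prod.dist_eq]
      simp only [circ, Real.dist_eq, add_sub_cancel_left, abs_mul, abs_of_pos hρ]
      have h2 := Real.abs_cos_le_one θ
      have h3 := Real.abs_sin_le_one θ
      apply max_lt
      · simp only [ρ]; nlinarith
      · simp only [ρ]; nlinarith
    obtain ⟨t, ht, he⟩ := hb' h1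
    have hn : ¬ ‖cx (γ t) - cx (γ s)‖ < ρ := by
      rw [he, cx_circ, norm_mul, Complex.norm_exp_ofReal_mul_I, mul_one]
      simp [abs_of_pos hρ]
    have hd : ¬ dist t s < ε := fun h => hn (hεb ⟨h, ht⟩)
    rw [Real.dist_eq, abs_lt] at hd
    rw [← he]
    by_cases h : t ≤ s - ε/2
    · left; exact ⟨t, ⟨ht.1, h⟩, rfl⟩
    · right; exact ⟨t, ⟨by push Not at h; by_contra h'; exact hd ⟨by linarith, by linarith⟩, ht.2⟩, rfl⟩
  have sub1 : Set.Icc 0 (s - ε/2) ⊆ Set.Icc (0:ℝ) 1 := Set.Icc_subset_Icc le_rfl (by linarith [hs.2])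
  have sub2 : Set.Icc (s + ε/2) 1 ⊆ Set.Icc (0:ℝ) 1 := Set.Icc_subset_Icc (by linarith [hs.1]) le_rfl
  have a1 := arcLike_arc γ 0 (s - ε/2) (hc.mono sub1) (hi.mono sub1)
  have a2 := arcLike_arc γ (s + ε/2) 1 (hc.mono sub2) (hi.mono sub2)
  have hlog := HasLog.glue1 a1.1.isClosed a2.1.isClosed (f := fun z => (cx z - cx (γ s)) ^ (1:ℤ))
    (a1.2 _ (by simpa using (cx_sub_cont (γ s)).continuousOn) (by
      rintro z ⟨t, ht, rfl⟩
      rw [zpow_one]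
      apply cx_sub_ne
      intro h
      have := hi (sub1 ht) hs h
      linarith [ht.2]))
    (a2.2 _ (by simpa using (cx_sub_cont (γ s)).continuousOn) (by
      rintro z ⟨t, ht, rfl⟩
      rw [zpow_one]
      apply cx_sub_ne
      intro h
      have := hi (sub2 ht) hs h
      linarith [ht.1])) 0 (by
      rintro z ⟨⟨t, ht, rfl⟩, ⟨t', ht', h⟩⟩
      have := hi (sub2 ht') (sub1 ht) h
      linarith [ht.2, ht'.1])
  have := circle_nolog (γ s) ρ hρ 1 (hlog.mono hcirc)
  norm_num at this


set_option linter.unusedSectionVars false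

/-- connectivity through a set of edges -/
def Cn {E X : Type} (s t : E → X) (A : Set E) : X → X → Prop :=
  Relation.EqvGen (fun a b => ∃ e ∈ A, s e = a ∧ t e = b)

theorem Cn.refl {E X : Type} {s t : E → X} {A : Set E} (x : X) : Cn s t A x x :=
  Relation.EqvGen.refl x

theorem Cn.symm {E X : Type} {s t : E → X} {A : Set E} {x y : X} (h : Cn s t A x y) :
    Cn s t A y x := Relation.EqvGen.symm _ _ h

theorem Cn.trans {E X : Type} {s t : E → X} {A : Set E} {x y z : X} (h : Cn s t A x y)
    (h' : Cn s t A y z) : Cn s t A x z := Relation.EqvGen.trans _ _ _ h h'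

theorem Cn.edge {E X : Type} {s t : E → X} {A : Set E} {e : E} (h : e ∈ A) :
    Cn s t A (s e) (t e) := Relation.EqvGen.rel _ _ ⟨e, h, rfl, rfl⟩

/-- induction to any equivalence relation -/
theorem Cn.lift {E X : Type} {s t : E → X} {A : Set E} {r : X → X → Prop} (hr : Equivalence r)
    (h : ∀ e ∈ A, r (s e) (t e)) {x y : X} (hxy : Cn s t A x y) : r x y := by
  induction hxy with
  | rel x y h' => obtain ⟨e, he, rfl, rfl⟩ := h'; exact h e he
  | refl x => exact hr.refl x
  | symm x y _ ih => exact hr.symm ih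
  | trans x y z _ _ ih1 ih2 => exact hr.trans ih1 ih2

theorem Cn.equiv {E X : Type} (s t : E → X) (A : Set E) : Equivalence (Cn s t A) :=
  ⟨Cn.refl, Cn.symm, Cn.trans⟩

theorem Cn.of_edges {E X : Type} {s t : E → X} {A B : Set E}
    (h : ∀ e ∈ A, Cn s t B (s e) (t e)) {x y : X} (hxy : Cn s t A x y) : Cn s t B x y :=
  hxy.lift (Cn.equiv s t B) h

theorem Cn.mono {E X : Type} {s t : E → X} {A B : Set E} (hAB : A ⊆ B) {x y : X}
    (hxy : Cn s t A x y) : Cn s t B x y := hxy.of_edges (fun _ he => Cn.edge (hAB he))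

/-- invariant set version -/
theorem Cn.inv {E X : Type} {s t : E → X} {A : Set E} {P : X → Prop}
    (h : ∀ e ∈ A, P (s e) ↔ P (t e)) {x y : X} (hxy : Cn s t A x y) : P x ↔ P y :=
  hxy.lift (r := fun x y => P x ↔ P y) ⟨fun _ => Iff.rfl, Iff.symm, Iff.trans⟩ h

structure PG (V E : Type) where
  pos : V → Pl
  src : E → V
  tgt : E → V
  arc : E → ℝ → Pl
  pos_inj : Function.Injective pos
  cont : ∀ e, ContinuousOn (arc e) (Set.Icc 0 1)
  inj : ∀ e, Set.InjOn (arc e) (Set.Icc 0 1)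
  start : ∀ e, arc e 0 = pos (src e)
  fin : ∀ e, arc e 1 = pos (tgt e)
  avoid : ∀ e x, pos x ∈ arc e '' Set.Icc 0 1 → x = src e ∨ x = tgt e
  meet : ∀ e e', e ≠ e' → ∀ z ∈ arc e '' Set.Icc 0 1, z ∈ arc e' '' Set.Icc 0 1 →
    ∃ v, z = pos v ∧ (v = src e ∨ v = tgt e) ∧ (v = src e' ∨ v = tgt e')

namespace PG

variable {V E : Type} [Finite V] [Finite E] (g : PG V E)

def img (e : E) : Set Pl := g.arc e '' Set.Icc 0 1

def D (A : Set E) : Set Pl := ⋃ e ∈ A, g.img e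

theorem mem_D {A : Set E} {z : Pl} : z ∈ g.D A ↔ ∃ e ∈ A, z ∈ g.img e := by
  simp [D]

theorem D_mono {A B : Set E} (h : A ⊆ B) : g.D A ⊆ g.D B := Set.biUnion_subset_biUnion_left h

theorem compact_D (A : Set E) : IsCompact (g.D A) :=
  (Set.toFinite A).isCompact_biUnion (fun e _ => isCompact_Icc.image_of_continuousOn (g.cont e))

theorem D_insert (A : Set E) (t : E) : g.D (A ∪ {t}) = g.D A ∪ g.img t := by
  ext z; simp only [mem_D, Set.mem_union, Set.mem_singleton_iff]
  constructor
  · rintro ⟨e, h | rfl, hz⟩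
    · exact Or.inl ⟨e, h, hz⟩
    · exact Or.inr hz
  · rintro (⟨e, h, hz⟩ | hz)
    · exact ⟨e, Or.inl h, hz⟩
    · exact ⟨t, Or.inr rfl, hz⟩

theorem isOpen_compl_D (A : Set E) : IsOpen (g.D A)ᶜ := (g.compact_D A).isClosed.isOpen_compl

theorem dense_compl_D (A : Set E) : Dense (g.D A)ᶜ := by
  have : (g.D A)ᶜ = ⋂ e ∈ A, (g.img e)ᶜ := by simp [D]
  rw [this]
  refine dense_biInter_of_isOpen ?_ (Set.to_countable A) ?_
  · intro e _
    exact (isCompact_Icc.image_of_continuousOn (g.cont e)).isClosed.isOpen_compl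
  · intro e _
    rw [← interior_eq_empty_iff_dense_compl]
    exact arc_interior_empty _ (g.cont e) (g.inj e)

def Face : Type := {F : Set Pl // ∃ x, x ∉ g.D Set.univ ∧ F = {y | JoinedIn (g.D Set.univ)ᶜ x y}}

variable {g}

theorem Face.nonempty (F : g.Face) : ∃ x, x ∈ F.1 := by
  obtain ⟨F, x, hx, rfl⟩ := F
  exact ⟨x, JoinedIn.refl hx⟩

theorem Face.joined (F : g.Face) {x y : Pl} (hx : x ∈ F.1) (hy : y ∈ F.1) :
    JoinedIn (g.D Set.univ)ᶜ x y := by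
  obtain ⟨F, a, ha, rfl⟩ := F
  exact JoinedIn.trans (JoinedIn.symm hx) hy

theorem Face.mem_of_joined (F : g.Face) {x y : Pl} (hx : x ∈ F.1)
    (h : JoinedIn (g.D Set.univ)ᶜ x y) : y ∈ F.1 := by
  obtain ⟨F, a, ha, rfl⟩ := F
  exact JoinedIn.trans hx h

theorem Face.eq_of_mem {F F' : g.Face} {x : Pl} (hx : x ∈ F.1) (hx' : x ∈ F'.1) : F = F' := by
  apply Subtype.ext
  ext y
  exact ⟨fun h => F'.mem_of_joined hx' (F.joined hx h), fun h => F.mem_of_joined hx (F'.joined hx' h)⟩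

theorem Face.notMem (F : g.Face) {x : Pl} (hx : x ∈ F.1) : x ∉ g.D Set.univ :=
  (F.joined hx hx).mem.1

theorem Face.isOpen (F : g.Face) : IsOpen F.1 := by
  obtain ⟨F, a, ha, rfl⟩ := F
  exact isOpen_joined (g.isOpen_compl_D _) a

theorem exists_face {x : Pl} (hx : x ∉ g.D Set.univ) : ∃ F : g.Face, x ∈ F.1 :=
  ⟨⟨_, x, hx, rfl⟩, JoinedIn.refl hx⟩

theorem Face.closure_not (F : g.Face) {z : Pl} (hz : z ∉ g.D Set.univ) (h : z ∈ closure F.1) :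
    z ∈ F.1 := by
  obtain ⟨F', hF'⟩ := exists_face hz
  obtain ⟨w, h1, h2⟩ := mem_closure_iff.1 h _ F'.isOpen hF'
  rw [Face.eq_of_mem h2 h1]; exact hF'

theorem exists_face_near {U : Set Pl} (hU : IsOpen U) (hne : U.Nonempty) :
    ∃ F : g.Face, ∃ x ∈ F.1, x ∈ U := by
  obtain ⟨x, h1, h2⟩ := (g.dense_compl_D Set.univ).inter_open_nonempty U hU hne
  obtain ⟨F, hF⟩ := exists_face h2
  exact ⟨F, x, hF, h1⟩

/-- in the same component of the complement of `D A` -/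
def SC (A : Set E) (F F' : g.Face) : Prop := ∃ x ∈ F.1, ∃ y ∈ F'.1, JoinedIn (g.D A)ᶜ x y

theorem Face.joinedA (A : Set E) (F : g.Face) {x y : Pl} (hx : x ∈ F.1) (hy : y ∈ F.1) :
    JoinedIn (g.D A)ᶜ x y :=
  (F.joined hx hy).mono (Set.compl_subset_compl.2 (g.D_mono (Set.subset_univ _)))

theorem SC.all {A : Set E} {F F' : g.Face} (h : SC A F F') {x y : Pl} (hx : x ∈ F.1)
    (hy : y ∈ F'.1) : JoinedIn (g.D A)ᶜ x y := by
  obtain ⟨x', hx', y', hy', h⟩ := h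
  exact ((F.joinedA A hx hx').trans h).trans (F'.joinedA A hy' hy)

theorem SC.equiv (A : Set E) : Equivalence (SC (g := g) A) := by
  refine ⟨?_, ?_, ?_⟩
  · intro F
    obtain ⟨x, hx⟩ := F.nonempty
    exact ⟨x, hx, x, hx, F.joinedA A hx hx⟩
  · rintro F F' ⟨x, hx, y, hy, h⟩
    exact ⟨y, hy, x, hx, h.symm⟩
  · rintro F F' F'' ⟨x, hx, y, hy, h⟩ h'
    obtain ⟨z, hz⟩ := F''.nonempty
    exact ⟨x, hx, z, hz, h.trans (h'.all hy hz)⟩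

theorem SC.mono {A B : Set E} (h : A ⊆ B) {F F' : g.Face} (hs : SC B F F') : SC A F F' := by
  obtain ⟨x, hx, y, hy, h'⟩ := hs
  exact ⟨x, hx, y, hy, h'.mono (Set.compl_subset_compl.2 (g.D_mono h))⟩

theorem arc_not_D {A : Set E} {t : E} (ht : t ∉ A) {s : ℝ} (hs : s ∈ Set.Ioo (0:ℝ) 1) :
    g.arc t s ∉ g.D A := by
  intro h
  obtain ⟨e, he, hz⟩ := g.mem_D.1 h
  have hs' : s ∈ Set.Icc (0:ℝ) 1 := ⟨hs.1.le, hs.2.le⟩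
  obtain ⟨v, hv, h1, -⟩ := g.meet t e (fun h => ht (h ▸ he)) _ ⟨s, hs', rfl⟩ hz
  rcases h1 with rfl | rfl
  · rw [← g.start] at hv
    have := g.inj t hs' (by simp) hv
    linarith [hs.1]
  · rw [← g.fin] at hv
    have := g.inj t hs' (by simp) hv
    linarith [hs.2]

theorem arc_joined {O : Set Pl} (t : E) {a b : ℝ} (ha : a ∈ Set.Icc (0:ℝ) 1) (hb : b ∈ Set.Icc (0:ℝ) 1)
    (h : ∀ s ∈ Set.uIcc a b, g.arc t s ∈ O) : JoinedIn O (g.arc t a) (g.arc t b) := by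
  have h1 : JoinedIn (Set.uIcc a b) a b := by
    apply JoinedIn.of_segment_subset
    rw [segment_eq_uIcc]
  have h2 : Set.uIcc a b ⊆ Set.Icc (0:ℝ) 1 := Set.uIcc_subset_Icc ha hb
  have h3 := h1.map_continuousOn (f := g.arc t) ((g.cont t).mono h2)
  apply h3.mono
  rintro z ⟨s, hs, rfl⟩
  exact h s hs

theorem arc_joined_Ioo {A : Set E} {t : E} (ht : t ∉ A) {a b : ℝ} (ha : a ∈ Set.Ioo (0:ℝ) 1) (hb : b ∈ Set.Ioo (0:ℝ) 1) :
    JoinedIn (g.D A)ᶜ (g.arc t a) (g.arc t b) := by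
  apply arc_joined t ⟨ha.1.le, ha.2.le⟩ ⟨hb.1.le, hb.2.le⟩
  intro s hs
  apply arc_not_D ht
  rcases Set.mem_uIcc.1 hs with h | h
  · exact ⟨by linarith [ha.1], by linarith [hb.2]⟩
  · exact ⟨by linarith [hb.1], by linarith [ha.2]⟩

theorem half_mem : (1/2 : ℝ) ∈ Set.Ioo (0:ℝ) 1 := by norm_num

/-- a face near the middle of edge `t` -/
def InW (t : E) (F : g.Face) : Prop := ∃ x ∈ F.1, JoinedIn (g.D {t}ᶜ)ᶜ (g.arc t (1/2)) x

theorem D_univ_eq (t : E) : g.D Set.univ = g.D {t}ᶜ ∪ g.img t := by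
  rw [← D_insert]; congr 1; ext e; simp [em]

theorem arcLike_img (e : E) : ArcLike (g.img e) := arcLike_arc _ _ _ (g.cont e) (g.inj e)

theorem D_inter_img {A : Set E} {t : E} (ht : t ∉ A) :
    g.D A ∩ g.img t ⊆ {g.pos (g.src t), g.pos (g.tgt t)} := by
  rintro z ⟨h1, h2⟩
  obtain ⟨e, he, hz⟩ := g.mem_D.1 h1
  obtain ⟨v, rfl, h3, -⟩ := g.meet t e (fun h => ht (h ▸ he)) z h2 hz
  rcases h3 with rfl | rfl <;> simp

theorem exists_lr (t : E) : ∃ l r : g.Face, InW t l ∧ InW t r ∧ ∀ F, InW t F → F = l ∨ F = r := by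
  have hmid : g.arc t (1/2) ∈ (g.D {t}ᶜ)ᶜ := arc_not_D (by simp) half_mem
  obtain ⟨l, x, hx, hxl⟩ := exists_face_near (g := g) (isOpen_joined (g.isOpen_compl_D {t}ᶜ) (g.arc t (1/2)))
    ⟨_, JoinedIn.refl hmid⟩
  have hl : InW t l := ⟨x, hx, hxl⟩
  by_cases h : ∀ F : g.Face, InW t F → F = l
  · exact ⟨l, l, hl, hl, fun F hF => Or.inl (h F hF)⟩
  · push Not at h
    obtain ⟨r, hr, hrl⟩ := h
    refine ⟨l, r, hl, hr, fun F hF => ?_⟩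
    obtain ⟨y, hy, hym⟩ := hr
    obtain ⟨z, hz, hzm⟩ := hF
    have nt : ∀ (F : g.Face) (x : Pl), x ∈ F.1 → x ∉ g.img t := fun F x hx h' =>
      F.notMem hx (by rw [D_univ_eq t]; exact Or.inr h')
    have := two_sides (g.compact_D {t}ᶜ) (arcLike_img t) _ _ (D_inter_img (by simp))
      (nt _ _ hx) (nt _ _ hy) (nt _ _ hz) (JoinedIn.trans (JoinedIn.symm hxl) hym)
      (JoinedIn.trans (JoinedIn.symm hxl) hzm)
    rw [← D_univ_eq] at this
    rcases this with h | h | h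
    · exact (hrl (Face.eq_of_mem (r.mem_of_joined hy h.symm) hx)).elim
    · left; exact Face.eq_of_mem (F.mem_of_joined hz h.symm) hx
    · right; exact Face.eq_of_mem (F.mem_of_joined hz h.symm) hy

noncomputable def l (t : E) : g.Face := (exists_lr t).choose
noncomputable def r (t : E) : g.Face := (exists_lr (g := g) t).choose_spec.choose

theorem l_InW (t : E) : InW t (l (g := g) t) := (exists_lr (g := g) t).choose_spec.choose_spec.1
theorem r_InW (t : E) : InW t (r (g := g) t) := (exists_lr (g := g) t).choose_spec.choose_spec.2.1
theorem InW_eq {t : E} {F : g.Face} (h : InW t F) : F = l t ∨ F = r t :=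
  (exists_lr (g := g) t).choose_spec.choose_spec.2.2 F h

theorem SC_of_InW {t : E} {F F' : g.Face} (h : InW t F) (h' : InW t F') : SC {t}ᶜ F F' := by
  obtain ⟨x, hx, h⟩ := h
  obtain ⟨y, hy, h'⟩ := h'
  exact ⟨x, hx, y, hy, h.symm.trans h'⟩

variable (g) in
def DC (B : Set E) : g.Face → g.Face → Prop := Cn (l (g := g)) (r (g := g)) B

theorem SC_of_DC {B : Set E} {F F' : g.Face} (h : g.DC B F F') : SC Bᶜ F F' := by
  apply Cn.lift (SC.equiv Bᶜ) _ h
  intro e he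
  exact (SC_of_InW (l_InW e) (r_InW e)).mono (by simpa using he)

theorem DC_of_SC {B : Set E} {F F' : g.Face} (h : SC Bᶜ F F') : g.DC B F F' := by
  obtain ⟨x, hx, y, hy, h⟩ := h
  have hfin : (Set.range g.pos ∩ g.D Set.univ).Finite := (Set.finite_range _).subset Set.inter_subset_left
  have h' := joined_punct_finite (g.isOpen_compl_D Bᶜ) hfin h (fun e => F.notMem hx e.2)
    (fun e => F'.notMem hy e.2)
  set O := (g.D Bᶜ)ᶜ \ (Set.range g.pos ∩ g.D Set.univ) with hO
  let S (P : g.Face → Prop) : Set Pl := {z | ∃ N : Set Pl, IsOpen N ∧ z ∈ N ∧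
    ∀ F₁ : g.Face, ∀ w ∈ F₁.1, w ∈ N → P F₁}
  have hSo : ∀ P, IsOpen (S P) := by
    intro P
    rw [isOpen_iff_mem_nhds]
    rintro z ⟨N, hN, hz, hP⟩
    filter_upwards [hN.mem_nhds hz] with w hw
    exact ⟨N, hN, hw, hP⟩
  have hcov : ∀ z ∈ O, z ∈ S (fun F₁ => g.DC B F F₁) ∨ z ∈ S (fun F₁ => ¬ g.DC B F F₁) := by
    intro z hz
    by_cases hzD : z ∈ g.D Set.univ
    · obtain ⟨t, -, s, hs, rfl⟩ := g.mem_D.1 hzD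
      have htB : t ∈ B := by
        by_contra htB
        exact hz.1 (g.mem_D.2 ⟨t, htB, s, hs, rfl⟩)
      have hs1 : s ≠ 0 := by
        rintro rfl
        exact hz.2 ⟨⟨_, (g.start t).symm⟩, hzD⟩
      have hs2 : s ≠ 1 := by
        rintro rfl
        exact hz.2 ⟨⟨_, (g.fin t).symm⟩, hzD⟩
      have hs' : s ∈ Set.Ioo (0:ℝ) 1 := ⟨lt_of_le_of_ne hs.1 hs1.symm, lt_of_le_of_ne hs.2 hs2⟩
      have hN := isOpen_joined (g.isOpen_compl_D {t}ᶜ) (g.arc t (1/2))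
      have hzN : JoinedIn (g.D {t}ᶜ)ᶜ (g.arc t (1/2)) (g.arc t s) :=
        arc_joined_Ioo (by simp) half_mem hs'
      have hlr : g.DC B (l t) (r t) := Cn.edge htB
      have hall : ∀ F₁ : g.Face, ∀ w ∈ F₁.1, w ∈ {y | JoinedIn (g.D {t}ᶜ)ᶜ (g.arc t (1/2)) y} →
          g.DC B (l t) F₁ := by
        intro F₁ w hw hw'
        rcases InW_eq (t := t) ⟨w, hw, hw'⟩ with h | h
        · rw [h]; exact Cn.refl _
        · rw [h]; exact hlr
      by_cases hc : g.DC B F (l t)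
      · left
        exact ⟨_, hN, hzN, fun F₁ w hw hw' => Cn.trans hc (hall F₁ w hw hw')⟩
      · right
        exact ⟨_, hN, hzN, fun F₁ w hw hw' h => hc (Cn.trans h (Cn.symm (hall F₁ w hw hw')))⟩
    · obtain ⟨F₁, hF₁⟩ := exists_face hzD
      by_cases hc : g.DC B F F₁
      · left; exact ⟨_, F₁.isOpen, hF₁, fun F₂ w hw hw' => by rwa [Face.eq_of_mem hw hw']⟩
      · right; exact ⟨_, F₁.isOpen, hF₁, fun F₂ w hw hw' => by rwa [Face.eq_of_mem hw hw']⟩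
  have hdisj : ∀ z, z ∈ S (fun F₁ => g.DC B F F₁) → z ∈ S (fun F₁ => ¬ g.DC B F F₁) → False := by
    rintro z ⟨N, hN, hz, hP⟩ ⟨N', hN', hz', hP'⟩
    obtain ⟨F₁, w, hw, hw'⟩ := exists_face_near (g := g) (hN.inter hN') ⟨z, hz, hz'⟩
    exact hP' F₁ w hw hw'.2 (hP F₁ w hw hw'.1)
  have hxS : x ∈ S (fun F₁ => g.DC B F F₁) :=
    ⟨_, F.isOpen, hx, fun F₂ w hw hw' => by rw [Face.eq_of_mem hw hw']; exact Cn.refl _⟩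
  have hyS := joined_induct h' (hSo _) hxS (by
    rintro z ⟨hz, hzO⟩
    rcases hcov z hzO with h | h
    · exact h
    · obtain ⟨w, h1, h2⟩ := mem_closure_iff.1 hz _ (hSo _) h
      exact (hdisj w h2 h1).elim)
  obtain ⟨N, hN, hyN, hP⟩ := hyS
  exact hP F' y hy hyN

theorem SC_iff {A : Set E} {F F' : g.Face} : SC A F F' ↔ g.DC Aᶜ F F' := by
  constructor
  · intro h; apply DC_of_SC; rwa [compl_compl]
  · intro h; have := SC_of_DC h; rwa [compl_compl] at this

theorem DC_univ (F F' : g.Face) : g.DC Set.univ F F' := by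
  apply DC_of_SC
  obtain ⟨x, hx⟩ := F.nonempty
  obtain ⟨y, hy⟩ := F'.nonempty
  refine ⟨x, hx, y, hy, ?_⟩
  simp only [Set.compl_univ, D, Set.mem_empty_iff_false, Set.iUnion_of_empty, Set.iUnion_empty, Set.compl_empty]
  exact isPathConnected_univ.joinedIn x trivial y trivial

variable (g) in
theorem face_exists : Nonempty g.Face := by
  obtain ⟨F, -⟩ := exists_face_near (g := g) isOpen_univ ⟨0, trivial⟩
  exact ⟨F⟩

variable (g) in
theorem finite_face : Finite g.Face := by
  obtain ⟨F0⟩ := face_exists g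
  have : (Set.univ : Set g.Face) ⊆ {F0} ∪ (Set.range l ∪ Set.range r) := by
    intro F _
    by_cases h : F ∈ Set.range (l (g := g)) ∪ Set.range r
    · exact Or.inr h
    · left
      have := (DC_univ F0 F).inv (P := fun F' => F' = F) (by
        intro e _
        constructor
        · rintro rfl; exact (h (Or.inl ⟨e, rfl⟩)).elim
        · rintro rfl; exact (h (Or.inr ⟨e, rfl⟩)).elim)
      exact (this.2 rfl).symm
  exact Set.finite_univ_iff.1 (((Set.finite_singleton _).union ((Set.finite_range _).union (Set.finite_range _))).subset this)

variable (g) in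
def PC (A : Set E) : V → V → Prop := Cn g.src g.tgt A

theorem I1 {A : Set E} {t : E} (ht : t ∉ A) (h : ¬ g.PC A (g.src t) (g.tgt t)) :
    g.DC (A ∪ {t})ᶜ (l t) (r t) := by
  rw [← SC_iff]
  obtain ⟨x, hx, hxm⟩ := l_InW (g := g) t
  obtain ⟨y, hy, hym⟩ := r_InW (g := g) t
  refine ⟨x, hx, y, hy, ?_⟩
  set A1 : Set E := {e ∈ A | g.PC A (g.src t) (g.src e)} with hA1
  set A2 : Set E := {e ∈ A | ¬ g.PC A (g.src t) (g.src e)} with hA2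
  have hAA : g.D A = g.D A1 ∪ g.D A2 := by
    ext z; simp only [mem_D, Set.mem_union]
    constructor
    · rintro ⟨e, he, hz⟩
      by_cases h : g.PC A (g.src t) (g.src e)
      · exact Or.inl ⟨e, ⟨he, h⟩, hz⟩
      · exact Or.inr ⟨e, ⟨he, h⟩, hz⟩
    · rintro (⟨e, he, hz⟩ | ⟨e, he, hz⟩) <;> exact ⟨e, he.1, hz⟩
  have ends1 : ∀ e ∈ A1, ∀ v, v = g.src e ∨ v = g.tgt e → g.PC A (g.src t) v := by
    rintro e ⟨he, h1⟩ v (rfl | rfl)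
    · exact h1
    · exact Cn.trans h1 (Cn.edge he)
  have ends2 : ∀ e ∈ A2, ∀ v, v = g.src e ∨ v = g.tgt e → ¬ g.PC A (g.src t) v := by
    rintro e ⟨he, h1⟩ v (rfl | rfl)
    · exact h1
    · exact fun h2 => h1 (Cn.trans h2 (Cn.symm (Cn.edge he)))
  have hdisj : Disjoint (g.D A1) (g.D A2) := by
    rw [Set.disjoint_left]
    intro z hz1 hz2
    obtain ⟨e1, he1, h1⟩ := g.mem_D.1 hz1
    obtain ⟨e2, he2, h2⟩ := g.mem_D.1 hz2
    obtain ⟨v, -, hv1, hv2⟩ := g.meet e1 e2 (by rintro rfl; exact he2.2 he1.2) z h1 h2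
    exact ends2 e2 he2 v hv2 (ends1 e1 he1 v hv1)
  have hu : g.D A1 ∩ g.img t ⊆ {g.pos (g.src t)} := by
    rintro z ⟨hz1, hz2⟩
    obtain ⟨e1, he1, h1⟩ := g.mem_D.1 hz1
    obtain ⟨v, rfl, hv1, hv2⟩ := g.meet t e1 (by rintro rfl; exact ht he1.1) z hz2 h1
    rcases hv1 with rfl | rfl
    · rfl
    · exact (h (ends1 e1 he1 _ hv2)).elim
  have hv : g.D A2 ∩ g.img t ⊆ {g.pos (g.tgt t)} := by
    rintro z ⟨hz1, hz2⟩
    obtain ⟨e1, he1, h1⟩ := g.mem_D.1 hz1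
    obtain ⟨v, rfl, hv1, hv2⟩ := g.meet t e1 (by rintro rfl; exact ht he1.1) z hz2 h1
    rcases hv1 with rfl | rfl
    · exact (ends2 e1 he1 _ hv2 (Cn.refl _)).elim
    · rfl
  have nt : ∀ (F : g.Face) (x : Pl), x ∈ F.1 → x ∉ g.img t := fun F x hx h' =>
    F.notMem hx (by rw [D_univ_eq t]; exact Or.inr h')
  have hj : JoinedIn (g.D A1 ∪ g.D A2)ᶜ x y := by
    rw [← hAA]
    apply (JoinedIn.trans hxm.symm hym).mono
    apply Set.compl_subset_compl.2 (g.D_mono _)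
    intro e he h'
    exact ht (h' ▸ he)
  have := janis (g.compact_D A1) (g.compact_D A2) hdisj (arcLike_img t) _ _ hu hv
    (nt _ _ hx) (nt _ _ hy) hj
  rw [D_insert, hAA]
  convert this using 2
  ext z; simp only [Set.mem_union]; tauto

theorem joined_D {A : Set E} {u v : V} (h : g.PC A u v) : u = v ∨ JoinedIn (g.D A) (g.pos u) (g.pos v) := by
  refine Cn.lift (r := fun u v => u = v ∨ JoinedIn (g.D A) (g.pos u) (g.pos v)) ⟨?_, ?_, ?_⟩ ?_ h
  · intro u; exact Or.inl rfl
  · rintro u v (rfl | h)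
    · exact Or.inl rfl
    · exact Or.inr h.symm
  · rintro u v w (rfl | h) (rfl | h')
    · exact Or.inl rfl
    · exact Or.inr h'
    · exact Or.inr h
    · exact Or.inr (h.trans h')
  · intro e he
    right
    rw [← g.start, ← g.fin]
    apply arc_joined e (by simp) (by simp)
    intro s hs
    rw [Set.uIcc_of_le zero_le_one] at hs
    exact g.mem_D.2 ⟨e, he, s, hs, rfl⟩

theorem src_ne_tgt (t : E) : g.pos (g.src t) ≠ g.pos (g.tgt t) := by
  rw [← g.start, ← g.fin]
  intro h
  have := g.inj t (by simp) (by simp) h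
  norm_num at this

theorem I2 {A : Set E} {t : E} (ht : t ∉ A) (h : g.PC A (g.src t) (g.tgt t)) :
    ¬ g.DC (A ∪ {t})ᶜ (l t) (r t) := by
  intro hdc
  have hj : JoinedIn (g.D A) (g.arc t 0) (g.arc t 1) := by
    rw [g.start, g.fin]
    exact (joined_D h).resolve_left (fun e => src_ne_tgt (g := g) t (by rw [e]))
  apply jordan_sep (g.compact_D A).isClosed (g.arc t) (g.cont t) (g.inj t) hj (g.arc t (1/2))
    (fun s hs => arc_joined_Ioo ht half_mem hs)
  have hOt : IsOpen (g.D (A ∪ {t}))ᶜ := g.isOpen_compl_D _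
  obtain ⟨x0, hx0, hx0m⟩ := l_InW (g := g) t
  have hsubA : A ⊆ {t}ᶜ := fun e he h' => ht (h' ▸ he)
  have key : ∀ z ∈ {z | JoinedIn (g.D A)ᶜ (g.arc t (1/2)) z} \ g.arc t '' Set.Icc 0 1,
      JoinedIn (g.D (A ∪ {t}))ᶜ x0 z := by
    rintro z ⟨hz, hzt⟩
    have hzO : z ∈ (g.D (A ∪ {t}))ᶜ := by
      rw [D_insert]; rintro (h | h)
      · exact hz.mem.2 h
      · exact hzt h
    obtain ⟨F, w, hw, hwz⟩ := exists_face_near (g := g) (isOpen_joined hOt z) ⟨z, JoinedIn.refl hzO⟩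
    have h1 : SC A (l t) F := by
      refine ⟨x0, hx0, w, hw, ?_⟩
      refine JoinedIn.trans (JoinedIn.trans (hx0m.symm.mono (Set.compl_subset_compl.2 (g.D_mono hsubA))) hz) ?_
      exact JoinedIn.mono hwz (Set.compl_subset_compl.2 (g.D_mono Set.subset_union_left))
    have h2 : g.DC (A ∪ {t})ᶜ (l t) F := by
      refine Cn.of_edges ?_ (SC_iff.1 h1)
      intro e he
      by_cases het : e = t
      · subst het; exact hdc
      · exact Cn.edge (by simp only [Set.mem_compl_iff, Set.mem_union, Set.mem_singleton_iff, not_or]; exact ⟨he, het⟩)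
    exact ((SC_iff.2 h2).all hx0 hw).trans (JoinedIn.symm hwz)
  apply IsPathConnected.isConnected _ |>.isPreconnected
  refine ⟨x0, ?_, ?_⟩
  · refine ⟨hx0m.mono (Set.compl_subset_compl.2 (g.D_mono hsubA)), ?_⟩
    intro h'
    exact (l (g := g) t).notMem hx0 (by rw [D_univ_eq t]; exact Or.inr h')
  · intro z hz
    have hk := key z hz
    refine ⟨hk.somePath, fun s => ?_⟩
    have hks : JoinedIn (g.D (A ∪ {t}))ᶜ x0 (hk.somePath s) := by
      refine ⟨hk.somePath.truncateOfLE (t₀ := 0) (t₁ := s) s.2.1 |>.cast (by simp) (by simp), ?_⟩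
      intro q
      simp only [Path.cast_coe]
      have := hk.somePath.truncate_range (t₀ := 0) (t₁ := s)
      have h2 := this ⟨q, rfl⟩
      obtain ⟨q', hq'⟩ := h2
      have : (hk.somePath.truncateOfLE (t₀ := 0) (t₁ := s) s.2.1) q = hk.somePath q' := by
        rw [hq']; rfl
      rw [this]
      exact hk.somePath_mem q'
    generalize hk.somePath s = q at hks ⊢
    rw [D_insert] at hks
    constructor
    · exact (hx0m.mono (Set.compl_subset_compl.2 (g.D_mono hsubA))).trans
        (hks.mono (Set.compl_subset_compl.2 Set.subset_union_left))
    · intro h'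
      exact hks.mem.2 (Or.inr h')

theorem incid_closure {t : E} {F : g.Face} (h : InW t F) : g.pos (g.src t) ∈ closure F.1 ∧
    g.pos (g.tgt t) ∈ closure F.1 := by
  obtain ⟨x, hx, hxm⟩ := h
  have hxt : x ∉ g.img t := fun h' => F.notMem hx (by rw [D_univ_eq t]; exact Or.inr h')
  have hKO : IsOpen (g.D {t}ᶜ)ᶜ := g.isOpen_compl_D _
  have hFeq : ∀ y, JoinedIn ((g.D {t}ᶜ)ᶜ \ g.img t) x y → y ∈ F.1 := by
    intro y hy
    apply F.mem_of_joined hx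
    apply hy.mono
    rw [D_univ_eq t, Set.compl_union]
    exact fun z hz => ⟨hz.1, hz.2⟩
  constructor
  · by_contra hcon
    rw [← g.start] at hcon
    have hev : ∀ᶠ s in nhdsWithin (0:ℝ) (Set.Icc 0 1), g.arc t s ∈ (closure F.1)ᶜ :=
      (g.cont t 0 (by simp)).eventually (isClosed_closure.isOpen_compl.mem_nhds hcon)
    obtain ⟨ε, hε, hb⟩ := Metric.mem_nhdsWithin_iff.1 hev
    set s0 := min ε 1 / 2 with hs0
    have hs0p : 0 < s0 := by positivity
    have hs01 : s0 < 1 := by have := min_le_right ε 1; linarith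
    have hs0e : s0 < ε := by have := min_le_left ε 1; linarith
    have hno : ∀ s ∈ Set.Icc (0:ℝ) s0, g.arc t s ∉ closure F.1 := by
      intro s hs
      refine hb ⟨?_, hs.1, hs.2.trans hs01.le⟩
      rw [Metric.mem_ball, Real.dist_eq, abs_lt]
      constructor <;> linarith [hs.1, hs.2]
    have hsub : Set.Icc s0 1 ⊆ Set.Icc (0:ℝ) 1 := Set.Icc_subset_Icc hs0p.le le_rfl
    have hT := arcLike_arc (g.arc t) s0 1 ((g.cont t).mono hsub) ((g.inj t).mono hsub)
    have hj := janis (g.compact_D {t}ᶜ) isCompact_empty (Set.disjoint_empty _) hT (g.pos (g.tgt t)) 0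
      (by
        rintro z ⟨hz1, s, hs, rfl⟩
        rcases D_inter_img (g := g) (A := {t}ᶜ) (t := t) (by simp) ⟨hz1, s, hsub hs, rfl⟩ with h | h
        · rw [← g.start] at h
          have := g.inj t (hsub hs) (by simp) h
          linarith [hs.1]
        · exact h)
      (by simp) (x := x) (y := g.arc t (s0 / 2)) (fun h => hxt (Set.image_mono hsub h))
      (by
        rintro ⟨s, hs, h⟩
        have := g.inj t (hsub hs) ⟨by linarith, by linarith⟩ h
        linarith [hs.1])
      (by
        rw [Set.union_empty]
        exact hxm.symm.trans (arc_joined_Ioo (by simp) half_mem ⟨by linarith, by linarith⟩))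
    rw [Set.union_empty] at hj
    obtain ⟨q, ⟨s, hs, rfl⟩, hq2, hq3⟩ := first_hit ((g.compact_D {t}ᶜ).union hT.1).isClosed.isOpen_compl
      (arcLike_img t).1.isClosed hj hxt ⟨s0/2, ⟨by linarith, by linarith⟩, rfl⟩
    have hss : s < s0 := by
      by_contra hh
      exact hq2 (Or.inr ⟨s, ⟨not_lt.1 hh, hs.2⟩, rfl⟩)
    apply hno s ⟨hs.1, hss.le⟩
    refine closure_mono ?_ hq3
    intro y hy
    apply hFeq y
    exact JoinedIn.mono hy (Set.sdiff_subset_sdiff_left (Set.compl_subset_compl.2 Set.subset_union_left))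
  · by_contra hcon
    rw [← g.fin] at hcon
    have hev : ∀ᶠ s in nhdsWithin (1:ℝ) (Set.Icc 0 1), g.arc t s ∈ (closure F.1)ᶜ :=
      (g.cont t 1 (by simp)).eventually (isClosed_closure.isOpen_compl.mem_nhds hcon)
    obtain ⟨ε, hε, hb⟩ := Metric.mem_nhdsWithin_iff.1 hev
    set s0 := min ε 1 / 2 with hs0
    have hs0p : 0 < s0 := by positivity
    have hs01 : s0 < 1 := by have := min_le_right ε 1; linarith
    have hs0e : s0 < ε := by have := min_le_left ε 1; linarith
    have hno : ∀ s ∈ Set.Icc (1 - s0) 1, g.arc t s ∉ closure F.1 := by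
      intro s hs
      refine hb ⟨?_, by linarith [hs.1], hs.2⟩
      rw [Metric.mem_ball, Real.dist_eq, abs_lt]
      constructor <;> linarith [hs.1, hs.2]
    have hsub : Set.Icc 0 (1 - s0) ⊆ Set.Icc (0:ℝ) 1 := Set.Icc_subset_Icc le_rfl (by linarith)
    have hT := arcLike_arc (g.arc t) 0 (1 - s0) ((g.cont t).mono hsub) ((g.inj t).mono hsub)
    have hj := janis (g.compact_D {t}ᶜ) isCompact_empty (Set.disjoint_empty _) hT (g.pos (g.src t)) 0
      (by
        rintro z ⟨hz1, s, hs, rfl⟩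
        rcases D_inter_img (g := g) (A := {t}ᶜ) (t := t) (by simp) ⟨hz1, s, hsub hs, rfl⟩ with h | h
        · exact h
        · rw [Set.mem_singleton_iff, ← g.fin] at h
          have := g.inj t (hsub hs) (by simp) h
          linarith [hs.2])
      (by simp) (x := x) (y := g.arc t (1 - s0 / 2)) (fun h => hxt (Set.image_mono hsub h))
      (by
        rintro ⟨s, hs, h⟩
        have := g.inj t (hsub hs) ⟨by linarith, by linarith⟩ h
        linarith [hs.2])
      (by
        rw [Set.union_empty]
        exact hxm.symm.trans (arc_joined_Ioo (by simp) half_mem ⟨by linarith, by linarith⟩))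
    rw [Set.union_empty] at hj
    obtain ⟨q, ⟨s, hs, rfl⟩, hq2, hq3⟩ := first_hit ((g.compact_D {t}ᶜ).union hT.1).isClosed.isOpen_compl
      (arcLike_img t).1.isClosed hj hxt ⟨1 - s0/2, ⟨by linarith, by linarith⟩, rfl⟩
    have hss : 1 - s0 < s := by
      by_contra hh
      exact hq2 (Or.inr ⟨s, ⟨hs.1, not_lt.1 hh⟩, rfl⟩)
    apply hno s ⟨hss.le, hs.2⟩
    refine closure_mono ?_ hq3
    intro y hy
    apply hFeq y
    exact JoinedIn.mono hy (Set.sdiff_subset_sdiff_left (Set.compl_subset_compl.2 Set.subset_union_left))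

variable (g) in
def star (v : V) : Set E := {e | g.src e = v ∨ g.tgt e = v}

theorem I5 (v : V) {e e' : E} (he : e ∈ g.star v) (he' : e' ∈ g.star v) :
    g.DC (g.star v) (l e) (l e') := by
  have hv : g.pos v ∉ g.D (g.star v)ᶜ := by
    intro h
    obtain ⟨e, he, hz⟩ := g.mem_D.1 h
    rcases g.avoid e v hz with h | h
    · exact he (Or.inl h.symm)
    · exact he (Or.inr h.symm)
  have key : ∀ e ∈ g.star v, ∃ x ∈ (l (g := g) e).1, JoinedIn (g.D (g.star v)ᶜ)ᶜ (g.pos v) x := by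
    intro e he
    obtain ⟨x, hx, hxm⟩ := l_InW (g := g) e
    refine ⟨x, hx, JoinedIn.trans ?_ (hxm.mono (Set.compl_subset_compl.2 (g.D_mono ?_)))⟩
    · have hIcc : ∀ s ∈ Set.Icc (0:ℝ) 1, (s = 0 → g.src e = v) → (s = 1 → g.tgt e = v) →
          g.arc e s ∈ (g.D (g.star v)ᶜ)ᶜ := by
        intro s hs h0 h1
        by_cases hs0 : s = 0
        · subst hs0; rw [g.start, h0 rfl]; exact hv
        by_cases hs1 : s = 1
        · subst hs1; rw [g.fin, h1 rfl]; exact hv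
        · exact arc_not_D (by simpa using he) ⟨lt_of_le_of_ne hs.1 (Ne.symm hs0), lt_of_le_of_ne hs.2 hs1⟩
      rcases he with he | he
      · rw [← he, ← g.start]
        rw [← he] at hIcc
        apply arc_joined e (by simp) ⟨by norm_num, by norm_num⟩
        intro s hs
        rw [Set.uIcc_of_le (by norm_num)] at hs
        exact hIcc s ⟨hs.1, by linarith [hs.2]⟩ (fun _ => rfl) (fun h => by linarith [hs.2])
      · rw [← he, ← g.fin]
        rw [← he] at hIcc
        apply arc_joined e (by simp) ⟨by norm_num, by norm_num⟩
        intro s hs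
        rw [Set.uIcc_of_ge (by norm_num)] at hs
        exact hIcc s ⟨by linarith [hs.1], hs.2⟩ (fun h => by linarith [hs.1]) (fun _ => rfl)
    · intro e'' h1 h2
      rw [Set.mem_singleton_iff.1 h2] at h1
      exact h1 he
  obtain ⟨x, hx, h1⟩ := key e he
  obtain ⟨y, hy, h2⟩ := key e' he'
  apply DC_of_SC
  exact ⟨x, hx, y, hy, h1.symm.trans h2⟩

end PG


set_option linter.unusedSectionVars false

section acyc
variable {E X : Type} {s t : E → X}

theorem Cn.split {A : Set E} {e : E} {x y : X} (h : Cn s t (A ∪ {e}) x y) :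
    Cn s t A x y ∨ (Cn s t A x (s e) ∧ Cn s t A (t e) y) ∨ (Cn s t A x (t e) ∧ Cn s t A (s e) y) := by
  refine (Cn.inv (P := fun y => Cn s t A x y ∨ (Cn s t A x (s e) ∧ Cn s t A (t e) y) ∨
    (Cn s t A x (t e) ∧ Cn s t A (s e) y)) ?_ h).1 (Or.inl (Cn.refl x))
  rintro f (hf | rfl)
  · have h1 : Cn s t A (s f) (t f) := Cn.edge hf
    have h2 := h1.symm
    constructor
    · rintro (h | ⟨h, h'⟩ | ⟨h, h'⟩)
      · exact Or.inl (h.trans h1)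
      · exact Or.inr (Or.inl ⟨h, h'.trans h1⟩)
      · exact Or.inr (Or.inr ⟨h, h'.trans h1⟩)
    · rintro (h | ⟨h, h'⟩ | ⟨h, h'⟩)
      · exact Or.inl (h.trans h2)
      · exact Or.inr (Or.inl ⟨h, h'.trans h2⟩)
      · exact Or.inr (Or.inr ⟨h, h'.trans h2⟩)
  · constructor
    · rintro (h | ⟨h, h'⟩ | ⟨h, h'⟩)
      · exact Or.inr (Or.inl ⟨h, Cn.refl _⟩)
      · exact Or.inr (Or.inl ⟨h, Cn.refl _⟩)
      · exact Or.inl h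
    · rintro (h | ⟨h, h'⟩ | ⟨h, h'⟩)
      · exact Or.inr (Or.inr ⟨h, Cn.refl _⟩)
      · exact Or.inl h
      · exact Or.inr (Or.inr ⟨h, Cn.refl _⟩)

theorem Cn.empty {x y : X} (h : Cn s t ∅ x y) : x = y :=
  h.lift eq_equivalence (fun _ he => he.elim)

theorem Cn.single {A : Set E} {f : E} (hA : A ⊆ {f}) {x y : X} (h : Cn s t A x y) (hne : x ≠ y) :
    s(x, y) = s(s f, t f) := by
  have h1 : Cn s t (∅ ∪ {f}) x y := h.mono (by simpa using hA)
  rcases h1.split with h | ⟨h, h'⟩ | ⟨h, h'⟩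
  · exact (hne h.empty).elim
  · rw [h.empty, h'.empty]
  · rw [h.empty, ← h'.empty, Sym2.eq_swap]

variable (s t) in
def Acyc (S : Set E) : Prop := ∀ e ∈ S, ¬ Cn s t (S \ {e}) (s e) (t e)

theorem Acyc.mono {S T : Set E} (h : Acyc s t T) (hs : S ⊆ T) : Acyc s t S := fun e he hc =>
  h e (hs he) (hc.mono (Set.sdiff_subset_sdiff_left hs))

theorem Acyc.add_edge {S : Set E} (h : Acyc s t S) {y : E} (hy : ¬ Cn s t S (s y) (t y)) :
    Acyc s t (S ∪ {y}) := by
  rintro f (hf | rfl) hc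
  · have hne : y ≠ f := by rintro rfl; exact hy (Cn.edge hf)
    have hsub : (S ∪ {y}) \ {f} ⊆ (S \ {f}) ∪ {y} := by
      rintro a ⟨ha | ha, hb⟩
      · exact Or.inl ⟨ha, hb⟩
      · exact Or.inr ha
    have hm : S \ {f} ⊆ S := Set.sdiff_subset
    have hf' : Cn s t S (s f) (t f) := Cn.edge hf
    rcases (hc.mono hsub).split with h1 | ⟨h1, h2⟩ | ⟨h1, h2⟩
    · exact h f hf h1
    · exact hy (((h1.mono hm).symm.trans hf').trans (h2.mono hm).symm)
    · exact hy (((h2.mono hm).trans hf'.symm).trans (h1.mono hm))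
  · apply hy
    apply hc.mono
    rintro a ⟨ha | ha, hb⟩
    · exact ha
    · exact (hb ha).elim

/-- extension of an acyclic set to a spanning one -/
theorem Acyc.extend [Finite E] {S₀ Z : Set E} (h : Acyc s t S₀) (h0 : S₀ ⊆ Z) :
    ∃ S, S₀ ⊆ S ∧ S ⊆ Z ∧ Acyc s t S ∧ ∀ y ∈ Z, Cn s t S (s y) (t y) := by
  obtain ⟨S, hS, hmax⟩ := (Set.toFinite {S | S₀ ⊆ S ∧ S ⊆ Z ∧ Acyc s t S}).exists_le_maximal
    (a := S₀) ⟨le_rfl, h0, h⟩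
  refine ⟨S, hmax.1.1, hmax.1.2.1, hmax.1.2.2, fun y hy => ?_⟩
  by_contra hc
  have h1 := hmax.2 (y := S ∪ {y}) ⟨hmax.1.1.trans Set.subset_union_left,
    Set.union_subset hmax.1.2.1 (by simpa using hy), hmax.1.2.2.add_edge hc⟩ Set.subset_union_left
  exact hc (Cn.edge (h1 (Or.inr rfl)))

theorem Acyc.card_le [Finite X] [Finite E] {S : Set E} (h : Acyc s t S) :
    S.ncard ≤ Nat.card X := by
  suffices H : ∀ S : Set E, S.Finite → Acyc s t S →
      Nat.card (Quot (Cn s t S)) + S.ncard ≤ Nat.card X by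
    have := H S (Set.toFinite S) h; omega
  intro S hS
  induction S, hS using Set.Finite.induction_on with
  | empty =>
    intro _
    simp only [Set.ncard_empty, add_zero]
    exact Nat.card_le_card_of_surjective (Quot.mk _) Quot.mk_surjective
  | @insert a S ha hS ih =>
    intro hac
    have h1 := ih (hac.mono (Set.subset_insert a S))
    rw [Set.ncard_insert_of_notMem ha hS]
    have hm : ∀ x y, Cn s t S x y → Cn s t (insert a S) x y := fun x y h => h.mono (Set.subset_insert a S)
    let φ : Quot (Cn s t S) → Quot (Cn s t (insert a S)) := Quot.map id hm
    have hsurj : Function.Surjective φ := by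
      rintro ⟨x⟩; exact ⟨Quot.mk _ x, rfl⟩
    have hninj : ¬ Function.Injective φ := by
      intro hi
      have e1 : φ (Quot.mk _ (s a)) = φ (Quot.mk _ (t a)) :=
        Quot.sound (Cn.edge (Set.mem_insert a S))
      have e2 := hi e1
      have e3 := (Quot.eqvGen_exact e2)
      have e4 : Cn s t S (s a) (t a) := ((Cn.equiv s t S).eqvGen_iff).1 e3
      have := hac a (Set.mem_insert a S)
      apply this
      apply e4.mono
      intro b hb
      exact ⟨Or.inr hb, by rintro rfl; exact ha hb⟩
    have : Nat.card (Quot (Cn s t (insert a S))) < Nat.card (Quot (Cn s t S)) := by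
      have := Fintype.ofFinite (Quot (Cn s t (insert a S)))
      have := Fintype.ofFinite (Quot (Cn s t S))
      rw [Nat.card_eq_fintype_card, Nat.card_eq_fintype_card]
      exact Fintype.card_lt_of_surjective_not_injective φ hsurj hninj
    omega

end acyc

structure CG (V E Φ : Type) [Fintype V] [Fintype E] [Fintype Φ] where
  src : E → V
  tgt : E → V
  l : E → Φ
  r : E → Φ
  ne : ∀ e, src e ≠ tgt e
  simple : ∀ e e', s(src e, tgt e) = s(src e', tgt e') → e = e'
  vert : Φ → Finset V
  vert_card : ∀ F, (vert F).card ≤ 3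
  sl : ∀ e, src e ∈ vert (l e)
  sr : ∀ e, src e ∈ vert (r e)
  tl : ∀ e, tgt e ∈ vert (l e)
  tr : ∀ e, tgt e ∈ vert (r e)
  I1 : ∀ (A : Set E) (t : E), t ∉ A → ¬ Cn src tgt A (src t) (tgt t) → Cn l r (A ∪ {t})ᶜ (l t) (r t)
  I2 : ∀ (A : Set E) (t : E), t ∉ A → Cn src tgt A (src t) (tgt t) → ¬ Cn l r (A ∪ {t})ᶜ (l t) (r t)
  all : ∀ F F', Cn l r Set.univ F F'

namespace CG
open Classical

variable {V E Φ : Type} [Fintype V] [Fintype E] [Fintype Φ] (g : CG V E Φ)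

abbrev PC (A : Set E) : V → V → Prop := Cn g.src g.tgt A
abbrev DC (A : Set E) : Φ → Φ → Prop := Cn g.l g.r A

noncomputable def inc (F : Φ) : Finset E := Finset.univ.filter (fun e => g.l e = F ∨ g.r e = F)

theorem mem_inc {F : Φ} {e : E} : e ∈ g.inc F ↔ g.l e = F ∨ g.r e = F := by simp [inc]

theorem inc_src {F : Φ} {e : E} (h : e ∈ g.inc F) : g.src e ∈ g.vert F ∧ g.tgt e ∈ g.vert F := by
  rcases g.mem_inc.1 h with rfl | rfl
  · exact ⟨g.sl e, g.tl e⟩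
  · exact ⟨g.sr e, g.tr e⟩

theorem inc_image (F : Φ) : (g.inc F).image (fun e => s(g.src e, g.tgt e)) ⊆
    (g.vert F).offDiag.image Sym2.mk.uncurry := by
  intro z hz
  obtain ⟨e, he, rfl⟩ := Finset.mem_image.1 hz
  have := g.inc_src he
  exact Finset.mem_image.2 ⟨(g.src e, g.tgt e), Finset.mem_offDiag.2 ⟨this.1, this.2, g.ne e⟩, rfl⟩

theorem inc_image_card (F : Φ) : ((g.inc F).image (fun e => s(g.src e, g.tgt e))).card = (g.inc F).card :=
  Finset.card_image_of_injective _ (fun e e' h => g.simple e e' h)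

theorem off_card (F : Φ) : ((g.vert F).offDiag.image Sym2.mk.uncurry).card ≤ 3 := by
  have h := Sym2.card_image_offDiag (g.vert F)
  have h2 := g.vert_card F
  have h3 : ((g.vert F).card).choose 2 ≤ 3 := by
    have := Nat.choose_le_choose 2 h2
    simpa [Nat.choose] using this
  refine le_trans (le_of_eq ?_) h3
  convert h

theorem inc_card (F : Φ) : (g.inc F).card ≤ 3 := by
  rw [← g.inc_image_card F]
  exact (Finset.card_le_card (g.inc_image F)).trans (g.off_card F)

theorem cycle_edge {F F' : Φ} (hne : F ≠ F') : ∃ t ∈ g.inc F,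
    g.PC ((g.inc F : Set E) \ {t}) (g.src t) (g.tgt t) := by
  by_contra hcon
  push Not at hcon
  have key : ∀ e, g.DC ((g.inc F : Set E)ᶜ) (g.l e) (g.r e) := by
    intro e
    by_cases he : e ∈ g.inc F
    · have := g.I1 ((g.inc F : Set E) \ {e}) e (by simp) (hcon e he)
      rw [Set.sdiff_union_self, Set.union_eq_self_of_subset_right (by simpa using he)] at this
      exact this
    · exact Cn.edge (by simpa using he)
  have h1 : g.DC ((g.inc F : Set E)ᶜ) F F' := (g.all F F').of_edges (fun e _ => key e)
  have := h1.inv (P := fun G => G = F) (by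
    intro e he
    simp only [Set.mem_compl_iff, Finset.mem_coe, mem_inc, not_or] at he
    simp [he])
  exact hne (this.1 rfl).symm

theorem inc_card_eq {F F' : Φ} (hne : F ≠ F') : (g.inc F).card = 3 := by
  obtain ⟨t, ht, hp⟩ := g.cycle_edge hne
  have h1 := g.inc_card F
  by_contra hcon
  have h2 : ((g.inc F).erase t).card ≤ 1 := by rw [Finset.card_erase_of_mem ht]; omega
  by_cases h0 : (g.inc F).erase t = ∅
  · have : ((g.inc F : Set E) \ {t}) ⊆ ∅ := by
      intro x hx
      have : x ∈ (g.inc F).erase t := by simpa [and_comm] using hx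
      simp [h0] at this
    exact g.ne t (hp.mono this).empty
  · obtain ⟨f, hf⟩ := Finset.nonempty_iff_ne_empty.2 h0
    have h3 : ((g.inc F : Set E) \ {t}) ⊆ {f} := by
      intro x hx
      have : x ∈ (g.inc F).erase t := by simpa [and_comm] using hx
      exact Finset.card_le_one.1 h2 _ this _ hf
    have := g.simple t f (hp.single h3 (g.ne t))
    simp [this] at hf

theorem adj {F F' : Φ} (hne : F ≠ F') {a b : V} (ha : a ∈ g.vert F) (hb : b ∈ g.vert F)
    (hab : a ≠ b) : ∃ e ∈ g.inc F, s(g.src e, g.tgt e) = s(a, b) := by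
  have h1 := Finset.eq_of_subset_of_card_le (g.inc_image F) (by
    rw [inc_image_card, g.inc_card_eq hne]; exact g.off_card F)
  have : s(a, b) ∈ (g.vert F).offDiag.image Sym2.mk.uncurry :=
    Finset.mem_image.2 ⟨(a, b), Finset.mem_offDiag.2 ⟨ha, hb, hab⟩, rfl⟩
  rw [← h1] at this
  simpa using this

theorem sum_inc_le (R : Finset Φ) (T : Finset E) :
    ∑ F ∈ R, (T ∩ g.inc F).card ≤ 2 * T.card := by
  have h1 : ∀ F ∈ R, (T ∩ g.inc F).card ≤
      (T.filter (fun e => g.l e = F)).card + (T.filter (fun e => g.r e = F)).card := by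
    intro F _
    refine le_trans (Finset.card_le_card ?_) (Finset.card_union_le _ _)
    intro e he
    simp only [Finset.mem_inter, mem_inc, Finset.mem_union, Finset.mem_filter] at *
    tauto
  refine (Finset.sum_le_sum h1).trans ?_
  rw [Finset.sum_add_distrib, two_mul]
  refine Nat.add_le_add ?_ ?_
  · rw [Finset.card_eq_sum_card_fiberwise (f := g.l) (t := Finset.univ) (by simp)]
    exact Finset.sum_le_sum_of_subset (Finset.subset_univ R)
  · rw [Finset.card_eq_sum_card_fiberwise (f := g.r) (t := Finset.univ) (by simp)]
    exact Finset.sum_le_sum_of_subset (Finset.subset_univ R)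

theorem card_faces (g : CG V E Φ) {F F' : Φ} (hne : F ≠ F') : Fintype.card Φ ≤ 2 * Fintype.card V := by
  have hall : ∀ G : Φ, (g.inc G).card = 3 := by
    intro G
    by_cases h : G = F
    · exact g.inc_card_eq (F' := F') (by rw [h]; exact hne)
    · exact g.inc_card_eq h
  obtain ⟨T, -, -, hT, hsp⟩ := Acyc.extend (s := g.src) (t := g.tgt) (S₀ := ∅) (Z := Set.univ)
    (fun e he => he.elim) (Set.empty_subset _)
  have hT2 : Acyc g.l g.r Tᶜ := by
    intro e he
    have := g.I2 T e he (hsp e trivial)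
    rwa [Set.compl_union] at this
  have h1 := hT.card_le
  have h2 := hT2.card_le
  have h3 := g.sum_inc_le Finset.univ Finset.univ
  simp only [Finset.univ_inter, hall, Finset.sum_const, Finset.card_univ, smul_eq_mul] at h3
  have h4 := Set.ncard_add_ncard_compl T
  simp only [Nat.card_eq_fintype_card] at *
  omega

end CG


set_option linter.unusedSectionVars false

namespace CG
open Classical

variable {V E Φ : Type} [Fintype V] [Fintype E] [Fintype Φ] (g : CG V E Φ)

def J (e : E) (a b : V) : Prop := (g.src e = a ∧ g.tgt e = b) ∨ (g.src e = b ∧ g.tgt e = a)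

noncomputable def rep {X : Type} (r : X → X → Prop) (v : X) : X := (Quot.mk r v).out

theorem rep_congr {X : Type} {r : X → X → Prop} {u v : X} (h : r u v) : rep r u = rep r v := by
  unfold rep; rw [Quot.sound h]

theorem rep_rel {X : Type} {r : X → X → Prop} (hr : Equivalence r) (v : X) : r v (rep r v) := by
  have h : Quot.mk r (rep r v) = Quot.mk r v := Quot.out_eq _
  exact hr.symm (hr.eqvGen_iff.1 (Quot.eqvGen_exact h))

def Reach (X : Set E) : ℕ → V → Prop
  | 0, v => g.PC X (rep (g.PC Set.univ) v) v
  | k + 1, v => ∃ u w e, e ∉ X ∧ Reach X k u ∧ g.J e u w ∧ g.PC X w v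

theorem Reach.trans {g : CG V E Φ} {X : Set E} {k : ℕ} {u v : V} (h : g.Reach X k u) (h' : g.PC X u v) :
    g.Reach X k v := by
  cases k with
  | zero =>
    have : rep (g.PC Set.univ) u = rep (g.PC Set.univ) v := rep_congr (h'.mono (Set.subset_univ _))
    unfold Reach at h ⊢
    rw [← this]; exact h.trans h'
  | succ k =>
    obtain ⟨a, b, e, h1, h2, h3, h4⟩ := h
    exact ⟨a, b, e, h1, h2, h3, h4.trans h'⟩

theorem exists_lev (X : Set E) : ∃ lam : V → ℕ,
    (∀ u v, g.PC X u v → lam u = lam v) ∧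
    (∀ e u v, g.J e u v → lam u ≤ lam v + 1) ∧
    (∀ v, 0 < lam v → ∃ w u e, g.PC X v w ∧ e ∉ X ∧ g.J e w u ∧ lam u + 1 = lam v) ∧
    (∀ u v, lam u = 0 → lam v = 0 → g.PC Set.univ u v → g.PC X u v) := by
  have hJs : ∀ e u v, g.J e u v → g.J e v u := fun e u v h => h.symm
  have step : ∀ k e u v, g.J e u v → g.Reach X k u → ∃ k', k' ≤ k + 1 ∧ g.Reach X k' v := by
    intro k e u v hj hr
    by_cases he : e ∈ X
    · refine ⟨k, by omega, hr.trans ?_⟩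
      rcases hj with ⟨rfl, rfl⟩ | ⟨rfl, rfl⟩
      · exact Cn.edge he
      · exact (Cn.edge he).symm
    · exact ⟨k + 1, le_rfl, u, v, e, he, hr, hj, Cn.refl _⟩
  have hex : ∀ v, ∃ k, g.Reach X k v := by
    intro v
    have h1 : g.PC Set.univ v (rep (g.PC Set.univ) v) := rep_rel (Cn.equiv _ _ _) v
    refine (h1.symm.inv (P := fun v => ∃ k, g.Reach X k v) ?_).1 ⟨0, ?_⟩
    · intro e _
      constructor
      · rintro ⟨k, hk⟩
        obtain ⟨k', _, h⟩ := step k e _ _ (Or.inl ⟨rfl, rfl⟩) hk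
        exact ⟨k', h⟩
      · rintro ⟨k, hk⟩
        obtain ⟨k', _, h⟩ := step k e _ _ (Or.inr ⟨rfl, rfl⟩) hk
        exact ⟨k', h⟩
    · unfold Reach
      rw [← rep_congr h1]; exact Cn.refl _
  let lam : V → ℕ := fun v => Nat.find (hex v)
  have hs : ∀ v, g.Reach X (lam v) v := fun v => Nat.find_spec (hex v)
  have hm : ∀ v k, g.Reach X k v → lam v ≤ k := fun v k h => Nat.find_min' (hex v) h
  have h1 : ∀ u v, g.PC X u v → lam u = lam v := fun u v h =>
    le_antisymm (hm _ _ ((hs v).trans h.symm)) (hm _ _ ((hs u).trans h))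
  have h2 : ∀ e u v, g.J e u v → lam u ≤ lam v + 1 := by
    intro e u v hj
    obtain ⟨k', hk, h⟩ := step _ e v u (hJs _ _ _ hj) (hs v)
    exact (hm _ _ h).trans hk
  refine ⟨lam, h1, h2, ?_, ?_⟩
  · intro v hv
    obtain ⟨j, hj⟩ : ∃ j, lam v = j + 1 := ⟨lam v - 1, by omega⟩
    have := hs v
    rw [hj] at this
    obtain ⟨u, w, e, he, hr, hJ, hp⟩ := this
    refine ⟨w, u, e, hp.symm, he, hJs _ _ _ hJ, ?_⟩
    have a1 := hm _ _ hr
    have a2 := h2 e w u (hJs _ _ _ hJ)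
    have a3 := h1 _ _ hp
    omega
  · intro u v hu hv huv
    have a1 := hs u
    have a2 := hs v
    rw [hu] at a1
    rw [hv] at a2
    unfold Reach at a1 a2
    rw [rep_congr huv] at a1
    exact a1.symm.trans a2

structure Tre (X : Set E) where
  lam : V → ℕ
  te : V → E
  par : V → V
  w : V → V
  lx : ∀ u v, g.PC X u v → lam u = lam v
  root : ∀ u v, lam u = 0 → lam v = 0 → g.PC Set.univ u v → g.PC X u v
  pw : ∀ v, 0 < lam v → g.PC X v (w v)
  tX : ∀ v, 0 < lam v → te v ∉ X
  tj : ∀ v, 0 < lam v → g.J (te v) (w v) (par v)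
  lp : ∀ v, 0 < lam v → lam (par v) + 1 = lam v
  cte : ∀ u v, g.PC X u v → te u = te v
  cpar : ∀ u v, g.PC X u v → par u = par v

theorem exists_tre [Nonempty E] {X : Set E} (lam : V → ℕ)
    (h1 : ∀ u v, g.PC X u v → lam u = lam v)
    (h3 : ∀ v, 0 < lam v → ∃ w u e, g.PC X v w ∧ e ∉ X ∧ g.J e w u ∧ lam u + 1 = lam v)
    (h4 : ∀ u v, lam u = 0 → lam v = 0 → g.PC Set.univ u v → g.PC X u v) :
    ∃ T : g.Tre X, T.lam = lam := by
  have : ∀ v, ∃ w u e, 0 < lam v → (g.PC X v w ∧ e ∉ X ∧ g.J e w u ∧ lam u + 1 = lam v) := by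
    intro v
    by_cases hv : 0 < lam v
    · obtain ⟨w, u, e, h⟩ := h3 v hv
      exact ⟨w, u, e, fun _ => h⟩
    · exact ⟨v, v, Classical.arbitrary E, fun h => (hv h).elim⟩
  choose w u e h using this
  have hr : ∀ v, g.PC X v (rep (g.PC X) v) := fun v => rep_rel (Cn.equiv _ _ _) v
  have hrl : ∀ v, lam v = lam (rep (g.PC X) v) := fun v => h1 _ _ (hr v)
  refine ⟨⟨lam, fun v => e (rep (g.PC X) v), fun v => u (rep (g.PC X) v), fun v => w (rep (g.PC X) v),
    h1, h4, ?_, ?_, ?_, ?_, ?_, ?_⟩, rfl⟩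
  · intro v hv
    exact (hr v).trans (h _ (by rwa [← hrl])).1
  · intro v hv
    exact (h _ (by rwa [← hrl])).2.1
  · intro v hv
    exact (h _ (by rwa [← hrl])).2.2.1
  · intro v hv
    rw [hrl v]
    exact (h _ (by rwa [← hrl])).2.2.2
  · intro a b hab
    simp only [rep_congr hab]
  · intro a b hab
    simp only [rep_congr hab]

namespace Tre
variable {g} {X : Set E} (T : g.Tre X)

inductive Anc (T : g.Tre X) (c : V) : V → Prop
  | base (v : V) : g.PC X c v → Anc T c v
  | step (v : V) : 0 < T.lam v → Anc T c (T.par v) → Anc T c v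

theorem Anc.le {T : g.Tre X} {c v : V} (h : T.Anc c v) : T.lam c ≤ T.lam v := by
  induction h with
  | base v h => exact (T.lx _ _ h).le
  | step v h _ ih => have := T.lp v h; omega

theorem Anc.tr {T : g.Tre X} {c u v : V} (h : T.Anc c u) (h' : g.PC X u v) : T.Anc c v := by
  cases h with
  | base _ h => exact .base _ (h.trans h')
  | step _ h1 h2 =>
    refine .step _ (by rwa [← T.lx _ _ h']) ?_
    rwa [← T.cpar _ _ h']

theorem anc_par {c v : V} (hv : 0 < T.lam v) (hc : ¬ g.PC X c v) : T.Anc c v ↔ T.Anc c (T.par v) := by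
  constructor
  · intro h
    cases h with
    | base _ h => exact (hc h).elim
    | step _ _ h => exact h
  · exact .step _ hv

theorem anc_uniq {c c' v : V} (h : T.Anc c v) (h' : T.Anc c' v) (hl : T.lam c = T.lam c') :
    g.PC X c c' := by
  induction h with
  | base v h =>
    cases h' with
    | base _ h1 => exact h.trans h1.symm
    | step _ h1 h2 =>
      have := h2.le
      have := T.lp v h1
      have := T.lx _ _ h
      omega
  | step v h1 h2 ih =>
    cases h' with
    | base _ h3 =>
      have := h2.le
      have := T.lp v h1
      have := T.lx _ _ h3
      omega
    | step _ _ h4 => exact ih h4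

def TT : Set E := {e | ∃ v, 0 < T.lam v ∧ T.te v = e}

theorem te_inj {c v : V} (hc : 0 < T.lam c) (hv : 0 < T.lam v) (h : T.te c = T.te v) : g.PC X c v := by
  have h1 := T.tj c hc
  have h2 := T.tj v hv
  have e1 := T.lp c hc
  have e2 := T.lp v hv
  have f1 := T.lx _ _ (T.pw c hc)
  have f2 := T.lx _ _ (T.pw v hv)
  have : T.w c = T.w v := by
    rw [h] at h1
    rcases h1 with ⟨a, b⟩ | ⟨a, b⟩ <;> rcases h2 with ⟨a', b'⟩ | ⟨a', b'⟩
    · rw [← a, a']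
    · have p1 : T.w c = T.par v := by rw [← a, a']
      have p2 : T.w v = T.par c := by rw [← b, b']
      rw [p1] at f1; rw [p2] at f2; omega
    · have p1 : T.par c = T.w v := by rw [← a, a']
      have p2 : T.par v = T.w c := by rw [← b, b']
      rw [← p1] at f2; rw [← p2] at f1; omega
    · rw [← b, b']
  have h3 := T.pw c hc
  rw [this] at h3
  exact h3.trans (T.pw v hv).symm

theorem span {u v : V} (h : g.PC Set.univ u v) : g.PC (X ∪ T.TT) u v := by
  have key : ∀ n v, T.lam v = n → ∃ z, T.lam z = 0 ∧ g.PC (X ∪ T.TT) v z := by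
    intro n
    induction n with
    | zero => exact fun v hv => ⟨v, hv, Cn.refl _⟩
    | succ n ih =>
      intro v hv
      have h0 : 0 < T.lam v := by omega
      obtain ⟨z, hz, hz'⟩ := ih (T.par v) (by have := T.lp v h0; omega)
      refine ⟨z, hz, (((T.pw v h0).mono Set.subset_union_left).trans ?_).trans hz'⟩
      have : g.PC (X ∪ T.TT) (g.src (T.te v)) (g.tgt (T.te v)) := Cn.edge (Or.inr ⟨v, h0, rfl⟩)
      rcases T.tj v h0 with ⟨a, b⟩ | ⟨a, b⟩
      · rwa [a, b] at this
      · rw [a, b] at this; exact this.symm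
  obtain ⟨z, hz, h1⟩ := key _ u rfl
  obtain ⟨z', hz', h2⟩ := key _ v rfl
  refine (h1.trans ?_).trans h2.symm
  refine (T.root z z' hz hz' ?_).mono Set.subset_union_left
  exact ((h1.mono (Set.subset_univ _)).symm.trans h).trans (h2.mono (Set.subset_univ _))

def S0 : Set E := (X ∪ T.TT)ᶜ

theorem S0_acyc : Acyc g.l g.r T.S0 := by
  intro e he
  have := g.I2 (X ∪ T.TT) e he (T.span (Cn.edge trivial))
  rwa [Set.compl_union] at this

theorem not_pc {c : V} (hc : 0 < T.lam c) {B : Set E}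
    (hB : ∀ e ∈ B, e ∈ X ∨ (e ∈ T.TT ∧ e ≠ T.te c) ∨ (T.Anc c (g.src e) ↔ T.Anc c (g.tgt e))) :
    ¬ g.PC B (g.src (T.te c)) (g.tgt (T.te c)) := by
  have hinv : ∀ e ∈ B, T.Anc c (g.src e) ↔ T.Anc c (g.tgt e) := by
    intro e he
    rcases hB e he with h | ⟨⟨v, hv, rfl⟩, hne⟩ | h
    · have : g.PC X (g.src e) (g.tgt e) := Cn.edge h
      exact ⟨fun h => h.tr this, fun h => h.tr this.symm⟩
    · have h1 : ¬ g.PC X c v := fun h => hne (T.cte _ _ h).symm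
      have h2 := T.anc_par hv h1
      have h3 : T.Anc c v ↔ T.Anc c (T.w v) := ⟨fun h => h.tr (T.pw v hv), fun h => h.tr (T.pw v hv).symm⟩
      rw [h3] at h2
      rcases T.tj v hv with ⟨a, b⟩ | ⟨a, b⟩
      · rw [a, b]; exact h2
      · rw [a, b]; exact h2.symm
    · exact h
  intro hp
  have h1 := hp.inv hinv
  have h2 : T.Anc c (T.w c) := .base _ (T.pw c hc)
  have h3 : ¬ T.Anc c (T.par c) := fun h => by have := h.le; have := T.lp c hc; omega
  rcases T.tj c hc with ⟨a, b⟩ | ⟨a, b⟩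
  · rw [a, b] at h1; exact h3 (h1.1 h2)
  · rw [a, b] at h1; exact h3 (h1.2 h2)

theorem conn_T {t : E} (ht : t ∈ T.TT) : g.DC T.S0 (g.l t) (g.r t) := by
  obtain ⟨c, hc, rfl⟩ := ht
  have h := g.I1 (X ∪ (T.TT \ {T.te c})) (T.te c) (by
    rintro (h | h)
    · exact T.tX c hc h
    · exact h.2 rfl) (T.not_pc hc (by
      rintro e (h | h)
      · exact Or.inl h
      · exact Or.inr (Or.inl h)))
  refine h.mono ?_
  intro x hx
  simp only [S0, Set.mem_compl_iff, Set.mem_union, Set.mem_sdiff, Set.mem_singleton_iff] at hx ⊢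
  tauto

theorem conn_T' {c : V} (hc : 0 < T.lam c) {e : E} (he : e ∈ T.S0)
    (h : T.Anc c (g.src e) ↔ T.Anc c (g.tgt e)) :
    g.DC (T.S0 \ {e}) (g.l (T.te c)) (g.r (T.te c)) := by
  have hne : T.te c ≠ e := by
    rintro rfl
    exact he (Or.inr ⟨c, hc, rfl⟩)
  have h := g.I1 (X ∪ (T.TT \ {T.te c}) ∪ {e}) (T.te c) (by
    rintro ((h | h) | h)
    · exact T.tX c hc h
    · exact h.2 rfl
    · exact hne h) (T.not_pc hc (by
      rintro f ((h | h) | rfl)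
      · exact Or.inl h
      · exact Or.inr (Or.inl h)
      · exact Or.inr (Or.inr h)))
  refine h.mono ?_
  intro x hx
  simp only [S0, Set.mem_compl_iff, Set.mem_union, Set.mem_sdiff, Set.mem_singleton_iff] at hx ⊢
  tauto

end Tre
end CG


set_option linter.unusedSectionVars false

theorem nat_chunk {k i m : ℕ} (hi : i < k) (h : (m + 1) % k ≠ i) :
    (m + (k - i)) / k = (m + 1 + (k - i)) / k := by
  have h1 : m + 1 + (k - i) = (m + (k - i)) + 1 := by omega
  rw [h1, Nat.succ_div, if_neg, add_zero]
  rintro ⟨c, hc⟩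
  apply h
  have hc0 : c ≠ 0 := by rintro rfl; omega
  obtain ⟨d, rfl⟩ := Nat.exists_eq_succ_of_ne_zero hc0
  have : m + 1 = i + k * d := by
    have : k * (d + 1) = k * d + k := by ring
    simp only [Nat.succ_eq_add_one] at hc
    omega
  rw [this, Nat.add_mul_mod_self_left, Nat.mod_eq_of_lt hi]

namespace CG
open Classical

variable {V E Φ : Type} [Fintype V] [Fintype E] [Fintype Φ] (g : CG V E Φ)

noncomputable def Y (R : Finset Φ) : Finset E := Finset.univ.filter (fun e => g.l e ∈ R ∧ g.r e ∈ R)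

theorem mem_Y {R : Finset Φ} {e : E} : e ∈ g.Y R ↔ g.l e ∈ R ∧ g.r e ∈ R := by simp [Y]

theorem Y_card (R : Finset Φ) : (g.Y R).card ≤ 3 * R.card := by
  rw [Finset.card_eq_sum_card_fiberwise (f := g.l) (t := R) (by
    intro e he; exact (g.mem_Y.1 he).1)]
  rw [mul_comm, ← smul_eq_mul, ← Finset.sum_const]
  refine Finset.sum_le_sum fun F _ => le_trans (Finset.card_le_card ?_) (g.inc_card F)
  intro e he
  rw [mem_inc]
  exact Or.inl (Finset.mem_filter.1 he).2

def Two : Prop := ∃ F F' : Φ, F ≠ F'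

theorem inc3 (h2 : Two (Φ := Φ)) (F : Φ) : (g.inc F).card = 3 := by
  obtain ⟨A, B, h⟩ := h2
  by_cases hF : F = A
  · exact g.inc_card_eq (F' := B) (by rwa [hF])
  · exact g.inc_card_eq hF

theorem adj2 (h2 : Two (Φ := Φ)) {F : Φ} {a b : V} (ha : a ∈ g.vert F) (hb : b ∈ g.vert F)
    (hab : a ≠ b) : ∃ e, g.J e a b := by
  have : ∃ F', F ≠ F' := by
    obtain ⟨A, B, h⟩ := h2
    by_cases hF : F = A
    · exact ⟨B, by rwa [hF]⟩
    · exact ⟨A, hF⟩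
  obtain ⟨F', hF'⟩ := this
  obtain ⟨e, -, he⟩ := g.adj hF' ha hb hab
  refine ⟨e, ?_⟩
  rcases Sym2.eq_iff.1 he with h | h
  · exact Or.inl h
  · exact Or.inr h

theorem exists_facelev (h2 : Two (Φ := Φ)) (lam : V → ℕ) (hl : ∀ e u v, g.J e u v → lam u ≤ lam v + 1) :
    ∃ ℓ : Φ → ℕ, ∀ F, (∃ v ∈ g.vert F, lam v = ℓ F) ∧ ∀ v ∈ g.vert F, ℓ F ≤ lam v ∧ lam v ≤ ℓ F + 1 := by
  have : ∀ F, ∃ ℓ, (∃ v ∈ g.vert F, lam v = ℓ) ∧ ∀ v ∈ g.vert F, ℓ ≤ lam v ∧ lam v ≤ ℓ + 1 := by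
    intro F
    have hne : (g.vert F).Nonempty := by
      have := g.inc3 h2 F
      obtain ⟨e, he⟩ := Finset.card_pos.1 (by omega : 0 < (g.inc F).card)
      exact ⟨_, (g.inc_src he).1⟩
    obtain ⟨v, hv, hmin⟩ := Finset.exists_min_image (g.vert F) lam hne
    refine ⟨lam v, ⟨v, hv, rfl⟩, fun u hu => ⟨hmin u hu, ?_⟩⟩
    by_cases huv : u = v
    · rw [huv]; omega
    · obtain ⟨e, he⟩ := g.adj2 h2 hu hv huv
      exact hl e _ _ he
  choose ℓ h using this
  exact ⟨ℓ, h⟩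

theorem stl (h2 : Two (Φ := Φ)) (R : Finset Φ) {k : ℕ} (hk : 1 ≤ k) (hR : R.card ≤ k * k) :
    ∃ S : Set E, S ⊆ g.Y R ∧ Acyc g.l g.r S ∧ (∀ y ∈ g.Y R, g.DC S (g.l y) (g.r y)) ∧
      ∀ e ∈ S, ((g.Y R).filter (fun y => ¬ g.DC (S \ {e}) (g.l y) (g.r y))).card ≤ 6 * k := by
  have hE : Nonempty E := by
    obtain ⟨A, B, h⟩ := h2
    have := g.inc3 ⟨A, B, h⟩ A
    obtain ⟨e, he⟩ := Finset.card_pos.1 (by omega : 0 < (g.inc A).card)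
    exact ⟨e⟩
  obtain ⟨lam, l1, l2, l3, l4⟩ := g.exists_lev ((g.Y R : Set E)ᶜ)
  obtain ⟨ℓ, hℓ⟩ := g.exists_facelev h2 lam l2
  -- choose the residue
  obtain ⟨i, hi, hcard⟩ := Finset.exists_card_fiber_le_of_card_le_mul (s := g.Y R)
    (t := Finset.range k) (f := fun e => lam (g.src e) % k) (n := 3 * k)
    ⟨0, Finset.mem_range.2 hk⟩ (by
      have := g.Y_card R
      rw [Finset.card_range]; nlinarith)
  rw [Finset.mem_range] at hi
  set FF : Finset E := (g.Y R).filter (fun e => lam (g.src e) = lam (g.tgt e) ∧ lam (g.src e) % k = i)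
    with hFF
  have hFFc : FF.card ≤ 3 * k := by
    refine le_trans (Finset.card_le_card ?_) hcard
    intro e he
    simp only [hFF, Finset.mem_filter] at he ⊢
    exact ⟨he.1, he.2.2⟩
  set X : Set E := ((g.Y R : Set E) \ FF)ᶜ with hX
  have hXm : ∀ e, e ∈ X ↔ (e ∉ g.Y R ∨ e ∈ FF) := by
    intro e; simp only [hX, Set.mem_compl_iff, Set.mem_sdiff, Finset.mem_coe]; tauto
  have hX0 : ((g.Y R : Set E)ᶜ) ⊆ X := by
    intro e he; rw [hXm]; exact Or.inl he
  obtain ⟨T, hT⟩ := g.exists_tre (X := X) lam (by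
      intro u v huv
      refine huv.lift (r := fun a b => lam a = lam b)
        ⟨fun _ => rfl, fun h => h.symm, fun h h' => h.trans h'⟩ ?_
      intro e he
      rcases (hXm e).1 he with h | h
      · exact l1 _ _ (Cn.edge h)
      · exact (Finset.mem_filter.1 h).2.1) (by
      intro v hv
      obtain ⟨w, u, e, h1, he, hj, hl⟩ := l3 v hv
      refine ⟨w, u, e, h1.mono hX0, ?_, hj, hl⟩
      rw [hXm]
      rintro (h | h)
      · exact he h
      · have a1 := (Finset.mem_filter.1 h).2.1
        have a2 := l1 _ _ h1
        rcases hj with ⟨b1, b2⟩ | ⟨b1, b2⟩ <;> rw [b1, b2] at a1 <;> omega)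
    (fun u v hu hv h => (l4 u v hu hv h).mono hX0)
  have hS0Y : T.S0 ⊆ (g.Y R : Set E) := by
    intro e he
    by_contra h
    exact he (Or.inl (hX0 h))
  obtain ⟨S, hS0, hSY, hSa, hSs⟩ := Acyc.extend T.S0_acyc hS0Y
  -- the chunk function
  let ch : Φ → ℕ := fun F => (ℓ F + (k - i)) / k
  have hch : ∀ e, e ∉ X → ch (g.l e) = ch (g.r e) := by
    intro e he
    rw [hXm, not_or, not_not] at he
    have hff : ¬ (lam (g.src e) = lam (g.tgt e) ∧ lam (g.src e) % k = i) := fun h =>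
      he.2 (Finset.mem_filter.2 ⟨he.1, h⟩)
    have b1 := (hℓ (g.l e)).2 _ (g.sl e)
    have b2 := (hℓ (g.l e)).2 _ (g.tl e)
    have b3 := (hℓ (g.r e)).2 _ (g.sr e)
    have b4 := (hℓ (g.r e)).2 _ (g.tr e)
    show (ℓ (g.l e) + (k - i)) / k = (ℓ (g.r e) + (k - i)) / k
    by_cases hll : ℓ (g.l e) = ℓ (g.r e)
    · rw [hll]
    · have heq : lam (g.src e) = lam (g.tgt e) := by omega
      have hm : lam (g.src e) % k ≠ i := fun h => hff ⟨heq, h⟩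
      rcases Nat.lt_or_gt_of_ne hll with h | h
      · have e1 : ℓ (g.r e) = ℓ (g.l e) + 1 := by omega
        have e2 : lam (g.src e) = ℓ (g.l e) + 1 := by omega
        rw [e1]
        exact nat_chunk hi (by rwa [e2] at hm)
      · have e1 : ℓ (g.l e) = ℓ (g.r e) + 1 := by omega
        have e2 : lam (g.src e) = ℓ (g.r e) + 1 := by omega
        rw [e1]
        exact (nat_chunk hi (by rwa [e2] at hm)).symm
  have hchS : ∀ F F', g.DC T.S0 F F' → ch F = ch F' := by
    intro F F' h
    refine h.lift (r := fun a b => ch a = ch b)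
        ⟨fun _ => rfl, fun h => h.symm, fun h h' => h.trans h'⟩ ?_
    intro e he
    exact hch e (fun h => he (Or.inl h))
  have hlt : ∀ c, 0 < T.lam c → ℓ (g.l (T.te c)) + 1 = T.lam c := by
    intro c hc
    have b1 := (hℓ (g.l (T.te c))).2 _ (g.sl _)
    have b2 := (hℓ (g.l (T.te c))).2 _ (g.tl _)
    have b3 := T.lp c hc
    have b4 := T.lx _ _ (T.pw c hc)
    rw [← hT] at b1 b2
    rcases T.tj c hc with ⟨a, b⟩ | ⟨a, b⟩ <;> rw [a] at b1 <;> rw [b] at b2 <;> omega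
  -- bad edges
  have hbad1 : ∀ e ∈ T.S0, ∀ x : V, (Finset.univ.filter (fun t : E => ∃ c, 0 < T.lam c ∧ T.te c = t ∧
      T.Anc c x ∧ g.DC T.S0 (g.l t) (g.l e))).card ≤ k := by
    intro e he x
    have : k = (Finset.range k).card := (Finset.card_range k).symm
    rw [this]
    refine Finset.card_le_card_of_injOn (fun t => (ℓ (g.l t) + (k - i)) % k) ?_ ?_
    · intro t _
      exact Finset.mem_coe.2 (Finset.mem_range.2 (Nat.mod_lt _ (by omega)))
    · intro t ht t' ht' heq
      simp only [Finset.coe_filter, Finset.mem_univ, true_and, Set.mem_ofPred_eq] at ht ht'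
      obtain ⟨c, hc, rfl, ha, hd⟩ := ht
      obtain ⟨c', hc', rfl, ha', hd'⟩ := ht'
      have q : (ℓ (g.l (T.te c)) + (k - i)) / k = (ℓ (g.l (T.te c')) + (k - i)) / k :=
        hchS _ _ (hd.trans hd'.symm)
      have q2 : ℓ (g.l (T.te c)) + (k - i) = ℓ (g.l (T.te c')) + (k - i) := by
        rw [← Nat.div_add_mod (ℓ (g.l (T.te c)) + (k - i)) k,
          ← Nat.div_add_mod (ℓ (g.l (T.te c')) + (k - i)) k, q]
        simp only at heq
        rw [heq]
      have q3 : T.lam c = T.lam c' := by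
        have := hlt c hc; have := hlt c' hc'; omega
      exact T.cte _ _ (T.anc_uniq ha ha' q3)
  refine ⟨S, hSY, hSa, fun y hy => hSs y hy, ?_⟩
  intro e heS
  have hYX : ∀ y ∈ g.Y R, y ∉ FF → y ∈ T.TT ∨ y ∈ T.S0 := by
    intro y hy hf
    by_cases h : y ∈ T.TT
    · exact Or.inl h
    · right
      rintro (h' | h')
      · rcases (hXm y).1 h' with h'' | h''
        · exact h'' hy
        · exact hf h''
      · exact h h'
  by_cases he : e ∈ T.S0
  · have hsub : (g.Y R).filter (fun y => ¬ g.DC (S \ {e}) (g.l y) (g.r y)) ⊆ FF ∪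
      ((Finset.univ.filter (fun t : E => ∃ c, 0 < T.lam c ∧ T.te c = t ∧
        T.Anc c (g.src e) ∧ g.DC T.S0 (g.l t) (g.l e))) ∪
      (Finset.univ.filter (fun t : E => ∃ c, 0 < T.lam c ∧ T.te c = t ∧
        T.Anc c (g.tgt e) ∧ g.DC T.S0 (g.l t) (g.l e))) ∪ {e}) := by
      intro y hy
      obtain ⟨hyY, hyn⟩ := Finset.mem_filter.1 hy
      have hsd : T.S0 \ {e} ⊆ S \ {e} := Set.sdiff_subset_sdiff_left hS0
      simp only [Finset.mem_union, Finset.mem_filter, Finset.mem_univ, true_and, Finset.mem_singleton]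
      by_cases hf : y ∈ FF
      · exact Or.inl hf
      right
      rcases hYX y hyY hf with h | h
      · left
        have hc0 := T.conn_T h
        obtain ⟨c, hc, rfl⟩ := h
        have hd : g.DC T.S0 (g.l (T.te c)) (g.l e) := by
          have hsub : T.S0 ⊆ (T.S0 \ {e}) ∪ {e} := by
            intro z hz; by_cases hze : z = e
            · exact Or.inr hze
            · exact Or.inl ⟨hz, hze⟩
          have hm : T.S0 \ {e} ⊆ T.S0 := Set.sdiff_subset
          rcases (hc0.mono hsub).split with h | ⟨h, -⟩ | ⟨h, -⟩
          · exact (hyn (h.mono hsd)).elim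
          · exact h.mono hm
          · exact (h.mono hm).trans (Cn.edge he).symm
        by_cases ha : T.Anc c (g.src e)
        · exact Or.inl ⟨c, hc, rfl, ha, hd⟩
        · by_cases hb : T.Anc c (g.tgt e)
          · exact Or.inr ⟨c, hc, rfl, hb, hd⟩
          · exact (hyn ((T.conn_T' hc he (iff_of_false ha hb)).mono hsd)).elim
      · right
        by_contra hne
        exact hyn (Cn.edge (hsd ⟨h, hne⟩))
    have b1 := hbad1 e he (g.src e)
    have b2 := hbad1 e he (g.tgt e)
    refine (Finset.card_le_card hsub).trans ?_
    refine (Finset.card_union_le _ _).trans ?_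
    have b3 := Finset.card_union_le ((Finset.univ.filter (fun t : E => ∃ c, 0 < T.lam c ∧ T.te c = t ∧
        T.Anc c (g.src e) ∧ g.DC T.S0 (g.l t) (g.l e))) ∪
      (Finset.univ.filter (fun t : E => ∃ c, 0 < T.lam c ∧ T.te c = t ∧
        T.Anc c (g.tgt e) ∧ g.DC T.S0 (g.l t) (g.l e)))) {e}
    have b4 := Finset.card_union_le (Finset.univ.filter (fun t : E => ∃ c, 0 < T.lam c ∧ T.te c = t ∧
        T.Anc c (g.src e) ∧ g.DC T.S0 (g.l t) (g.l e)))
      (Finset.univ.filter (fun t : E => ∃ c, 0 < T.lam c ∧ T.te c = t ∧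
        T.Anc c (g.tgt e) ∧ g.DC T.S0 (g.l t) (g.l e)))
    rw [Finset.card_singleton] at b3
    omega
  · refine (Finset.card_le_card (t := FF) ?_).trans (by omega)
    intro y hy
    obtain ⟨hyY, hyn⟩ := Finset.mem_filter.1 hy
    have hsd : T.S0 ⊆ S \ {e} := fun z hz => ⟨hS0 hz, fun h => he (by rw [← h]; exact hz)⟩
    by_contra hf
    rcases hYX y hyY hf with h | h
    · exact hyn ((T.conn_T h).mono hsd)
    · exact hyn (Cn.edge (hsd h))

end CG


set_option linter.unusedSectionVars false

namespace CG
open Classical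

variable {V E Φ : Type} [Fintype V] [Fintype E] [Fintype Φ] (g : CG V E Φ)

theorem sum_biUnion_le' {A B : Type} (N : Finset A) (f : A → Finset B) (w : B → ℕ) :
    ∑ F ∈ N.biUnion f, w F ≤ ∑ a ∈ N, ∑ F ∈ f a, w F := by
  induction N using Finset.induction_on with
  | empty => simp
  | insert a s ha ih =>
    rw [Finset.biUnion_insert, Finset.sum_insert ha]
    have := Finset.sum_union_inter (f := w) (s₁ := f a) (s₂ := s.biUnion f)
    omega

def Conn (R : Finset Φ) : Prop := ∀ F ∈ R, ∀ F' ∈ R, g.DC (g.Y R) F F'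

theorem leaf {A : Set E} {v F : Φ} (h : g.DC A v F) : F = v ∨ ∃ e ∈ A, ∃ u,
    ((g.l e = v ∧ g.r e = u) ∨ (g.l e = u ∧ g.r e = v)) ∧ g.DC (A \ g.inc v) u F := by
  refine (h.inv (P := fun F => F = v ∨ ∃ e ∈ A, ∃ u,
    ((g.l e = v ∧ g.r e = u) ∨ (g.l e = u ∧ g.r e = v)) ∧ g.DC (A \ g.inc v) u F) ?_).1 (Or.inl rfl)
  intro f hf
  by_cases hv : f ∈ g.inc v
  · rcases g.mem_inc.1 hv with h | h
    · exact iff_of_true (Or.inl h) (Or.inr ⟨f, hf, _, Or.inl ⟨h, rfl⟩, Cn.refl _⟩)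
    · exact iff_of_true (Or.inr ⟨f, hf, _, Or.inr ⟨rfl, h⟩, Cn.refl _⟩) (Or.inl h)
  · have hc : g.DC (A \ g.inc v) (g.l f) (g.r f) := Cn.edge ⟨hf, hv⟩
    rw [mem_inc, not_or] at hv
    constructor
    · rintro (h | ⟨e, he, u, h1, h2⟩)
      · exact (hv.1 h).elim
      · exact Or.inr ⟨e, he, u, h1, h2.trans hc⟩
    · rintro (h | ⟨e, he, u, h1, h2⟩)
      · exact (hv.2 h).elim
      · exact Or.inr ⟨e, he, u, h1, h2.trans hc.symm⟩

noncomputable def side (R : Finset Φ) (S : Set E) (e : E) (x : Φ) : Finset Φ :=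
  R.filter (fun F => g.DC (S \ {e}) x F)

theorem sub_sdiff_union (S : Set E) (e : E) : S ⊆ (S \ {e}) ∪ {e} := by
  intro z hz; by_cases hze : z = e
  · exact Or.inr hze
  · exact Or.inl ⟨hz, hze⟩

theorem side_disj {R : Finset Φ} {S : Set E} (hS : Acyc g.l g.r S) {e : E} (he : e ∈ S) :
    Disjoint (g.side R S e (g.l e)) (g.side R S e (g.r e)) := by
  rw [Finset.disjoint_left]
  intro F h1 h2
  exact hS e he ((Finset.mem_filter.1 h1).2.trans (Finset.mem_filter.1 h2).2.symm)

theorem side_union {R : Finset Φ} {S : Set E} (hR : ∀ F ∈ R, ∀ F' ∈ R, g.DC S F F')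
    {e : E} (hl : g.l e ∈ R) :
    g.side R S e (g.l e) ∪ g.side R S e (g.r e) = R := by
  ext F
  simp only [side, Finset.mem_union, Finset.mem_filter]
  refine ⟨by tauto, fun hF => ?_⟩
  rcases ((hR _ hl _ hF).mono (sub_sdiff_union S e)).split with h | ⟨-, h⟩ | ⟨-, h⟩
  · exact Or.inl ⟨hF, h⟩
  · exact Or.inr ⟨hF, h⟩
  · exact Or.inl ⟨hF, h⟩

theorem balanced {R : Finset Φ} {S : Set E} (hS : Acyc g.l g.r S) (hSY : S ⊆ g.Y R)
    (hR : ∀ F ∈ R, ∀ F' ∈ R, g.DC S F F') (w : Φ → ℕ) (hpos : 0 < ∑ F ∈ R, w F)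
    (hw : ∀ F ∈ R, 4 * w F ≤ ∑ F ∈ R, w F) :
    ∃ e ∈ S, (∑ F ∈ R, w F) ≤ 4 * (∑ F ∈ g.side R S e (g.l e), w F) ∧
      (∑ F ∈ R, w F) ≤ 4 * (∑ F ∈ g.side R S e (g.r e), w F) := by
  by_contra hcon
  push Not at hcon
  set W := ∑ F ∈ R, w F with hW
  have hsum : ∀ e ∈ S, (∑ F ∈ g.side R S e (g.l e), w F) + (∑ F ∈ g.side R S e (g.r e), w F) = W := by
    intro e he
    rw [← Finset.sum_union (g.side_disj hS he), g.side_union hR (g.mem_Y.1 (hSY he)).1]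
  let H : Finset (E × Φ) := Finset.univ.filter (fun p => p.1 ∈ S ∧ (p.2 = g.l p.1 ∨ p.2 = g.r p.1) ∧
    3 * W < 4 * ∑ F ∈ g.side R S p.1 p.2, w F)
  have hHm : ∀ e x, (e, x) ∈ H ↔ e ∈ S ∧ (x = g.l e ∨ x = g.r e) ∧
    3 * W < 4 * ∑ F ∈ g.side R S e x, w F := by
    intro e x; simp [H]
  have hheavy : ∀ e ∈ S, (e, g.l e) ∈ H ∨ (e, g.r e) ∈ H := by
    intro e he
    have h1 := hcon e he
    have h2 := hsum e he
    rw [hHm, hHm]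
    by_cases h : W ≤ 4 * (∑ F ∈ g.side R S e (g.l e), w F)
    · have := h1 h
      exact Or.inl ⟨he, Or.inl rfl, by omega⟩
    · exact Or.inr ⟨he, Or.inr rfl, by omega⟩
  have hHne : H.Nonempty := by
    by_cases hSe : S = ∅
    · exfalso
      have hRne : R.Nonempty := by
        by_contra h
        rw [Finset.not_nonempty_iff_eq_empty] at h
        rw [h] at hW; simp at hW; omega
      obtain ⟨F, hF⟩ := hRne
      have : R = {F} := by
        ext G
        rw [Finset.mem_singleton]
        constructor
        · intro hG
          have := hR G hG F hF
          rw [hSe] at this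
          exact this.empty
        · rintro rfl; exact hF
      have h1 := hw F hF
      rw [this, Finset.sum_singleton] at hW
      omega
    · obtain ⟨e, he⟩ := Set.nonempty_iff_ne_empty.2 hSe
      rcases hheavy e he with h | h
      · exact ⟨_, h⟩
      · exact ⟨_, h⟩
  obtain ⟨⟨e, v⟩, hev, hmin⟩ := Finset.exists_min_image H (fun p => (g.side R S p.1 p.2).card) hHne
  obtain ⟨he, hv, hbig⟩ := (hHm e v).1 hev
  obtain ⟨v', hv'⟩ : ∃ v', (g.l e = v ∧ g.r e = v') ∨ (g.l e = v' ∧ g.r e = v) := by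
    rcases hv with rfl | rfl
    · exact ⟨_, Or.inl ⟨rfl, rfl⟩⟩
    · exact ⟨_, Or.inr ⟨rfl, rfl⟩⟩
  have hvR : v ∈ R := by
    have := g.mem_Y.1 (hSY he)
    rcases hv with rfl | rfl
    · exact this.1
    · exact this.2
  have hacy : ¬ g.DC (S \ {e}) v v' := by
    rcases hv' with ⟨a, b⟩ | ⟨a, b⟩
    · rw [← a, ← b]; exact hS e he
    · rw [← a, ← b]; exact fun h => hS e he h.symm
  let oth : E → Φ := fun f => if g.l f = v then g.r f else g.l f
  let N : Finset E := ((g.inc v).erase e).filter (fun f => f ∈ S)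
  have hN : ∀ f ∈ N, f ∈ S ∧ f ≠ e ∧ ((g.l f = v ∧ g.r f = oth f) ∨ (g.l f = oth f ∧ g.r f = v)) := by
    intro f hf
    obtain ⟨h1, h2⟩ := Finset.mem_filter.1 hf
    obtain ⟨h3, h4⟩ := Finset.mem_erase.1 h1
    refine ⟨h2, h3, ?_⟩
    by_cases h : g.l f = v
    · left; simp [oth, h]
    · right
      rcases g.mem_inc.1 h4 with h5 | h5
      · exact (h h5).elim
      · simp [oth, h, h5]
  have hNc : N.card ≤ 2 := by
    have h1 : e ∈ g.inc v := by
      rw [mem_inc]; rcases hv with h | h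
      · exact Or.inl h.symm
      · exact Or.inr h.symm
    have h2 := g.inc_card v
    have h3 : ((g.inc v).erase e).card = (g.inc v).card - 1 := Finset.card_erase_of_mem h1
    have h4 : N.card ≤ ((g.inc v).erase e).card := Finset.card_filter_le _ _
    omega
  have hlight : ∀ f ∈ N, 4 * (∑ F ∈ g.side R S f (oth f), w F) ≤ W := by
    intro f hf
    obtain ⟨hfS, hfe, hfv⟩ := hN f hf
    have hfac : ¬ g.DC (S \ {f}) v (oth f) := by
      rcases hfv with ⟨a, b⟩ | ⟨a, b⟩
      · rw [← a, ← b]; exact hS f hfS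
      · rw [← a, ← b]; exact fun h => hS f hfS h.symm
    have hcon2 : g.DC (S \ {e}) v (oth f) := by
      have : g.DC (S \ {e}) (g.l f) (g.r f) := Cn.edge ⟨hfS, hfe⟩
      rcases hfv with ⟨a, b⟩ | ⟨a, b⟩
      · rwa [a, b] at this
      · rw [a, b] at this; exact this.symm
    have hss : g.side R S f (oth f) ⊂ g.side R S e v := by
      refine ⟨?_, ?_⟩
      · intro F hF
        obtain ⟨hFR, hF⟩ := Finset.mem_filter.1 hF
        refine Finset.mem_filter.2 ⟨hFR, ?_⟩
        have hm : (S \ {f}) \ {e} ⊆ S \ {e} := fun z hz => ⟨hz.1.1, hz.2⟩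
        have hm2 : (S \ {f}) \ {e} ⊆ S \ {f} := fun z hz => hz.1
        have n1 : ¬ g.DC ((S \ {f}) \ {e}) (oth f) v := fun h => hfac (h.mono hm2).symm
        have n2 : ¬ g.DC ((S \ {f}) \ {e}) (oth f) v' := fun h => hacy (hcon2.trans (h.mono hm))
        rcases (hF.mono (sub_sdiff_union (S \ {f}) e)).split with h | ⟨h, -⟩ | ⟨h, -⟩
        · exact hcon2.trans (h.mono hm)
        · rcases hv' with ⟨a, b⟩ | ⟨a, b⟩
          · rw [a] at h; exact (n1 h).elim
          · rw [a] at h; exact (n2 h).elim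
        · rcases hv' with ⟨a, b⟩ | ⟨a, b⟩
          · rw [b] at h; exact (n2 h).elim
          · rw [b] at h; exact (n1 h).elim
      · intro hsub
        have : v ∈ g.side R S e v := Finset.mem_filter.2 ⟨hvR, Cn.refl _⟩
        exact hfac (Finset.mem_filter.1 (hsub this)).2.symm
    have hnH : (f, oth f) ∉ H := by
      intro h
      have := hmin _ h
      have := Finset.card_lt_card hss
      simp only at *
      omega
    have hnh : ¬ (3 * W < 4 * ∑ F ∈ g.side R S f (oth f), w F) := by
      intro h
      apply hnH
      rw [hHm]
      refine ⟨hfS, ?_, h⟩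
      rcases hfv with ⟨a, b⟩ | ⟨a, b⟩
      · exact Or.inr b.symm
      · exact Or.inl a.symm
    have h1 := hcon f hfS
    have h2 := hsum f hfS
    rcases hfv with ⟨a, b⟩ | ⟨a, b⟩
    · rw [b] at h1 h2
      by_contra h
      by_cases h' : W ≤ 4 * (∑ F ∈ g.side R S f (g.l f), w F)
      · have := h1 h'; omega
      · omega
    · rw [a] at h1 h2
      by_contra h
      have := h1 (by omega)
      omega
  have hcov : g.side R S e v ⊆ {v} ∪ N.biUnion (fun f => g.side R S f (oth f)) := by
    intro F hF
    obtain ⟨hFR, hF⟩ := Finset.mem_filter.1 hF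
    rw [Finset.mem_union, Finset.mem_singleton]
    rcases g.leaf hF with h | ⟨f, hf, u, hu, hc⟩
    · exact Or.inl h
    · right
      have hfv : f ∈ g.inc v := by
        rw [mem_inc]; rcases hu with h | h
        · exact Or.inl h.1
        · exact Or.inr h.2
      have hfN : f ∈ N := Finset.mem_filter.2 ⟨Finset.mem_erase.2 ⟨hf.2, hfv⟩, hf.1⟩
      refine Finset.mem_biUnion.2 ⟨f, hfN, Finset.mem_filter.2 ⟨hFR, ?_⟩⟩
      have hou : oth f = u := by
        rcases hu with ⟨a, b⟩ | ⟨a, b⟩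
        · simp [oth, a, b]
        · by_cases h : u = v
          · simp [oth, a, b, h]
          · simp [oth, a, h]
      rw [hou]
      refine hc.mono ?_
      rintro z ⟨hz1, hz2⟩
      refine ⟨hz1.1, ?_⟩
      rintro rfl
      exact hz2 hfv
  have h1 : ∑ F ∈ g.side R S e v, w F ≤ w v + ∑ f ∈ N, ∑ F ∈ g.side R S f (oth f), w F := by
    refine (Finset.sum_le_sum_of_subset hcov).trans ?_
    have a1 := Finset.sum_union_inter (f := w) (s₁ := {v}) (s₂ := N.biUnion (fun f => g.side R S f (oth f)))
    rw [Finset.sum_singleton] at a1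
    have a2 : ∑ F ∈ N.biUnion (fun f => g.side R S f (oth f)), w F ≤
        ∑ f ∈ N, ∑ F ∈ g.side R S f (oth f), w F := sum_biUnion_le' N _ w
    omega
  have h2 : 4 * ∑ f ∈ N, ∑ F ∈ g.side R S f (oth f), w F ≤ N.card * W := by
    rw [Finset.mul_sum, ← smul_eq_mul, ← Finset.sum_const]
    exact Finset.sum_le_sum hlight
  have h3 := hw v hvR
  have h4 : N.card * W ≤ 2 * W := Nat.mul_le_mul_right _ hNc
  omega

theorem sep (h2 : Two (Φ := Φ)) (R : Finset Φ) (hc : g.Conn R) {k : ℕ} (hk : 1 ≤ k)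
    (hR : R.card ≤ k * k) (w : Φ → ℕ) (hpos : 0 < ∑ F ∈ R, w F)
    (hw : ∀ F ∈ R, 4 * w F ≤ ∑ F ∈ R, w F) :
    ∃ R1 R2 : Finset Φ, Disjoint R1 R2 ∧ R1 ∪ R2 = R ∧ R1.Nonempty ∧ R2.Nonempty ∧
      g.Conn R1 ∧ g.Conn R2 ∧
      ((g.Y R).filter (fun y => y ∉ g.Y R1 ∧ y ∉ g.Y R2)).card ≤ 6 * k ∧
      (∑ F ∈ R, w F) ≤ 4 * (∑ F ∈ R1, w F) ∧ (∑ F ∈ R, w F) ≤ 4 * (∑ F ∈ R2, w F) := by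
  obtain ⟨S, hSY, hS, hsp, hcut⟩ := g.stl h2 R hk hR
  have hRS : ∀ F ∈ R, ∀ F' ∈ R, g.DC S F F' := fun F hF F' hF' =>
    (hc F hF F' hF').of_edges (fun e he => hsp e he)
  obtain ⟨e, he, b1, b2⟩ := g.balanced hS hSY hRS w hpos hw
  have hu := g.side_union hRS (g.mem_Y.1 (hSY he)).1
  have hne : ∀ A : Finset Φ, (∑ F ∈ R, w F) ≤ 4 * (∑ F ∈ A, w F) → A.Nonempty := by
    intro A hA
    by_contra h
    rw [Finset.not_nonempty_iff_eq_empty] at h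
    rw [h, Finset.sum_empty] at hA; omega
  have hconn : ∀ x, g.Conn (g.side R S e x) := by
    intro x F hF F' hF'
    have hFF : g.DC (S \ {e}) F F' := (Finset.mem_filter.1 hF).2.symm.trans (Finset.mem_filter.1 hF').2
    refine ((hFF.inv (P := fun G => G ∈ g.side R S e x ∧ g.DC (g.Y (g.side R S e x)) F G) ?_).1
      ⟨hF, Cn.refl _⟩).2
    intro f hf
    have hfY := g.mem_Y.1 (hSY hf.1)
    have hfe : g.DC (S \ {e}) (g.l f) (g.r f) := Cn.edge hf
    have hiff : g.l f ∈ g.side R S e x ↔ g.r f ∈ g.side R S e x := by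
      simp only [side, Finset.mem_filter, hfY, true_and]
      exact ⟨fun h => h.trans hfe, fun h => h.trans hfe.symm⟩
    constructor
    · rintro ⟨h1, h2⟩
      have h3 := hiff.1 h1
      exact ⟨h3, h2.trans (Cn.edge (Finset.mem_coe.2 (g.mem_Y.2 ⟨h1, h3⟩)))⟩
    · rintro ⟨h1, h2⟩
      have h3 := hiff.2 h1
      exact ⟨h3, h2.trans (Cn.edge (Finset.mem_coe.2 (g.mem_Y.2 ⟨h3, h1⟩))).symm⟩
  refine ⟨_, _, g.side_disj hS he, hu, hne _ b1, hne _ b2, hconn _, hconn _, ?_, b1, b2⟩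
  refine (Finset.card_le_card ?_).trans (hcut e he)
  intro y hy
  simp only [Finset.mem_filter] at hy ⊢
  refine ⟨hy.1, fun hd => ?_⟩
  obtain ⟨hyY, h1, h2⟩ := hy
  have hyY' := g.mem_Y.1 hyY
  rw [mem_Y] at h1 h2
  rw [← hu, Finset.mem_union] at hyY'
  rcases hyY'.1 with h | h
  · refine h1 ⟨h, Finset.mem_filter.2 ⟨(g.mem_Y.1 hyY).2, (Finset.mem_filter.1 h).2.trans hd⟩⟩
  · refine h2 ⟨h, Finset.mem_filter.2 ⟨(g.mem_Y.1 hyY).2, (Finset.mem_filter.1 h).2.trans hd⟩⟩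

end CG


set_option linter.unusedSectionVars false

namespace CG
open Classical

variable {V E Φ : Type} [Fintype V] [Fintype E] [Fintype Φ] (g : CG V E Φ)

noncomputable def bd (R : Finset Φ) : Finset E := Finset.univ.filter (fun e => ¬ (g.l e ∈ R ↔ g.r e ∈ R))

theorem mem_bd {R : Finset Φ} {e : E} : e ∈ g.bd R ↔ ¬ (g.l e ∈ R ↔ g.r e ∈ R) := by simp [bd]

def Hol (R Q : Finset Φ) : Prop := (∀ q ∈ Q, q ∉ R) ∧ ∀ F, F ∉ R → ∃ q ∈ Q, g.DC (g.Y Rᶜ) F q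

theorem hol_compl (R : Finset Φ) : g.Hol R Rᶜ :=
  ⟨fun _ hq => Finset.mem_compl.1 hq, fun F hF => ⟨F, Finset.mem_compl.2 hF, Cn.refl _⟩⟩

noncomputable def hmin (R : Finset Φ) : ℕ := sInf {n | ∃ Q, g.Hol R Q ∧ Q.card = n}

theorem hmin_le {R Q : Finset Φ} (h : g.Hol R Q) : g.hmin R ≤ Q.card := Nat.sInf_le ⟨Q, h, rfl⟩

theorem exists_hmin (R : Finset Φ) : ∃ Q, g.Hol R Q ∧ Q.card = g.hmin R := by
  have : g.hmin R ∈ {n | ∃ Q, g.Hol R Q ∧ Q.card = n} := Nat.sInf_mem ⟨_, _, g.hol_compl R, rfl⟩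
  exact this

noncomputable def mu (k : ℕ) (R : Finset Φ) : ℕ := (g.bd R).card + k * g.hmin R

theorem irred {R Q : Finset Φ} (h : g.Hol R Q) (hm : Q.card = g.hmin R) {q q' : Φ} (hq : q ∈ Q)
    (hq' : q' ∈ Q) (hd : g.DC (g.Y Rᶜ) q q') : q = q' := by
  by_contra hne
  have : g.Hol R (Q.erase q) := by
    refine ⟨fun x hx => h.1 x (Finset.mem_of_mem_erase hx), fun F hF => ?_⟩
    obtain ⟨p, hp, hd'⟩ := h.2 F hF
    by_cases hpq : p = q
    · subst hpq
      exact ⟨q', Finset.mem_erase.2 ⟨Ne.symm hne, hq'⟩, hd'.trans hd⟩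
    · exact ⟨p, Finset.mem_erase.2 ⟨hpq, hp⟩, hd'⟩
  have h1 := g.hmin_le this
  rw [Finset.card_erase_of_mem hq] at h1
  have := Finset.card_pos.2 ⟨q, hq⟩
  omega

noncomputable def inn (R : Finset Φ) (e : E) : Φ := if g.l e ∈ R then g.l e else g.r e
noncomputable def out (R : Finset Φ) (e : E) : Φ := if g.l e ∈ R then g.r e else g.l e

theorem bd_cases {R : Finset Φ} {e : E} (he : e ∈ g.bd R) : g.inn R e ∈ R ∧ g.out R e ∉ R ∧
    ((g.l e = g.inn R e ∧ g.r e = g.out R e) ∨ (g.l e = g.out R e ∧ g.r e = g.inn R e)) := by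
  rw [mem_bd] at he
  unfold inn out
  by_cases h : g.l e ∈ R
  · simp only [h, if_true]
    exact ⟨trivial, by tauto, Or.inl ⟨trivial, trivial⟩⟩
  · simp only [h, if_false]
    exact ⟨by tauto, not_false, Or.inr ⟨trivial, trivial⟩⟩

theorem inn_inc {R : Finset Φ} (e : E) : e ∈ g.inc (g.inn R e) := by
  rw [mem_inc]; unfold inn; split_ifs <;> simp

theorem exists_bd {R : Finset Φ} (hne : R.Nonempty) {q : Φ} (hq : q ∉ R) :
    ∃ e ∈ g.bd R, g.DC (g.Y Rᶜ) q (g.out R e) := by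
  by_contra hcon
  push Not at hcon
  obtain ⟨f, hf⟩ := hne
  have hinv : ∀ G, g.DC (g.Y Rᶜ) q G → G ∉ R := by
    intro G hG
    refine (hG.inv (P := fun G => G ∉ R) ?_).1 hq
    intro e he
    have := g.mem_Y.1 (Finset.mem_coe.1 he)
    simp only [Finset.mem_compl] at this
    exact iff_of_true this.1 this.2
  refine hinv f (((g.all q f).inv (P := fun G => g.DC (g.Y Rᶜ) q G) ?_).1 (Cn.refl _)) hf
  intro e _
  constructor
  · intro h
    have h1 := hinv _ h
    by_cases h2 : g.r e ∈ R
    · have : e ∈ g.bd R := by rw [mem_bd]; tauto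
      have := hcon e this
      simp only [out, h1, if_false] at this
      exact (this h).elim
    · exact h.trans (Cn.edge (Finset.mem_coe.2 (g.mem_Y.2 ⟨Finset.mem_compl.2 h1, Finset.mem_compl.2 h2⟩)))
  · intro h
    have h1 := hinv _ h
    by_cases h2 : g.l e ∈ R
    · have : e ∈ g.bd R := by rw [mem_bd]; tauto
      have := hcon e this
      simp only [out, h2, if_true] at this
      exact (this h).elim
    · exact h.trans (Cn.edge (Finset.mem_coe.2 (g.mem_Y.2 ⟨Finset.mem_compl.2 h2, Finset.mem_compl.2 h1⟩))).symm

theorem Y_mono {A B : Finset Φ} (h : A ⊆ B) : (g.Y A : Set E) ⊆ g.Y B := by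
  intro e he
  have := g.mem_Y.1 (Finset.mem_coe.1 he)
  exact Finset.mem_coe.2 (g.mem_Y.2 ⟨h this.1, h this.2⟩)

theorem exists_weight {R : Finset Φ} (hne : R.Nonempty) {k : ℕ} (hk : 1 ≤ k) :
    ∃ w : Φ → ℕ, (∀ F, w F ≤ 6 * k) ∧ ∑ F ∈ R, w F = g.mu k R ∧
      ∀ R1 R2 : Finset Φ, Disjoint R1 R2 → R1 ∪ R2 = R → R2.Nonempty → g.Conn R2 →
        g.mu k R1 ≤ ∑ F ∈ R1, w F + ((g.Y R).filter (fun y => y ∉ g.Y R1 ∧ y ∉ g.Y R2)).card + k := by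
  obtain ⟨Q, hQ, hm⟩ := g.exists_hmin R
  have : ∀ q : Q, ∃ e, e ∈ g.bd R ∧ g.DC (g.Y Rᶜ) q.1 (g.out R e) := fun q => g.exists_bd hne (hQ.1 q.1 q.2)
  choose al hal hal' using this
  have hinj : Function.Injective al := by
    intro q q' h
    have h1 := hal' q
    rw [h] at h1
    exact Subtype.ext (g.irred hQ hm q.2 q'.2 (h1.trans (hal' q').symm))
  let A : Finset Φ → Finset E := fun B => (g.bd R).filter (fun e => g.inn R e ∈ B)
  let C : Finset Φ → Finset Q := fun B => Finset.univ.filter (fun q => g.inn R (al q) ∈ B)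
  have hsum : ∀ B : Finset Φ, ∑ F ∈ B, ((A {F}).card + k * (C {F}).card) = (A B).card + k * (C B).card := by
    intro B
    rw [Finset.sum_add_distrib, ← Finset.mul_sum]
    congr 1
    · rw [Finset.card_eq_sum_card_fiberwise (s := A B) (f := g.inn R) (t := B) (fun e he => (Finset.mem_filter.1 he).2)]
      refine Finset.sum_congr rfl fun F hF => ?_
      congr 1
      ext e
      simp only [A, Finset.mem_filter, Finset.mem_singleton]
      constructor
      · rintro ⟨h1, rfl⟩; exact ⟨⟨h1, hF⟩, rfl⟩
      · rintro ⟨⟨h1, -⟩, h2⟩; exact ⟨h1, h2⟩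
    · congr 1
      rw [Finset.card_eq_sum_card_fiberwise (s := C B) (f := fun q => g.inn R (al q)) (t := B)
        (fun e he => (Finset.mem_filter.1 he).2)]
      refine Finset.sum_congr rfl fun F hF => ?_
      congr 1
      ext e
      simp only [C, Finset.mem_filter, Finset.mem_singleton, Finset.mem_univ, true_and]
      constructor
      · rintro rfl; exact ⟨hF, rfl⟩
      · rintro ⟨-, h2⟩; exact h2
  refine ⟨fun F => (A {F}).card + k * (C {F}).card, ?_, ?_, ?_⟩
  · intro F
    have h1 : (A {F}).card ≤ 3 := by
      refine (Finset.card_le_card ?_).trans (g.inc_card F)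
      intro e he
      have := (Finset.mem_filter.1 he).2
      rw [Finset.mem_singleton] at this
      rw [← this]; exact g.inn_inc e
    have h2 : (C {F}).card ≤ 3 := by
      rw [← Finset.card_image_of_injective (C {F}) hinj]
      refine (Finset.card_le_card ?_).trans (g.inc_card F)
      intro e he
      obtain ⟨q, hq, rfl⟩ := Finset.mem_image.1 he
      have := (Finset.mem_filter.1 hq).2
      rw [Finset.mem_singleton] at this
      rw [← this]; exact g.inn_inc _
    have h3 : k * (C {F}).card ≤ k * 3 := Nat.mul_le_mul_left _ h2
    show (A {F}).card + k * (C {F}).card ≤ 6 * k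
    omega
  · rw [hsum R, mu, ← hm]
    have h1 : A R = g.bd R := by
      apply Finset.filter_true_of_mem
      intro e he; exact (g.bd_cases he).1
    have h2 : C R = Finset.univ := by
      apply Finset.filter_true_of_mem
      intro q _; exact (g.bd_cases (hal q)).1
    rw [h1, h2, Finset.card_univ, Fintype.card_coe]
  · intro R1 R2 hdis hun hne2 hconn2
    rw [hsum R1, mu]
    obtain ⟨f2, hf2⟩ := hne2
    have hf21 : f2 ∉ R1 := fun h => Finset.disjoint_left.1 hdis h hf2
    have hR : ∀ x, x ∈ R ↔ x ∈ R1 ∨ x ∈ R2 := by intro x; rw [← hun, Finset.mem_union]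
    have hd : ∀ x, x ∈ R1 → x ∉ R2 := fun x h => Finset.disjoint_left.1 hdis h
    have hb : (g.bd R1).card ≤ (A R1).card +
        ((g.Y R).filter (fun y => y ∉ g.Y R1 ∧ y ∉ g.Y R2)).card := by
      refine (Finset.card_le_card ?_).trans (Finset.card_union_le _ _)
      intro e he
      rw [mem_bd] at he
      simp only [Finset.mem_union, A, Finset.mem_filter, mem_bd, inn, mem_Y, hR]
      have a1 := hd (g.l e)
      have a2 := hd (g.r e)
      by_cases b1 : g.l e ∈ R1 <;> by_cases b2 : g.r e ∈ R1 <;> by_cases b3 : g.l e ∈ R2 <;>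
        by_cases b4 : g.r e ∈ R2 <;> simp_all
    have hh : g.hmin R1 ≤ (C R1).card + 1 := by
      have hH : g.Hol R1 ((C R1).image Subtype.val ∪ {f2}) := by
        constructor
        · intro q hq
          rcases Finset.mem_union.1 hq with h | h
          · obtain ⟨q', -, rfl⟩ := Finset.mem_image.1 h
            have := hQ.1 q' q'.2
            rw [hR] at this
            tauto
          · rw [Finset.mem_singleton.1 h]; exact hf21
        · intro F hF
          have hYR : (g.Y Rᶜ : Set E) ⊆ g.Y R1ᶜ := g.Y_mono (by
            intro x; simp only [Finset.mem_compl, hR]; tauto)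
          have hY2 : (g.Y R2 : Set E) ⊆ g.Y R1ᶜ := g.Y_mono (by
            intro x hx; simp only [Finset.mem_compl]; exact fun h => hd x h hx)
          by_cases hFR : F ∈ R
          · refine ⟨f2, by simp, (hconn2 F ?_ f2 hf2).mono hY2⟩
            rcases (hR F).1 hFR with h | h
            · exact (hF h).elim
            · exact h
          · obtain ⟨q, hq, hdq⟩ := hQ.2 F hFR
            obtain ⟨c1, c2, c3⟩ := g.bd_cases (hal ⟨q, hq⟩)
            by_cases hi : g.inn R (al ⟨q, hq⟩) ∈ R1
            · refine ⟨q, ?_, hdq.mono hYR⟩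
              exact Finset.mem_union_left _ (Finset.mem_image.2 ⟨⟨q, hq⟩,
                Finset.mem_filter.2 ⟨Finset.mem_univ _, hi⟩, rfl⟩)
            · refine ⟨f2, by simp, ?_⟩
              have hi2 : g.inn R (al ⟨q, hq⟩) ∈ R2 := by
                rcases (hR _).1 c1 with h | h
                · exact (hi h).elim
                · exact h
              have ho : g.out R (al ⟨q, hq⟩) ∉ R1 := by
                rw [hR] at c2; tauto
              have hed : g.DC (g.Y R1ᶜ) (g.out R (al ⟨q, hq⟩)) (g.inn R (al ⟨q, hq⟩)) := by
                have hmem : al ⟨q, hq⟩ ∈ (g.Y R1ᶜ : Set E) := by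
                  rw [Finset.mem_coe, mem_Y, Finset.mem_compl, Finset.mem_compl]
                  rcases c3 with ⟨a, b⟩ | ⟨a, b⟩ <;> rw [a, b] <;> exact ⟨by assumption, by assumption⟩
                have := Cn.edge (s := g.l) (t := g.r) hmem
                rcases c3 with ⟨a, b⟩ | ⟨a, b⟩
                · rw [a, b] at this; exact this.symm
                · rw [a, b] at this; exact this
              exact (((hdq.mono hYR).trans ((hal' ⟨q, hq⟩).mono hYR)).trans hed).trans
                ((hconn2 _ hi2 f2 hf2).mono hY2)
      refine (g.hmin_le hH).trans ((Finset.card_union_le _ _).trans ?_)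
      rw [Finset.card_singleton]
      exact Nat.add_le_add_right Finset.card_image_le _
    have : k * g.hmin R1 ≤ k * ((C R1).card + 1) := Nat.mul_le_mul_left _ hh
    rw [mul_add, mul_one] at this
    omega

structure Good (k : ℕ) (C : Finset Φ) : Prop where
  conn : g.Conn C
  ne : C.Nonempty
  card : C.card ≤ k * k
  mu : g.mu k C ≤ 100 * k

structure IsPart (k : ℕ) (R : Finset Φ) (P : Finset (Finset Φ)) : Prop where
  good : ∀ C ∈ P, g.Good k C
  sub : ∀ C ∈ P, C ⊆ R
  uniq : ∀ F ∈ R, ∃! C, C ∈ P ∧ F ∈ C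

theorem IsPart.single {k : ℕ} {R : Finset Φ} (h : g.Good k R) : g.IsPart k R {R} := by
  refine ⟨by simpa using h, by simp, fun F hF => ⟨R, ⟨by simp, hF⟩, ?_⟩⟩
  rintro C ⟨hC, -⟩
  simpa using hC

theorem IsPart.union {k : ℕ} {R1 R2 R : Finset Φ} {P1 P2 : Finset (Finset Φ)}
    (h1 : g.IsPart k R1 P1) (h2 : g.IsPart k R2 P2) (hd : Disjoint R1 R2) (hu : R1 ∪ R2 = R) :
    g.IsPart k R (P1 ∪ P2) := by
  refine ⟨?_, ?_, ?_⟩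
  · intro C hC
    rcases Finset.mem_union.1 hC with h | h
    · exact h1.good C h
    · exact h2.good C h
  · intro C hC
    rw [← hu]
    rcases Finset.mem_union.1 hC with h | h
    · exact (h1.sub C h).trans Finset.subset_union_left
    · exact (h2.sub C h).trans Finset.subset_union_right
  · intro F hF
    rw [← hu, Finset.mem_union] at hF
    have hd' := Finset.disjoint_left.1 hd
    rcases hF with hF | hF
    · obtain ⟨C, ⟨hC, hFC⟩, hun⟩ := h1.uniq F hF
      refine ⟨C, ⟨Finset.mem_union_left _ hC, hFC⟩, ?_⟩
      rintro D ⟨hD, hFD⟩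
      rcases Finset.mem_union.1 hD with h | h
      · exact hun D ⟨h, hFD⟩
      · exact (hd' hF (h2.sub D h hFD)).elim
    · obtain ⟨C, ⟨hC, hFC⟩, hun⟩ := h2.uniq F hF
      refine ⟨C, ⟨Finset.mem_union_right _ hC, hFC⟩, ?_⟩
      rintro D ⟨hD, hFD⟩
      rcases Finset.mem_union.1 hD with h | h
      · exact (hd' (h1.sub D h hFD) hF).elim
      · exact hun D ⟨h, hFD⟩

theorem phase2 (h2 : Two (Φ := Φ)) {k : ℕ} (hk : 1 ≤ k) : ∀ n, ∀ R : Finset Φ, R.card = n → g.Conn R →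
    R.Nonempty → R.card ≤ k * k →
    ∃ P, g.IsPart k R P ∧ P.card * (18 * k) ≤ max (18 * k) (g.mu k R - 14 * k) := by
  intro n
  induction n using Nat.strong_induction_on with
  | _ n ih =>
  intro R hRn hc hne hR
  by_cases hmu : g.mu k R ≤ 100 * k
  · exact ⟨{R}, IsPart.single g ⟨hc, hne, hR, hmu⟩, by simp⟩
  · obtain ⟨w, hw, hsum, hsp⟩ := g.exists_weight hne hk
    obtain ⟨R1, R2, hd, hu, hn1, hn2, hc1, hc2, hcut, b1, b2⟩ := g.sep h2 R hc hk hR w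
      (by rw [hsum]; omega) (fun F _ => by have := hw F; rw [hsum]; omega)
    have m1 := hsp R1 R2 hd hu hn2 hc2
    have m2 := hsp R2 R1 hd.symm (by rw [Finset.union_comm, hu]) hn1 hc1
    have hcut' : ((g.Y R).filter (fun y => y ∉ g.Y R2 ∧ y ∉ g.Y R1)).card ≤ 6 * k := by
      simpa only [and_comm] using hcut
    have hcard := Finset.card_union_of_disjoint hd
    rw [hu] at hcard
    have p1 := Finset.card_pos.2 hn1
    have p2 := Finset.card_pos.2 hn2
    have hws := Finset.sum_union (f := w) hd
    rw [hu, hsum] at hws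
    rw [hsum] at b1 b2
    obtain ⟨P1, hP1, hP1c⟩ := ih R1.card (by omega) R1 rfl hc1 hn1 (by omega)
    obtain ⟨P2, hP2, hP2c⟩ := ih R2.card (by omega) R2 rfl hc2 hn2 (by omega)
    refine ⟨P1 ∪ P2, IsPart.union g hP1 hP2 hd hu, ?_⟩
    have hPc : (P1 ∪ P2).card * (18 * k) ≤ (P1.card + P2.card) * (18 * k) :=
      Nat.mul_le_mul_right _ (Finset.card_union_le _ _)
    rw [add_mul] at hPc
    have q1 : P1.card * (18 * k) ≤ ∑ F ∈ R1, w F - 7 * k := by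
      refine hP1c.trans (max_le ?_ ?_) <;> omega
    have q2 : P2.card * (18 * k) ≤ ∑ F ∈ R2, w F - 7 * k := by
      refine hP2c.trans (max_le ?_ ?_) <;> omega
    refine le_trans ?_ (le_max_right _ _)
    omega

theorem arith1 {a b s x x1 x2 : ℝ} (hs : 1 ≤ s) (ha : 0 ≤ a) (hb : 0 ≤ b) (h : a ^ 2 + b ^ 2 = s ^ 2)
    (h1 : s ^ 2 ≤ 4 * a ^ 2) (h2 : s ^ 2 ≤ 4 * b ^ 2) (hx : x1 + x2 ≤ x + 20 * s) :
    (18 * a ^ 2 - 7 * a + x1 / 18) + (18 * b ^ 2 - 7 * b + x2 / 18) ≤ 18 * s ^ 2 - 7 * s + x / 18 := by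
  have ha' : s / 2 ≤ a := by nlinarith
  have hb' : s / 2 ≤ b := by nlinarith
  have : 1.2 * s ≤ a + b := by
    by_contra hc
    push Not at hc
    nlinarith [mul_nonneg (sub_nonneg.2 ha') (sub_nonneg.2 hb'), mul_nonneg ha hb]
  nlinarith

theorem phase1 (h2 : Two (Φ := Φ)) {k : ℕ} (hk : 2 ≤ k) : ∀ n, ∀ R : Finset Φ, R.card = n → g.Conn R →
    R.Nonempty → k * k ≤ 4 * R.card →
    ∃ P, g.IsPart k R P ∧ (P.card : ℝ) ≤ 18 * (√(R.card : ℝ) / k) ^ 2 - 7 * (√(R.card : ℝ) / k) +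
      (g.mu k R : ℝ) / k / 18 := by
  intro n
  induction n using Nat.strong_induction_on with
  | _ n ih =>
  intro R hRn hc hne hR
  have hkR : (2 : ℝ) ≤ k := by exact_mod_cast hk
  have hk0 : (0 : ℝ) < k := by linarith
  have hsq : ∀ m : ℕ, (√(m : ℝ) / k) ^ 2 = (m : ℝ) / (k : ℝ) ^ 2 := by
    intro m
    rw [div_pow, Real.sq_sqrt (by positivity)]
  by_cases hsm : R.card ≤ k * k
  · obtain ⟨P, hP, hPc⟩ := g.phase2 h2 (by omega) n R hRn hc hne hsm
    refine ⟨P, hP, ?_⟩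
    have h1 : P.card * (18 * k) ≤ 18 * k + g.mu k R := hPc.trans (max_le (by omega) (by omega))
    have h3 : (P.card : ℝ) * (18 * k) ≤ 18 * k + g.mu k R := by exact_mod_cast h1
    have h4 : (P.card : ℝ) ≤ 1 + (g.mu k R : ℝ) / k / 18 := by
      rw [div_div]
      have : (1 : ℝ) + (g.mu k R : ℝ) / (k * 18) = (18 * k + g.mu k R) / (18 * k) := by
        field_simp
      rw [this, le_div_iff₀ (by positivity)]
      exact h3
    have h5 : (1 : ℝ) / 2 ≤ √(R.card : ℝ) / k := by
      rw [le_div_iff₀ hk0]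
      apply Real.le_sqrt_of_sq_le
      have : (k : ℝ) * k ≤ 4 * R.card := by exact_mod_cast hR
      nlinarith
    nlinarith
  · push Not at hsm
    obtain ⟨m, hm⟩ : ∃ m, m = ⌈√(R.card : ℝ)⌉₊ := ⟨_, rfl⟩
    have hm1 : √(R.card : ℝ) ≤ m := by rw [hm]; exact Nat.le_ceil _
    have hm2 : (m : ℝ) < √(R.card : ℝ) + 1 := by rw [hm]; exact Nat.ceil_lt_add_one (Real.sqrt_nonneg _)
    have hsq0 := Real.sq_sqrt (Nat.cast_nonneg (α := ℝ) R.card)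
    have hs0 := Real.sqrt_nonneg (R.card : ℝ)
    have hm3 : R.card ≤ m * m := by
      have : (R.card : ℝ) ≤ m * m := by nlinarith
      exact_mod_cast this
    have hm4 : 1 ≤ m := by
      by_contra h
      have : m = 0 := by omega
      rw [this] at hm3
      nlinarith
    have hR4 : 4 ≤ R.card := by nlinarith
    obtain ⟨w, -, hsum, hsp⟩ := g.exists_weight hne (k := k) (by omega)
    obtain ⟨R1, R2, hd, hu, hn1, hn2, hc1, hc2, hcut, b1, b2⟩ := g.sep h2 R hc hm4 hm3 (fun _ => 1)
      (by simp; omega) (fun F _ => by simpa using hR4)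
    simp only [Finset.sum_const, smul_eq_mul, mul_one] at b1 b2
    have m1 := hsp R1 R2 hd hu hn2 hc2
    have m2 := hsp R2 R1 hd.symm (by rw [Finset.union_comm, hu]) hn1 hc1
    have hcut' : ((g.Y R).filter (fun y => y ∉ g.Y R2 ∧ y ∉ g.Y R1)).card ≤ 6 * m := by
      simpa only [and_comm] using hcut
    have hcard := Finset.card_union_of_disjoint hd
    rw [hu] at hcard
    have p1 := Finset.card_pos.2 hn1
    have p2 := Finset.card_pos.2 hn2
    have hws := Finset.sum_union (f := w) hd
    rw [hu, hsum] at hws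
    obtain ⟨P1, hP1, hP1c⟩ := ih R1.card (by omega) R1 rfl hc1 hn1 (by omega)
    obtain ⟨P2, hP2, hP2c⟩ := ih R2.card (by omega) R2 rfl hc2 hn2 (by omega)
    refine ⟨P1 ∪ P2, IsPart.union g hP1 hP2 hd hu, ?_⟩
    have hPc : ((P1 ∪ P2).card : ℝ) ≤ P1.card + P2.card := by
      exact_mod_cast Finset.card_union_le _ _
    refine hPc.trans ((add_le_add hP1c hP2c).trans ?_)
    have hs1 : 1 ≤ √(R.card : ℝ) / k := by
      rw [le_div_iff₀ hk0, one_mul]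
      apply Real.le_sqrt_of_sq_le
      have : (k : ℝ) * k < R.card := by exact_mod_cast hsm
      nlinarith
    have hcR : (R.card : ℝ) = R1.card + R2.card := by exact_mod_cast hcard
    apply arith1 hs1 (by positivity) (by positivity)
    · rw [hsq, hsq, hsq, hcR, add_div]
    · rw [hsq, hsq, ← mul_div_assoc]
      gcongr
      exact_mod_cast b1
    · rw [hsq, hsq, ← mul_div_assoc]
      gcongr
      exact_mod_cast b2
    · have hmm : g.mu k R1 + g.mu k R2 ≤ g.mu k R + 12 * m + 2 * k := by omega
      have hmm' : (g.mu k R1 : ℝ) + g.mu k R2 ≤ g.mu k R + 12 * m + 2 * k := by exact_mod_cast hmm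
      have hs2 : √(R.card : ℝ) / k * k = √(R.card : ℝ) := by field_simp
      rw [← add_div, div_le_iff₀ hk0, add_mul, div_mul_cancel₀ _ hk0.ne', mul_assoc, hs2]
      have : (k : ℝ) ≤ √(R.card : ℝ) := by
        rwa [le_div_iff₀ hk0, one_mul] at hs1
      linarith

theorem mu_univ (k : ℕ) : g.mu k Finset.univ = 0 := by
  have h1 : g.bd Finset.univ = ∅ := by
    ext e; simp [mem_bd]
  have h2 : g.hmin Finset.univ ≤ (∅ : Finset Φ).card := g.hmin_le ⟨by simp, by simp⟩
  simp only [Finset.card_empty, nonpos_iff_eq_zero] at h2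
  simp [mu, h1, h2]

theorem conn_univ : g.Conn Finset.univ := by
  intro F _ F' _
  refine (g.all F F').mono ?_
  intro e _
  simp [mem_Y]

theorem main_part [Nonempty Φ] {k : ℕ} (hk : 2 ≤ k) : ∃ P, g.IsPart k Finset.univ P ∧
    (P.card : ℝ) ≤ 36 * Fintype.card V / (k : ℝ) ^ 2 + 1 := by
  have hk0 : (0 : ℝ) < k := by
    have : 0 < k := by omega
    exact_mod_cast this
  by_cases hsm : Fintype.card Φ ≤ k * k
  · refine ⟨{Finset.univ}, IsPart.single g ⟨g.conn_univ, Finset.univ_nonempty, hsm, ?_⟩, ?_⟩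
    · rw [mu_univ]; omega
    · simp only [Finset.card_singleton, Nat.cast_one, le_add_iff_nonneg_left]
      positivity
  · have h2 : Two (Φ := Φ) := by
      have : 1 < Fintype.card Φ := by nlinarith
      obtain ⟨F, F', h⟩ := Fintype.one_lt_card_iff.1 this
      exact ⟨F, F', h⟩
    obtain ⟨P, hP, hPc⟩ := g.phase1 h2 hk _ Finset.univ rfl g.conn_univ Finset.univ_nonempty (by
      rw [Finset.card_univ]; omega)
    refine ⟨P, hP, hPc.trans ?_⟩
    rw [mu_univ, div_pow, Real.sq_sqrt (by positivity), Finset.card_univ]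
    obtain ⟨F, F', hne⟩ := h2
    have hc : (Fintype.card Φ : ℝ) ≤ 2 * Fintype.card V := by exact_mod_cast g.card_faces hne
    have h3 : (0 : ℝ) ≤ √(Fintype.card Φ : ℝ) / k := by positivity
    have h4 : 18 * ((Fintype.card Φ : ℝ) / (k : ℝ) ^ 2) ≤ 36 * Fintype.card V / (k : ℝ) ^ 2 := by
      rw [← mul_div_assoc]
      gcongr ?_ / _
      linarith
    simp only [Nat.cast_zero, zero_div, add_zero]
    linarith

end CG


theorem comp_eq {O : Set Pl} (hO : IsOpen O) {x : Pl} (hx : x ∈ O) :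
    connectedComponentIn O x = {y | JoinedIn O x y} := by
  apply Set.Subset.antisymm
  · have h1 : IsOpen (connectedComponentIn O x) := hO.connectedComponentIn
    have h2 : IsConnected (connectedComponentIn O x) := isConnected_connectedComponentIn_iff.2 hx
    have h3 := (h1.isConnected_iff_isPathConnected).1 h2
    intro y hy
    exact (h3.joinedIn x (mem_connectedComponentIn hx) y hy).mono (connectedComponentIn_subset _ _)
  · have h3 : IsPathConnected (pathComponentIn O x) := isPathConnected_pathComponentIn hx
    exact h3.isConnected.isPreconnected.subset_connectedComponentIn (JoinedIn.refl hx)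
      pathComponentIn_subset

namespace PG

variable {V E : Type} [Finite V] [Finite E] {g : PG V E}

theorem hole_cover {C : Set g.Face} {Q : Finset g.Face}
    (hQ : ∀ F, F ∉ C → ∃ q ∈ Q, g.DC {e | l e ∉ C ∧ r e ∉ C} F q) {Z : Set Pl} {x : Pl}
    (hx : x ∉ g.D {e | l (g := g) e ∈ C}) (hZ : Z = {y | JoinedIn (g.D {e | l (g := g) e ∈ C})ᶜ x y})
    (hn : ¬ ∃ x, x ∉ g.D Set.univ ∧ Z = {y | JoinedIn (g.D Set.univ)ᶜ x y}) :
    ∃ q ∈ Q, ∀ y ∈ q.1, y ∈ Z := by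
  set A : Set E := {e | l (g := g) e ∈ C} with hA
  have hZo : IsOpen Z := by rw [hZ]; exact isOpen_joined (g.isOpen_compl_D A) x
  have hxZ : x ∈ Z := by rw [hZ]; exact JoinedIn.refl hx
  obtain ⟨F, p, hpF, hpZ⟩ := exists_face_near (g := g) hZo ⟨x, hxZ⟩
  have key : ∀ q, SC A F q → ∀ y ∈ q.1, y ∈ Z := by
    intro q h y hy
    have := h.all hpF hy
    rw [hZ] at hpZ ⊢
    exact JoinedIn.trans hpZ this
  have sub : {e | l (g := g) e ∉ C ∧ r (g := g) e ∉ C} ⊆ Aᶜ := fun e he => he.1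
  by_cases hF : F ∈ C
  swap
  · obtain ⟨q, hq, h⟩ := hQ F hF
    exact ⟨q, hq, key q (SC_iff.2 (Cn.mono sub h))⟩
  by_cases he : ∃ e, e ∉ A ∧ r (g := g) e = F
  · obtain ⟨e, heA, heF⟩ := he
    obtain ⟨q, hq, h⟩ := hQ (l e) heA
    refine ⟨q, hq, key q (SC_iff.2 (Cn.trans ?_ (Cn.mono sub h)))⟩
    rw [← heF]
    exact Cn.symm (Cn.edge (A := Aᶜ) (e := e) heA)
  exfalso
  push Not at he
  have only : ∀ F', SC A F F' → F' = F := by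
    intro F' h
    have h' := SC_iff.1 h
    have := Cn.inv (P := fun X => X = F) (s := l (g := g)) (t := r (g := g)) (A := Aᶜ) (by
      intro e heA
      constructor
      · intro hl; exact absurd (show l e ∈ C by rw [hl]; exact hF) heA
      · intro hr; exact absurd hr (he e heA)) h'
    exact this.1 rfl
  have havoid : ∀ z ∈ Z, z ∉ g.D Set.univ := by
    intro z hz hzD
    obtain ⟨e, -, hze⟩ := g.mem_D.1 hzD
    have heA : e ∉ A := by
      intro heA
      have : JoinedIn (g.D A)ᶜ x z := by rw [hZ] at hz; exact hz
      exact this.target_mem (g.mem_D.2 ⟨e, heA, hze⟩)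
    obtain ⟨a, ha, rfl⟩ := hze
    have hcl : a ∈ closure (Set.Ioo (0:ℝ) 1) := by
      rw [closure_Ioo (by norm_num)]; exact ha
    have hcw : ContinuousWithinAt (g.arc e) (Set.Ioo 0 1) a :=
      (g.cont e a ha).mono Set.Ioo_subset_Icc_self
    have hev : g.arc e ⁻¹' Z ∈ nhdsWithin a (Set.Ioo (0:ℝ) 1) := hcw (hZo.mem_nhds hz)
    have : (nhdsWithin a (Set.Ioo (0:ℝ) 1)).NeBot := mem_closure_iff_nhdsWithin_neBot.1 hcl
    obtain ⟨b, hb1, hb2⟩ := Filter.nonempty_of_mem (Filter.inter_mem hev self_mem_nhdsWithin)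
    have hb1 : g.arc e b ∈ Z := hb1
    have hj := arc_joined_Ioo (g := g) heA hb2 half_mem
    obtain ⟨w, hw, hjw⟩ := l_InW (g := g) e
    have hsubD : (g.D {e}ᶜ)ᶜ ⊆ (g.D A)ᶜ := Set.compl_subset_compl.2 (g.D_mono (by
      intro f hf hfe
      rw [Set.mem_singleton_iff] at hfe
      exact heA (hfe ▸ hf)))
    have hsc : SC A F (l e) := by
      refine ⟨p, hpF, w, hw, ?_⟩
      have h1 : JoinedIn (g.D A)ᶜ x p := by rw [hZ] at hpZ; exact hpZ
      have h2 : JoinedIn (g.D A)ᶜ x (g.arc e b) := by rw [hZ] at hb1; exact hb1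
      exact (h1.symm.trans h2).trans (hj.trans (hjw.mono hsubD))
    have := only _ hsc
    exact heA (by rw [hA]; show l e ∈ C; rw [this]; exact hF)
  apply hn
  refine ⟨x, havoid x hxZ, ?_⟩
  ext y
  constructor
  · intro hy
    have hpc : IsPathConnected Z := by
      rw [hZ]; exact isPathConnected_pathComponentIn hx
    exact (hpc.joinedIn x hxZ y hy).mono havoid
  · intro hy
    rw [hZ]
    exact JoinedIn.mono hy (Set.compl_subset_compl.2 (g.D_mono (Set.subset_univ _)))

theorem hole_card {C : Set g.Face} {Q : Finset g.Face}
    (hQ : ∀ F, F ∉ C → ∃ q ∈ Q, g.DC {e | l e ∉ C ∧ r e ∉ C} F q) :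
    ({Z : Set Pl | (∃ x, x ∉ g.D {e | l (g := g) e ∈ C} ∧
        Z = {y | JoinedIn (g.D {e | l (g := g) e ∈ C})ᶜ x y}) ∧
      ¬ ∃ x, x ∉ g.D Set.univ ∧ Z = {y | JoinedIn (g.D Set.univ)ᶜ x y}}).ncard ≤ Q.card := by
  classical
  have hsub : {Z : Set Pl | (∃ x, x ∉ g.D {e | l (g := g) e ∈ C} ∧
        Z = {y | JoinedIn (g.D {e | l (g := g) e ∈ C})ᶜ x y}) ∧
      ¬ ∃ x, x ∉ g.D Set.univ ∧ Z = {y | JoinedIn (g.D Set.univ)ᶜ x y}} ⊆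
      ((Q.image (fun q => {y | JoinedIn (g.D {e | l (g := g) e ∈ C})ᶜ q.nonempty.choose y}) :
        Finset (Set Pl)) : Set (Set Pl)) := by
    rintro Z ⟨⟨x, hx, hZ⟩, hn⟩
    obtain ⟨q, hq, h⟩ := hole_cover hQ hx hZ hn
    rw [Finset.coe_image]
    refine ⟨q, hq, ?_⟩
    have := h _ q.nonempty.choose_spec
    rw [hZ] at this
    have this : JoinedIn _ x _ := this
    rw [hZ]
    ext y
    exact ⟨fun hy => this.trans hy, fun hy => this.symm.trans hy⟩
  calc _ ≤ _ := Set.ncard_le_ncard hsub (Finset.finite_toSet _)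
    _ ≤ Q.card := by rw [Set.ncard_coe_finset]; exact Finset.card_image_le

noncomputable def toCG [Fintype V] [Fintype E] [Fintype g.Face]
    (hs : ∀ e e', s(g.src e, g.tgt e) = s(g.src e', g.tgt e') → e = e')
    (h3 : ∀ F : g.Face, {v | g.pos v ∈ closure F.1}.ncard ≤ 3) : CG V E g.Face where
  src := g.src
  tgt := g.tgt
  l := l
  r := r
  ne := fun e h => src_ne_tgt e (congrArg g.pos h)
  simple := hs
  vert := fun F => (Set.toFinite {v | g.pos v ∈ closure F.1}).toFinset
  vert_card := fun F => by
    rw [← Set.ncard_eq_toFinset_card]; exact h3 F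
  sl := fun e => by simpa using (incid_closure (l_InW (g := g) e)).1
  sr := fun e => by simpa using (incid_closure (r_InW (g := g) e)).1
  tl := fun e => by simpa using (incid_closure (l_InW (g := g) e)).2
  tr := fun e => by simpa using (incid_closure (r_InW (g := g) e)).2
  I1 := fun A t ht h => I1 ht h
  I2 := fun A t ht h => I2 ht h
  all := DC_univ

theorem partition [Fintype V]
    (hs : ∀ e e', s(g.src e, g.tgt e) = s(g.src e', g.tgt e') → e = e')
    (h3 : ∀ F : g.Face, {v | g.pos v ∈ closure F.1}.ncard ≤ 3) {k : ℕ} (hk : 2 ≤ k) :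
    ∃ P : Finset (Finset g.Face), (P.card : ℝ) ≤ 36 * Fintype.card V / (k : ℝ) ^ 2 + 1 ∧
      (∀ F, ∃! C, C ∈ P ∧ F ∈ C) ∧ ∀ C ∈ P,
        (∃ T : Finset V, T.card ≤ 3 * (k * k) ∧ ∀ e, l e ∈ C → g.src e ∈ T ∧ g.tgt e ∈ T) ∧
        (∃ T : Finset V, T.card ≤ 200 * k ∧ ∀ v, ∀ e ∈ g.star v, ∀ e' ∈ g.star v,
          l e ∈ C → l e' ∉ C → v ∈ T) ∧
        ({Z : Set Pl | (∃ x, x ∉ g.D {e | l (g := g) e ∈ C} ∧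
            Z = {y | JoinedIn (g.D {e | l (g := g) e ∈ C})ᶜ x y}) ∧
          ¬ ∃ x, x ∉ g.D Set.univ ∧ Z = {y | JoinedIn (g.D Set.univ)ᶜ x y}}).ncard ≤ 100 := by
  classical
  have := finite_face g
  letI : Fintype g.Face := Fintype.ofFinite _
  letI : Fintype E := Fintype.ofFinite _
  have := face_exists g
  set c := toCG hs h3 with hc
  obtain ⟨P, hP, hcard⟩ := c.main_part hk
  refine ⟨P, hcard, fun F => hP.uniq F (Finset.mem_univ _), fun C hC => ?_⟩
  have hg := hP.good C hC
  have hmu := hg.mu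
  unfold CG.mu at hmu
  refine ⟨⟨C.biUnion c.vert, ?_, ?_⟩, ⟨(c.bd C).image g.src ∪ (c.bd C).image g.tgt, ?_, ?_⟩, ?_⟩
  · calc _ ≤ C.card * 3 := Finset.card_biUnion_le_card_mul _ _ _ (fun F _ => c.vert_card F)
      _ ≤ 3 * (k * k) := by have := hg.card; omega
  · intro e he
    exact ⟨Finset.mem_biUnion.2 ⟨_, he, c.sl e⟩, Finset.mem_biUnion.2 ⟨_, he, c.tl e⟩⟩
  · have h1 := Finset.card_union_le ((c.bd C).image g.src) ((c.bd C).image g.tgt)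
    have h2 : ((c.bd C).image g.src).card ≤ _ := Finset.card_image_le
    have h3 : ((c.bd C).image g.tgt).card ≤ _ := Finset.card_image_le
    have : (c.bd C).card ≤ 100 * k := le_trans (Nat.le_add_right _ _) hmu
    omega
  · intro v e he e' he' h h'
    have hf : ∃ f ∈ g.star v, f ∈ c.bd C := by
      by_contra hno
      push Not at hno
      have hI := I5 v he he'
      have := Cn.inv (P := fun X => X ∈ C) (s := l (g := g)) (t := r (g := g)) (A := g.star v) (by
        intro f hf
        by_contra hcon
        exact hno f hf (c.mem_bd.2 hcon)) hI
      exact h' (this.1 h)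
    obtain ⟨f, hfv, hfb⟩ := hf
    rw [Finset.mem_union]
    rcases hfv with hv | hv
    · exact Or.inl (Finset.mem_image.2 ⟨f, hfb, hv⟩)
    · exact Or.inr (Finset.mem_image.2 ⟨f, hfb, hv⟩)
  · obtain ⟨Q, hQ, hQc⟩ := c.exists_hmin C
    have hle : c.hmin C ≤ 100 := by
      have : k * c.hmin C ≤ k * 100 := by
        have := le_trans (Nat.le_add_left _ _) hmu
        omega
      exact Nat.le_of_mul_le_mul_left this (by omega)
    refine le_trans (hole_card (g := g) (C := {F | F ∈ C}) (Q := Q) ?_) (by omega)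
    intro F hF
    obtain ⟨q, hq, h⟩ := hQ.2 F hF
    refine ⟨q, hq, Cn.mono ?_ h⟩
    intro e he
    have := c.mem_Y.1 (Finset.mem_coe.1 he)
    exact ⟨Finset.mem_compl.1 this.1, Finset.mem_compl.1 this.2⟩

end PG


section final

variable {n : ℕ} {G : WDigraph (Fin n)} (emb : PlaneEmbedding G.Edge)

abbrev UE (G : WDigraph (Fin n)) : Type := {e : Fin n × Fin n // e.1 < e.2 ∧ G.Edge e.1 e.2}

def toPG : PG (Fin n) (UE G) where
  pos := emb.pos
  src := fun e => e.1.1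
  tgt := fun e => e.1.2
  arc := fun e => emb.arc e.1.1 e.1.2
  pos_inj := emb.pos_inj
  cont := fun e => emb.arc_cont _ _ e.2.2
  inj := fun e => emb.arc_inj _ _ e.2.2
  start := fun e => emb.arc_start _ _ e.2.2
  fin := fun e => emb.arc_end _ _ e.2.2
  avoid := fun e x h => emb.arc_avoid _ _ e.2.2 x h
  meet := by
    intro e e' hne z hz hz'
    have hs : ({e.1.1, e.1.2} : Set (Fin n)) ≠ {e'.1.1, e'.1.2} := by
      intro h
      apply hne
      rcases Set.pair_eq_pair_iff.1 h with ⟨h1, h2⟩ | ⟨h1, h2⟩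
      · exact Subtype.ext (Prod.ext h1 h2)
      · have a := e.2.1
        have b := e'.2.1
        rw [h1, h2] at a
        exact absurd a (lt_asymm b)
    obtain ⟨h1, h2⟩ := emb.arc_meet _ _ _ _ e.2.2 e'.2.2 hs ⟨hz, hz'⟩
    rcases h1 with h1 | h1 <;> rcases h2 with h2 | h2
    · exact ⟨_, h1, Or.inl rfl, Or.inl (emb.pos_inj (h1.symm.trans h2))⟩
    · exact ⟨_, h1, Or.inl rfl, Or.inr (emb.pos_inj (h1.symm.trans h2))⟩
    · exact ⟨_, h1, Or.inr rfl, Or.inl (emb.pos_inj (h1.symm.trans h2))⟩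
    · exact ⟨_, h1, Or.inr rfl, Or.inr (emb.pos_inj (h1.symm.trans h2))⟩

theorem arc_img_symm {u v : Fin n} (h : G.Edge u v) :
    emb.arc v u '' Set.Icc 0 1 = emb.arc u v '' Set.Icc 0 1 := by
  ext z
  constructor
  · rintro ⟨t, ht, rfl⟩
    exact ⟨1 - t, ⟨by linarith [ht.2], by linarith [ht.1]⟩, (emb.arc_symm u v h t).symm⟩
  · rintro ⟨t, ht, rfl⟩
    exact ⟨1 - t, ⟨by linarith [ht.2], by linarith [ht.1]⟩, by rw [emb.arc_symm u v h]; simp⟩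

def Jn (e : UE G) (p : Fin n × Fin n) : Prop := p = e.1 ∨ p = (e.1.2, e.1.1)

theorem Jn.edge (hb : G.Bidirected) {e : UE G} {p : Fin n × Fin n} (h : Jn e p) : G.Edge p.1 p.2 := by
  rcases h with rfl | rfl
  · exact e.2.2
  · exact hb _ _ e.2.2

theorem Jn.swap {e : UE G} {p : Fin n × Fin n} (h : Jn e p) : Jn e (p.2, p.1) := by
  rcases h with rfl | rfl
  · exact Or.inr rfl
  · exact Or.inl rfl

theorem Jn.uniq {e e' : UE G} {p : Fin n × Fin n} (h : Jn e p) (h' : Jn e' p) : e = e' := by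
  apply Subtype.ext
  rcases h with h | h <;> rcases h' with h' | h'
  · exact h.symm.trans h'
  · exfalso
    have a := e.2.1
    have b := e'.2.1
    rw [← h, h'] at a
    exact lt_asymm a b
  · exfalso
    have a := e.2.1
    have b := e'.2.1
    rw [← h', h] at b
    exact lt_asymm a b
  · have := h.symm.trans h'
    have h1 := congrArg Prod.fst this
    have h2 := congrArg Prod.snd this
    exact Prod.ext h2 h1

theorem exists_Jn (hb : G.Bidirected) {p : Fin n × Fin n} (h : G.Edge p.1 p.2) : ∃ e : UE G, Jn e p := by
  rcases lt_trichotomy p.1 p.2 with h1 | h1 | h1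
  · exact ⟨⟨p, h1, h⟩, Or.inl rfl⟩
  · rw [h1] at h
    exact absurd h (G.irrefl _)
  · exact ⟨⟨(p.2, p.1), h1, hb _ _ h⟩, Or.inr rfl⟩

theorem Jn.img {e : UE G} {p : Fin n × Fin n} (h : Jn e p) :
    emb.arc p.1 p.2 '' Set.Icc 0 1 = (toPG emb).img e := by
  rcases h with rfl | rfl
  · rfl
  · exact arc_img_symm emb e.2.2

theorem drawing_eq (A : Set (UE G)) {S : Set (Fin n × Fin n)} (hS : ∀ p, p ∈ S ↔ ∃ e ∈ A, Jn e p) :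
    emb.drawing S = (toPG emb).D A := by
  ext z
  rw [PG.mem_D]
  simp only [PlaneEmbedding.drawing, Set.mem_iUnion]
  constructor
  · rintro ⟨p, hp, hz⟩
    obtain ⟨e, he, hj⟩ := (hS p).1 hp
    exact ⟨e, he, by rw [← hj.img emb]; exact hz⟩
  · rintro ⟨e, he, hz⟩
    exact ⟨e.1, (hS _).2 ⟨e, he, Or.inl rfl⟩, hz⟩

theorem faces_eq (A : Set (UE G)) {S : Set (Fin n × Fin n)} (hS : ∀ p, p ∈ S ↔ ∃ e ∈ A, Jn e p) :
    facesOfEdges emb S = {Z | ∃ x, x ∉ (toPG emb).D A ∧ Z = {y | JoinedIn ((toPG emb).D A)ᶜ x y}} := by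
  unfold facesOfEdges
  rw [drawing_eq emb A hS]
  ext Z
  constructor
  · rintro ⟨x, hx, rfl⟩
    exact ⟨x, hx, comp_eq ((toPG emb).isOpen_compl_D A) hx⟩
  · rintro ⟨x, hx, rfl⟩
    exact ⟨x, hx, (comp_eq ((toPG emb).isOpen_compl_D A) hx).symm⟩

theorem mem_nodes {p : Finset (Fin n × Fin n)} {A : Set (UE G)} (hp : ∀ x, x ∈ p ↔ ∃ e ∈ A, Jn e x)
    {v : Fin n} (hv : v ∈ nodesOf p) : ∃ e ∈ A, e ∈ (toPG emb).star v := by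
  unfold nodesOf at hv
  rw [Finset.mem_union, Finset.mem_image, Finset.mem_image] at hv
  rcases hv with ⟨x, hx, rfl⟩ | ⟨x, hx, rfl⟩ <;> obtain ⟨e, he, hj⟩ := (hp x).1 hx <;>
    refine ⟨e, he, ?_⟩ <;> rcases hj with rfl | rfl
  · exact Or.inl rfl
  · exact Or.inr rfl
  · exact Or.inr rfl
  · exact Or.inl rfl

theorem final_aux {r : ℝ} (hr : 1 ≤ r) (hb : G.Bidirected)
    (h3 : ∀ F, emb.IsFace F → {v : Fin n | emb.pos v ∈ closure F}.ncard ≤ 3) :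
      ∃ P : Finset (Finset (Fin n × Fin n)),
        (∀ p ∈ P, ∀ e ∈ p, G.Edge e.1 e.2) ∧
        (∀ p ∈ P, ∀ e : Fin n × Fin n, e ∈ p → (e.2, e.1) ∈ p) ∧
        (∀ e : Fin n × Fin n, G.Edge e.1 e.2 → ∃! p, p ∈ P ∧ e ∈ p) ∧
        ((P.card : ℝ) ≤ (600 : ℕ) * ((n : ℝ) / r + 1)) ∧
        (∀ p ∈ P,
          ((nodesOf p).card : ℝ) ≤ (600 : ℕ) * r ∧
          ((boundaryOf P p).card : ℝ) ≤ (600 : ℕ) * Real.sqrt r ∧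
          (holesOf emb p).ncard ≤ 600) := by
  classical
  have hall : ∀ p, p ∈ {e : Fin n × Fin n | G.Edge e.1 e.2} ↔ ∃ e ∈ (Set.univ : Set (UE G)), Jn e p := by
    intro p
    constructor
    · intro h
      obtain ⟨e, he⟩ := exists_Jn hb h
      exact ⟨e, trivial, he⟩
    · rintro ⟨e, -, he⟩
      exact he.edge hb
  have hs1 : 1 ≤ Real.sqrt r := by rw [Real.one_le_sqrt]; exact hr
  have hsq : Real.sqrt r * Real.sqrt r = r := Real.mul_self_sqrt (by linarith)
  obtain ⟨k, hk2, hkl, hku⟩ : ∃ k : ℕ, 2 ≤ k ∧ Real.sqrt r ≤ k ∧ (k : ℝ) ≤ 3 * Real.sqrt r := by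
    refine ⟨⌈Real.sqrt r⌉₊ + 1, ?_, ?_, ?_⟩
    · have : 0 < ⌈Real.sqrt r⌉₊ := Nat.ceil_pos.2 (by linarith)
      omega
    · push_cast
      linarith [Nat.le_ceil (Real.sqrt r)]
    · push_cast
      linarith [Nat.ceil_lt_add_one (show 0 ≤ Real.sqrt r by linarith)]
  set g := toPG emb with hg
  have hface : ∀ F : g.Face, emb.IsFace F.1 := by
    rintro ⟨F, hF⟩
    have := faces_eq emb Set.univ hall
    have h' : F ∈ facesOfEdges emb {e | G.Edge e.1 e.2} := by rw [this]; exact hF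
    exact h'
  have hsimple : ∀ e e' : UE G, s(g.src e, g.tgt e) = s(g.src e', g.tgt e') → e = e' := by
    intro e e' h
    rcases Sym2.eq_iff.1 h with ⟨h1, h2⟩ | ⟨h1, h2⟩
    · exact Jn.uniq (Or.inl rfl) (Or.inl (Prod.ext h1 h2))
    · exact Jn.uniq (Or.inl rfl) (Or.inr (Prod.ext h1 h2))
  obtain ⟨R, hRc, hRu, hR⟩ := PG.partition (g := g) hsimple (fun F => h3 _ (hface F)) hk2
  let pc : Finset g.Face → Finset (Fin n × Fin n) := fun C =>
    Finset.univ.filter (fun p => ∃ e ∈ {e : UE G | PG.l (g := g) e ∈ C}, Jn e p)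
  have hpc : ∀ C x, x ∈ pc C ↔ ∃ e ∈ {e : UE G | PG.l (g := g) e ∈ C}, Jn e x := by
    intro C x; simp only [pc, Finset.mem_filter, Finset.mem_univ, true_and]
  refine ⟨R.image pc, ?_, ?_, ?_, ?_, ?_⟩
  · intro p hp x hx
    obtain ⟨C, hC, rfl⟩ := Finset.mem_image.1 hp
    obtain ⟨e, -, he⟩ := (hpc C x).1 hx
    exact he.edge hb
  · intro p hp x hx
    obtain ⟨C, hC, rfl⟩ := Finset.mem_image.1 hp
    obtain ⟨e, heC, he⟩ := (hpc C x).1 hx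
    exact (hpc C _).2 ⟨e, heC, he.swap⟩
  · intro x hx
    obtain ⟨e, he⟩ := exists_Jn hb hx
    obtain ⟨C, ⟨hC, hlC⟩, hu⟩ := hRu (PG.l (g := g) e)
    refine ⟨pc C, ⟨Finset.mem_image_of_mem _ hC, (hpc C x).2 ⟨e, hlC, he⟩⟩, ?_⟩
    rintro p ⟨hp, hxp⟩
    obtain ⟨C', hC', rfl⟩ := Finset.mem_image.1 hp
    obtain ⟨e', heC', he'⟩ := (hpc C' x).1 hxp
    have : e' = e := he'.uniq he
    subst this
    rw [hu C' ⟨hC', heC'⟩]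
  · have h1 : ((R.image pc).card : ℝ) ≤ R.card := by exact_mod_cast Finset.card_image_le
    rw [Fintype.card_fin] at hRc
    have h2 : 36 * (n : ℝ) / (k : ℝ) ^ 2 ≤ 36 * n / r := by
      apply div_le_div_of_nonneg_left (by positivity) (by linarith)
      nlinarith
    have h4 : (0:ℝ) ≤ n / r := by positivity
    have h5 : 36 * (n : ℝ) / r = 36 * (n / r) := by ring
    push_cast
    linarith
  · intro p hp
    obtain ⟨C, hC, rfl⟩ := Finset.mem_image.1 hp
    obtain ⟨⟨T, hT, hT'⟩, ⟨B, hB, hB'⟩, hH⟩ := hR C hC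
    refine ⟨?_, ?_, ?_⟩
    · have hsub : nodesOf (pc C) ⊆ T := by
        intro v hv
        obtain ⟨e, heC, he⟩ := mem_nodes emb (hpc C) hv
        rcases he with rfl | rfl
        · exact (hT' e heC).1
        · exact (hT' e heC).2
      have h1 := (Finset.card_le_card hsub).trans hT
      have h2 : ((nodesOf (pc C)).card : ℝ) ≤ 3 * (k * k) := by exact_mod_cast h1
      push_cast
      nlinarith
    · have hsub : boundaryOf (R.image pc) (pc C) ⊆ B := by
        intro v hv
        unfold boundaryOf at hv
        obtain ⟨hv, q, hq, hne, hvq⟩ := Finset.mem_filter.1 hv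
        obtain ⟨C', hC', rfl⟩ := Finset.mem_image.1 hq
        obtain ⟨e, heC, he⟩ := mem_nodes emb (hpc C) hv
        obtain ⟨e', heC', he'⟩ := mem_nodes emb (hpc C') hvq
        refine hB' v e he e' he' heC (fun h => hne ?_)
        rw [(hRu _).unique ⟨hC', heC'⟩ ⟨hC, h⟩]
      have h1 := (Finset.card_le_card hsub).trans hB
      have h2 : ((boundaryOf (R.image pc) (pc C)).card : ℝ) ≤ 200 * k := by exact_mod_cast h1
      push_cast
      linarith
    · refine le_trans (le_of_eq ?_) (hH.trans (by norm_num))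
      congr 1
      unfold holesOf
      rw [faces_eq emb Set.univ hall, faces_eq emb {e : UE G | PG.l (g := g) e ∈ C}
        (fun x => by rw [Finset.mem_coe]; exact hpc C x)]
      rfl

end final

/-- There exists a universal constant `c` such that for
every real `r ≥ 1` and every `n`-node simple bidirected plane graph `G` in
which every face contains at most three nodes, `G` admits a division into at
most `c·(n/r + 1)` pieces (an edge-disjoint partition of `G` into bidirected
plane subgraphs) such that each piece has at most `c·r` nodes, at most
`c·√r` boundary nodes, and at most `c` holes. -/
theorem stmt14 :
    ∃ c : ℕ, 0 < c ∧
      ∀ (r : ℝ), 1 ≤ r →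
      ∀ (n : ℕ) (G : WDigraph (Fin n)), G.Bidirected →
      ∀ emb : PlaneEmbedding G.Edge,
      (∀ F, emb.IsFace F → {v : Fin n | emb.pos v ∈ closure F}.ncard ≤ 3) →
      ∃ P : Finset (Finset (Fin n × Fin n)),
        (∀ p ∈ P, ∀ e ∈ p, G.Edge e.1 e.2) ∧
        (∀ p ∈ P, ∀ e : Fin n × Fin n, e ∈ p → (e.2, e.1) ∈ p) ∧
        (∀ e : Fin n × Fin n, G.Edge e.1 e.2 → ∃! p, p ∈ P ∧ e ∈ p) ∧
        ((P.card : ℝ) ≤ c * ((n : ℝ) / r + 1)) ∧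
        (∀ p ∈ P,
          ((nodesOf p).card : ℝ) ≤ c * r ∧
          ((boundaryOf P p).card : ℝ) ≤ c * Real.sqrt r ∧
          (holesOf emb p).ncard ≤ c) := by
  refine ⟨600, by norm_num, fun r hr n G hb emb h3 => ?_⟩
  exact final_aux emb hr hb h3
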